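/- arXiv:2404.09295 — 2 statements merged into one kernel-verified Lean document; each statement's English description precedes it below -/
import Mathlib

section
/- Let p be a prime, let χ be a non-trivial multiplicative character modulo p, let 𝒜 ⊆ 𝔽_p be a set of cardinality A, let r be a positive integer, and let (γ_a)_{a ∈ 𝒜} be complex numbers with |γ_a| ≤ 1 for all a ∈ 𝒜. Then ∑_{x ∈ 𝔽_p} |∑_{a ∈ 𝒜} γ_a · χ(x + a)|^{2r} ≤ (2r)^r · (A^r·p + A^{2r}·p^{1/2}). -/
/- Expanding the moment gives a sum over `2r`-tuples of elements of `𝒜`. A tuple in which every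
value repeats is bounded trivially, and there are at most `(2r) ^ r A ^ r` of them. In any other
tuple some shift `a` occurs once, with exponent `1` or `d - 1` where `d` is the order of `χ`;
this is coprime to `d`, so Weil's bound for `∑ x, ∏ s, χ (x + s) ^ e s` applies.

For Weil's bound, Stepanov's method over each extension of degree `n` shows that the `n`-th
coefficient of the logarithmic derivative `T L' / L` is `O(q ^ (n / 2))`. Hence `T L' / L` is
analytic in `|T| < q ^ (-1 / 2)`, and the polynomial `L` has no zero there; its linear
coefficient, which is the character sum, is a sum of at most `deg L` inverse roots. In Stepanov's
method the auxiliary polynomial is shown to be nonzero by comparing the multiplicities of its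
terms at the root whose multiplicity is coprime to `d`. -/

open Finset

namespace WeilBound

section RepeatingTuples

variable {ι α : Type*}

/-- A tuple is repeating if each of its values is taken at two or more indices. -/
def IsRepeating (t : ι → α) : Prop := ∀ i, ∃ j, j ≠ i ∧ t j = t i

open Classical in
/-- The set of repeating tuples indexed by `ι` with entries in `α`. -/
noncomputable def repeatingTuples (ι α : Type*) [Fintype ι] [Fintype α] : Finset (ι → α) :=
  univ.filter IsRepeating

lemma mem_repeatingTuples [Fintype ι] [Fintype α] {t : ι → α} :
    t ∈ repeatingTuples ι α ↔ IsRepeating t := by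
  simp [repeatingTuples]

lemma IsRepeating.two_mul_card_image_le [Fintype ι] [DecidableEq α] {t : ι → α}
    (ht : IsRepeating t) : 2 * #(univ.image t) ≤ Fintype.card ι := by
  have two_le_fiber : ∀ b ∈ univ.image t, 2 ≤ #{i | t i = b} := by
    simp only [mem_image, mem_univ, true_and, forall_exists_index, forall_apply_eq_imp_iff]
    intro i
    obtain ⟨j, hji, hj⟩ := ht i
    exact one_lt_card.2 ⟨j, by simpa using hj, i, by simp, hji⟩
  calc 2 * #(univ.image t) = #(univ.image t) • 2 := by rw [smul_eq_mul, mul_comm]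
    _ ≤ ∑ b ∈ univ.image t, #{i | t i = b} := card_nsmul_le_sum _ _ _ two_le_fiber
    _ = Fintype.card ι := (card_eq_sum_card_image t univ).symm

lemma card_repeatingTuples_congr {κ : Type*} [Fintype ι] [Fintype κ] [Fintype α] (e : ι ≃ κ) :
    #(repeatingTuples ι α) = #(repeatingTuples κ α) := by
  refine card_equiv (e.arrowCongr (.refl α)) fun t => ?_
  simp only [mem_repeatingTuples, IsRepeating, e.symm.surjective.forall, e.symm.surjective.exists,
    ne_eq, EmbeddingLike.apply_eq_iff_eq, Equiv.arrowCongr_apply, Equiv.coe_refl,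
    Function.comp_apply, id_eq]

lemma card_repeatingTuples_le [Fintype ι] [Fintype α] :
    #(repeatingTuples ι α) ≤ Fintype.card α ^ Fintype.card ι := by
  classical
  simpa using card_le_univ (repeatingTuples ι α)

lemma IsRepeating.exists_insertNth_of_not_tail {n : ℕ} {t : Fin (n + 2) → α} (ht : IsRepeating t)
    (htail : ¬ IsRepeating (Fin.tail t)) :
    ∃ (i : Fin (n + 1)) (a : α) (u : Fin n → α), IsRepeating u ∧
      t = Fin.cons a (Fin.insertNth (α := fun _ => α) i a u) := by
  obtain ⟨i, hi⟩ : ∃ i : Fin (n + 1), ∀ j, j ≠ i → t j.succ ≠ t i.succ := by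
    simpa [IsRepeating, Fin.tail] using htail
  have head_eq : t 0 = t i.succ := by
    obtain ⟨j, hj, hji⟩ := ht i.succ
    rcases Fin.eq_zero_or_eq_succ j with rfl | ⟨k, rfl⟩
    · exact hji
    · exact absurd hji (hi k (by rintro rfl; exact hj rfl))
  refine ⟨i, t 0, i.removeNth (Fin.tail t), fun a => ?_, ?_⟩
  · have value_ne : t (i.succAbove a).succ ≠ t i.succ := hi _ (Fin.succAbove_ne i a)
    obtain ⟨j, hj, hja⟩ := ht (i.succAbove a).succ
    rcases Fin.eq_zero_or_eq_succ j with rfl | ⟨k, rfl⟩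
    · exact absurd (hja.symm.trans head_eq) value_ne
    · have hki : k ≠ i := by rintro rfl; exact value_ne hja.symm
      obtain ⟨b, rfl⟩ := Fin.exists_succAbove_eq hki
      exact ⟨b, by rintro rfl; exact hj rfl, hja⟩
  · conv_rhs => rw [head_eq]
    rw [show t i.succ = Fin.tail t i from rfl, Fin.insertNth_self_removeNth]
    rw [show Fin.tail t i = t 0 from head_eq.symm, Fin.cons_self_tail]

variable [Fintype α] {n : ℕ}

lemma card_repeatingTuples_zero : #(repeatingTuples (Fin 0) α) = 1 := by
  rw [card_eq_one]
  refine ⟨Fin.elim0, ?_⟩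
  ext t
  simp [mem_repeatingTuples, IsRepeating, Subsingleton.elim t Fin.elim0]

lemma card_repeatingTuples_one : #(repeatingTuples (Fin 1) α) = 0 := by
  rw [card_eq_zero, eq_empty_iff_forall_notMem]
  intro t ht
  obtain ⟨j, hj, -⟩ := mem_repeatingTuples.1 ht 0
  exact hj (Subsingleton.elim _ _)

open Classical in
lemma two_mul_card_repeating_tail_le :
    2 * #{t ∈ repeatingTuples (Fin (n + 2)) α | IsRepeating (Fin.tail t)}
      ≤ (n + 1) * #(repeatingTuples (Fin (n + 1)) α) := by
  have card_le : #{t ∈ repeatingTuples (Fin (n + 2)) α | IsRepeating (Fin.tail t)}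
      ≤ #((repeatingTuples (Fin (n + 1)) α).sigma fun u => univ.image u) := by
    refine card_le_card_of_injOn (fun t => ⟨Fin.tail t, t 0⟩) ?_ ?_
    · simp only [Set.MapsTo, mem_coe, mem_filter, mem_sigma, mem_repeatingTuples, mem_image,
        mem_univ, true_and]
      rintro t ⟨ht, htail⟩
      obtain ⟨j, hj, hj0⟩ := ht 0
      obtain ⟨k, rfl⟩ := Fin.exists_succ_eq.2 hj
      exact ⟨htail, k, hj0⟩
    · intro t _ u _ htu
      rw [← Fin.cons_self_tail t, ← Fin.cons_self_tail u]
      grind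
  calc 2 * #{t ∈ repeatingTuples (Fin (n + 2)) α | IsRepeating (Fin.tail t)}
      ≤ 2 * ∑ u ∈ repeatingTuples (Fin (n + 1)) α, #(univ.image u) := by
        rw [← card_sigma]; gcongr
    _ = ∑ u ∈ repeatingTuples (Fin (n + 1)) α, 2 * #(univ.image u) := mul_sum _ _ _
    _ ≤ #(repeatingTuples (Fin (n + 1)) α) • (n + 1) := by
        refine sum_le_card_nsmul _ _ _ fun u hu => ?_
        simpa using (mem_repeatingTuples.1 hu).two_mul_card_image_le
    _ = (n + 1) * #(repeatingTuples (Fin (n + 1)) α) := mul_comm _ _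

open Classical in
lemma card_not_repeating_tail_le :
    #{t ∈ repeatingTuples (Fin (n + 2)) α | ¬ IsRepeating (Fin.tail t)}
      ≤ (n + 1) * Fintype.card α * #(repeatingTuples (Fin n) α) := by
  let insertPair : (Fin (n + 1) × α) × (Fin n → α) → Fin (n + 2) → α :=
    fun x => Fin.cons x.1.2 (Fin.insertNth (α := fun _ => α) x.1.1 x.1.2 x.2)
  calc #{t ∈ repeatingTuples (Fin (n + 2)) α | ¬ IsRepeating (Fin.tail t)}
      ≤ #(((univ : Finset (Fin (n + 1) × α)) ×ˢ repeatingTuples (Fin n) α).image insertPair) := by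
        refine card_le_card fun t ht => ?_
        simp only [mem_filter, mem_repeatingTuples] at ht
        obtain ⟨i, a, u, hu, rfl⟩ := ht.1.exists_insertNth_of_not_tail ht.2
        exact mem_image.2 ⟨((i, a), u), by simpa [mem_repeatingTuples] using hu, rfl⟩
    _ ≤ #((univ : Finset (Fin (n + 1) × α)) ×ˢ repeatingTuples (Fin n) α) := card_image_le
    _ = (n + 1) * Fintype.card α * #(repeatingTuples (Fin n) α) := by simp

lemma two_mul_card_repeatingTuples_add_two_le :
    2 * #(repeatingTuples (Fin (n + 2)) α) ≤ (n + 1) * #(repeatingTuples (Fin (n + 1)) α)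
      + 2 * ((n + 1) * Fintype.card α * #(repeatingTuples (Fin n) α)) := by
  classical
  rw [← card_filter_add_card_filter_not (s := repeatingTuples (Fin (n + 2)) α)
    (fun t => IsRepeating (Fin.tail t))]
  linarith [two_mul_card_repeating_tail_le (α := α) (n := n),
    card_not_repeating_tail_le (α := α) (n := n)]

lemma four_mul_succ_sq_mul_pow_le (n : ℕ) :
    4 * ((n : ℝ) + 1) ^ 2 * (n : ℝ) ^ n ≤ ((n : ℝ) + 2) ^ (n + 2) := by
  have two_mul_pow_le (m : ℕ) (hm : m ≠ 0) : 2 * (m : ℝ) ^ m ≤ ((m : ℝ) + 1) ^ m := by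
    have hm0 : (0 : ℝ) < m := by positivity
    have bernoulli := one_add_mul_le_pow (a := (1 / m : ℝ)) (by linarith [one_div_pos.2 hm0]) m
    rw [mul_one_div_cancel hm0.ne'] at bernoulli
    calc 2 * (m : ℝ) ^ m ≤ (1 + 1 / m : ℝ) ^ m * (m : ℝ) ^ m := by gcongr; linarith
      _ = ((m : ℝ) + 1) ^ m := by rw [← mul_pow]; congr 1; field_simp
  rcases eq_or_ne n 0 with rfl | hn
  · norm_num
  have step := two_mul_pow_le (n + 1) n.succ_ne_zero
  push_cast at step
  have hn0 : (0 : ℝ) ≤ n := n.cast_nonneg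
  calc 4 * ((n : ℝ) + 1) ^ 2 * (n : ℝ) ^ n = 4 * (n + 1) ^ 2 * 1 * (n : ℝ) ^ n := by ring
    _ = 2 * (n + 1) ^ 2 * (2 * (n : ℝ) ^ n) := by ring
    _ ≤ 2 * (n + 1) ^ 2 * ((n : ℝ) + 1) ^ n := by gcongr; exact two_mul_pow_le n hn
    _ = (n + 1) * (2 * ((n : ℝ) + 1) ^ (n + 1)) := by ring
    _ ≤ (n + 2) * ((n : ℝ) + 2) ^ (n + 1) := by
        rw [add_assoc, one_add_one_eq_two] at step
        gcongr
        linarith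
    _ = ((n : ℝ) + 2) ^ (n + 2) := by ring

lemma two_mul_succ_mul_sqrt_pow_le (n : ℕ) {A : ℝ} (hA : 0 ≤ A) :
    2 * ((n + 1) * A * √(n * A) ^ n) ≤ √((n + 2) * A) ^ (n + 2) := by
  refine (pow_le_pow_iff_left₀ (by positivity) (by positivity) two_ne_zero).1 ?_
  calc (2 * ((n + 1) * A * √(n * A) ^ n)) ^ 2
      = 4 * (n + 1) ^ 2 * A ^ 2 * (√(n * A) ^ 2) ^ n := by ring
    _ = (4 * ((n : ℝ) + 1) ^ 2 * (n : ℝ) ^ n) * A ^ (n + 2) := by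
        rw [Real.sq_sqrt (by positivity)]; ring
    _ ≤ ((n : ℝ) + 2) ^ (n + 2) * A ^ (n + 2) := by
        gcongr; exact four_mul_succ_sq_mul_pow_le n
    _ = (√((n + 2) * A) ^ 2) ^ (n + 2) := by rw [Real.sq_sqrt (by positivity), mul_pow]
    _ = (√((n + 2) * A) ^ (n + 2)) ^ 2 := pow_right_comm _ _ _

lemma card_repeatingTuples_fin_le (n : ℕ) :
    (#(repeatingTuples (Fin n) α) : ℝ) ≤ √(n * Fintype.card α) ^ n := by
  induction n using Nat.twoStepInduction with
  | zero => simp [card_repeatingTuples_zero]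
  | one => simp [card_repeatingTuples_one]
  | more n ih₀ ih₁ =>
    have trivial_bound :
        (#(repeatingTuples (Fin (n + 2)) α) : ℝ) ≤ (Fintype.card α : ℝ) ^ (n + 2) := by
      exact_mod_cast (card_repeatingTuples_le (ι := Fin (n + 2)) (α := α)).trans_eq (by simp)
    have recurrence : 2 * (#(repeatingTuples (Fin (n + 2)) α) : ℝ)
        ≤ (n + 1) * #(repeatingTuples (Fin (n + 1)) α)
          + 2 * ((n + 1) * Fintype.card α * #(repeatingTuples (Fin n) α)) := by
      exact_mod_cast two_mul_card_repeatingTuples_add_two_le (α := α) (n := n)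
    have hA0 : (0 : ℝ) ≤ Fintype.card α := Nat.cast_nonneg _
    push_cast at ih₁ ⊢
    generalize (Fintype.card α : ℝ) = A at *
    rcases le_total A (n + 2) with hAn | hAn
    · refine trivial_bound.trans (pow_le_pow_left₀ hA0 (Real.le_sqrt_of_sq_le ?_) _)
      nlinarith
    · have tail_repeats :
          (n + 1) * (#(repeatingTuples (Fin (n + 1)) α) : ℝ) ≤ √((n + 2) * A) ^ (n + 2) := by
        calc (n + 1) * (#(repeatingTuples (Fin (n + 1)) α) : ℝ)
            ≤ √((n + 2) * A) * √((n + 2) * A) ^ (n + 1) := by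
              gcongr
              · exact Real.le_sqrt_of_sq_le (by nlinarith)
              · exact ih₁.trans (by gcongr; norm_num)
          _ = √((n + 2) * A) ^ (n + 2) := by ring
      have tail_not_repeats :
          2 * ((n + 1) * A * (#(repeatingTuples (Fin n) α) : ℝ)) ≤ √((n + 2) * A) ^ (n + 2) :=
        le_trans (by gcongr) (two_mul_succ_mul_sqrt_pow_le n hA0)
      linarith

lemma card_repeatingTuples_le_of_card_eq_two_mul [Fintype ι] {r : ℕ}
    (hι : Fintype.card ι = 2 * r) :
    (#(repeatingTuples ι α) : ℝ) ≤ (2 * r) ^ r * (Fintype.card α : ℝ) ^ r := by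
  rw [card_repeatingTuples_congr (Fintype.equivFinOfCardEq hι)]
  calc (#(repeatingTuples (Fin (2 * r)) α) : ℝ)
      ≤ √((2 * r : ℕ) * Fintype.card α) ^ (2 * r) := card_repeatingTuples_fin_le _
    _ = (2 * r) ^ r * (Fintype.card α : ℝ) ^ r := by
        rw [pow_mul, Real.sq_sqrt (by positivity), mul_pow]; push_cast; rfl

end RepeatingTuples

section LogarithmicDerivative

open Polynomial

lemma eval_ne_zero_of_mul_eval_derivative_eventuallyEq {L : ℂ[X]} (hL : L ≠ 0) {z : ℂ}
    (hz : z ≠ 0) {G : ℂ → ℂ} (hG : AnalyticAt ℂ G z)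
    (h : (fun w => w * L.derivative.eval w) =ᶠ[nhds z] fun w => G w * L.eval w) :
    L.eval z ≠ 0 := by
  intro hLz
  have analytic (P : ℂ[X]) : AnalyticAt ℂ (fun w => P.eval w) z :=
    AnalyticAt.aeval_polynomial analyticAt_id P
  have order_ne_top : analyticOrderAt (fun w => L.eval w) z ≠ ⊤ := by
    intro htop
    have eventually_root := analyticOrderAt_eq_top.1 htop
    exact hL (L.eq_zero_of_infinite_isRoot (infinite_of_mem_nhds z eventually_root))
  have order_deriv : analyticOrderAt (fun w => L.derivative.eval w) z + 1
      = analyticOrderAt (fun w => L.eval w) z := by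
    simpa [hLz, L.deriv, funext fun w => L.deriv (x := w)] using
      (analytic L).analyticOrderAt_deriv_add_one
  have order_le : analyticOrderAt (fun w => L.eval w) z
      ≤ analyticOrderAt (fun w => L.derivative.eval w) z := by
    calc analyticOrderAt (fun w => L.eval w) z
        ≤ analyticOrderAt G z + analyticOrderAt (fun w => L.eval w) z := le_add_self
      _ = analyticOrderAt (fun w => w * L.derivative.eval w) z := by
          rw [analyticOrderAt_congr h]; exact (analyticOrderAt_mul hG (analytic L)).symm
      _ = analyticOrderAt (fun w => w) z + analyticOrderAt (fun w => L.derivative.eval w) z :=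
          analyticOrderAt_mul analyticAt_id (analytic _)
      _ = analyticOrderAt (fun w => L.derivative.eval w) z := by
          rw [analyticOrderAt_eq_zero.2 (.inr hz), zero_add]
  rw [← order_deriv] at order_le order_ne_top
  exact order_le.not_gt (ENat.lt_add_one_iff (by rintro h; simp [h] at order_ne_top) |>.2 le_rfl)

lemma tsum_mul_eval_eq {L : ℂ[X]} {Λ : ℕ → ℂ}
    (hΛ : ∀ n, n * L.coeff n = ∑ ij ∈ antidiagonal n, Λ ij.1 * L.coeff ij.2) {z : ℂ}
    (hz : Summable fun n => ‖Λ n * z ^ n‖) :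
    (∑' n, Λ n * z ^ n) * L.eval z = z * L.derivative.eval z := by
  have hasSum_coeff (P : ℂ[X]) : HasSum (fun n => P.coeff n * z ^ n) (P.eval z) := by
    rw [eval_eq_sum_range]
    exact hasSum_sum_of_ne_finset_zero fun n hn => by
      rw [coeff_eq_zero_of_natDegree_lt (by simpa [Nat.lt_succ_iff] using hn), zero_mul]
  have summable_coeff : Summable fun n => ‖L.coeff n * z ^ n‖ := (hasSum_coeff L).summable.norm
  calc (∑' n, Λ n * z ^ n) * L.eval z
      = (∑' n, Λ n * z ^ n) * ∑' n, L.coeff n * z ^ n := by rw [(hasSum_coeff L).tsum_eq]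
    _ = ∑' n, ∑ ij ∈ antidiagonal n, Λ ij.1 * z ^ ij.1 * (L.coeff ij.2 * z ^ ij.2) :=
        tsum_mul_tsum_eq_tsum_sum_antidiagonal_of_summable_norm hz summable_coeff
    _ = ∑' n, (X * L.derivative).coeff n * z ^ n := by
        refine tsum_congr fun n => ?_
        have coeff_eq : (X * L.derivative).coeff n = n * L.coeff n := by
          cases n <;> simp [coeff_X_mul, coeff_derivative, mul_comm]
        rw [coeff_eq, hΛ, sum_mul]
        refine sum_congr rfl fun ij hij => ?_
        rw [← mem_antidiagonal.1 hij, pow_add]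
        ring
    _ = z * L.derivative.eval z := by rw [(hasSum_coeff _).tsum_eq, eval_mul, eval_X]

lemma one_le_mul_norm_of_eval_eq_zero {L : ℂ[X]} {Λ : ℕ → ℂ} {C R : ℝ} (hR : 0 ≤ R)
    (hL : L.coeff 0 ≠ 0) (hΛ : ∀ n, n * L.coeff n = ∑ ij ∈ antidiagonal n, Λ ij.1 * L.coeff ij.2)
    (hΛR : ∀ n, ‖Λ n‖ ≤ C * R ^ n) {z : ℂ} (hz : L.eval z = 0) : 1 ≤ R * ‖z‖ := by
  by_contra! hlt
  obtain ⟨ρ, hzρ, hρ⟩ := exists_between hlt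
  have hρ0 : 0 ≤ ρ := (by positivity : 0 ≤ R * ‖z‖).trans hzρ.le
  have hC : 0 ≤ C := by simpa using (norm_nonneg _).trans (hΛR 0)
  let U : Set ℂ := {w | R * ‖w‖ < ρ}
  have hU : IsOpen U := isOpen_lt (by fun_prop) continuous_const
  have term_le (n : ℕ) (w : ℂ) (hw : w ∈ U) : ‖Λ n * w ^ n‖ ≤ C * ρ ^ n := by
    calc ‖Λ n * w ^ n‖ ≤ C * R ^ n * ‖w‖ ^ n := by rw [norm_mul, norm_pow]; gcongr; exact hΛR n
      _ = C * (R * ‖w‖) ^ n := by rw [mul_assoc, mul_pow]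
      _ ≤ C * ρ ^ n := by gcongr; exact hw.le
  have summable_geometric : Summable fun n => C * ρ ^ n :=
    (summable_geometric_of_lt_one hρ0 hρ).mul_left C
  have analytic : AnalyticAt ℂ (fun w => ∑' n, Λ n * w ^ n) z :=
    (Complex.differentiableOn_tsum_of_summable_norm summable_geometric
      (fun n => by fun_prop) hU term_le).analyticAt (hU.mem_nhds hzρ)
  refine eval_ne_zero_of_mul_eval_derivative_eventuallyEq (by rintro rfl; simp at hL) ?_
    analytic ?_ hz
  · rintro rfl
    exact hL (by rw [coeff_zero_eq_eval_zero, hz])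
  · filter_upwards [hU.mem_nhds hzρ] with w hw
    exact (tsum_mul_eval_eq hΛ
      (summable_geometric.of_nonneg_of_le (fun _ => norm_nonneg _) fun n => term_le n w hw)).symm

lemma norm_coeff_one_le {L : ℂ[X]} {Λ : ℕ → ℂ} {C R : ℝ} (hR : 0 ≤ R) (hL : L.coeff 0 = 1)
    (hΛ : ∀ n, n * L.coeff n = ∑ ij ∈ antidiagonal n, Λ ij.1 * L.coeff ij.2)
    (hΛR : ∀ n, ‖Λ n‖ ≤ C * R ^ n) : ‖L.coeff 1‖ ≤ L.natDegree * R := by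
  have coeff_one_eq : L.coeff 1 = (L.roots.map fun z => 1 / (0 - z)).sum := by
    have log_deriv := (IsAlgClosed.splits L).eval_derivative_div_eval_of_ne_zero (x := 0)
      (by rw [← coeff_zero_eq_eval_zero, hL]; exact one_ne_zero)
    simpa [← coeff_zero_eq_eval_zero, coeff_derivative, hL] using log_deriv
  have norm_inv_root_le (z : ℂ) (hz : z ∈ L.roots) : ‖1 / (0 - z)‖ ≤ R := by
    have := one_le_mul_norm_of_eval_eq_zero hR (by simp [hL]) hΛ hΛR (isRoot_of_mem_roots hz)
    have hz0 : 0 < ‖z‖ := by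
      by_contra! h
      nlinarith [norm_nonneg z]
    rw [zero_sub, norm_div, norm_one, norm_neg, div_le_iff₀ hz0]
    exact this
  calc ‖L.coeff 1‖ ≤ ((L.roots.map fun z => 1 / (0 - z)).map (‖·‖)).sum := by
        rw [coeff_one_eq]; exact norm_multiset_sum_le _
    _ ≤ Multiset.card ((L.roots.map fun z => 1 / (0 - z)).map (‖·‖)) • R :=
        Multiset.sum_le_card_nsmul _ _ <| by
          simpa only [Multiset.map_map, Multiset.mem_map, forall_exists_index, and_imp,
            Function.comp_apply, forall_apply_eq_imp_iff₂] using norm_inv_root_le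
    _ ≤ L.natDegree * R := by
        rw [Multiset.card_map, Multiset.card_map, nsmul_eq_mul]
        gcongr
        exact card_roots' L

end LogarithmicDerivative

section Stepanov

open Polynomial

lemma pow_sub_dvd_hasseDeriv_pow_mul {R : Type*} [CommRing R] (f g : R[X]) {s k : ℕ}
    (hk : k ≤ s) : f ^ (s - k) ∣ hasseDeriv k (f ^ s * g) := by
  induction s generalizing k with
  | zero => simp
  | succ s ih =>
    rw [pow_succ', mul_assoc, hasseDeriv_mul]
    refine dvd_sum ?_
    rintro ⟨a, b⟩ hab
    obtain rfl : a + b = k := mem_antidiagonal.1 hab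
    rcases a with - | a
    · rw [zero_add, hasseDeriv_zero']
      rcases lt_or_ge s b with hb | hb
      · simp [show s + 1 - b = 0 by lia]
      · rw [show s + 1 - b = (s - b) + 1 by lia, pow_succ']
        exact mul_dvd_mul_left _ (ih hb)
    · exact ((pow_dvd_pow f (by lia)).trans (ih (by lia))).mul_left _

lemma exists_linearMap_hasseDeriv_pow_mul {R : Type*} [CommRing R] [IsDomain R] {f : R[X]}
    (hf : f ≠ 0) {s k : ℕ} (hk : k ≤ s) :
    ∃ L : R[X] →ₗ[R] R[X], (∀ g, hasseDeriv k (f ^ s * g) = f ^ (s - k) * L g) ∧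
      ∀ g, (L g).natDegree ≤ g.natDegree + k * f.natDegree := by
  have hf0 : f ^ (s - k) ≠ 0 := pow_ne_zero _ hf
  choose L hL using fun g => pow_sub_dvd_hasseDeriv_pow_mul f g hk
  refine ⟨⟨⟨L, fun g h => ?_⟩, fun c g => ?_⟩, hL, fun g => ?_⟩
  · apply mul_left_cancel₀ hf0
    rw [← hL, mul_add, mul_add, map_add, hL, hL]
  · apply mul_left_cancel₀ hf0
    rw [← hL, RingHom.id_apply, mul_smul_comm, mul_smul_comm, map_smul, hL]
  · change (L g).natDegree ≤ _
    rcases eq_or_ne (L g) 0 with hg | hg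
    · simp [hg]
    have degree_le : (f ^ (s - k) * L g).natDegree ≤ s * f.natDegree + g.natDegree :=
      calc (f ^ (s - k) * L g).natDegree ≤ (f ^ s * g).natDegree := by
            rw [← hL]; exact (natDegree_hasseDeriv_le _ k).trans (Nat.sub_le _ _)
        _ ≤ s * f.natDegree + g.natDegree := by
            rw [← natDegree_pow]; exact natDegree_mul_le
    rw [natDegree_mul hf0 hg, natDegree_pow] at degree_le
    obtain ⟨t, rfl⟩ := Nat.exists_eq_add_of_le' hk
    rw [Nat.add_sub_cancel] at degree_le
    linarith

lemma X_sub_C_pow_dvd_iff_hasseDeriv {R : Type*} [CommRing R] {a : R} {n : ℕ} {g : R[X]} :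
    (X - C a) ^ n ∣ g ↔ ∀ k < n, (hasseDeriv k g).eval a = 0 := by
  rw [X_sub_C_pow_dvd_iff, ← taylor_apply, X_pow_dvd_iff]
  simp_rw [taylor_coeff]

lemma sum_ne_zero_of_injOn_rootMultiplicity {R ι : Type*} [CommRing R] {a : R} {s : Finset ι}
    (hs : s.Nonempty) {p : ι → R[X]} (hp : ∀ i ∈ s, p i ≠ 0)
    (hinj : Set.InjOn (fun i => (p i).rootMultiplicity a) s) : ∑ i ∈ s, p i ≠ 0 := by
  classical
  intro hsum
  obtain ⟨i, hi, hmin⟩ := s.exists_min_image (fun i => (p i).rootMultiplicity a) hs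
  refine pow_rootMultiplicity_not_dvd (hp i hi) a ?_
  rw [← add_sum_erase s p hi] at hsum
  refine (dvd_add_left (dvd_sum fun j hj => ?_)).1 (hsum ▸ dvd_zero _)
  obtain ⟨hji, hj⟩ := mem_erase.1 hj
  have hne : (p i).rootMultiplicity a ≠ (p j).rootMultiplicity a :=
    fun h => hji (hinj hj hi h.symm)
  exact (pow_dvd_pow _ ((hmin j hj).lt_of_ne hne)).trans (pow_rootMultiplicity_dvd (p j) a)

lemma exists_ne_zero_forall_map_eq_zero {K ι κ : Type*} [Field K] [Fintype ι] [Fintype κ]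
    {B N : ℕ} (T : κ → (ι → K[X]) →ₗ[K] K[X])
    (hT : ∀ k H, (∀ i, (H i).natDegree < B) → (T k H).natDegree < N)
    (hcard : Fintype.card κ * N < Fintype.card ι * B) :
    ∃ H : ι → K[X], H ≠ 0 ∧ (∀ i, (H i).natDegree < B) ∧ ∀ k, T k H = 0 := by
  have hB : B ≠ 0 := by rintro rfl; simp at hcard
  have natDegree_lt (g : degreeLT K B) : (g : K[X]).natDegree < B := by
    rcases eq_or_ne (g : K[X]) 0 with h | h
    · simpa [h] using hB.bot_lt
    · exact (natDegree_lt_iff_degree_lt h).2 (mem_degreeLT.1 g.2)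
  have finrank_degreeLT (n : ℕ) : Module.finrank K (degreeLT K n) = n := by
    rw [Module.finrank_eq_card_basis (degreeLT.basis K n), Fintype.card_fin]
  let coeHom : (ι → degreeLT K B) →ₗ[K] (ι → K[X]) := (degreeLT K B).subtype.compLeft ι
  let restrictedT : (ι → degreeLT K B) →ₗ[K] (κ → degreeLT K N) :=
    LinearMap.pi fun k => (T k ∘ₗ coeHom).codRestrict (degreeLT K N) fun H => by
      refine mem_degreeLT.2 (degree_le_natDegree.trans_lt ?_)
      exact_mod_cast hT k _ fun i => natDegree_lt (H i)
  have finrank_lt :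
      Module.finrank K (κ → degreeLT K N) < Module.finrank K (ι → degreeLT K B) := by
    simpa [Module.finrank_pi_fintype, finrank_degreeLT] using hcard
  obtain ⟨H, hH, hH0⟩ := Submodule.exists_mem_ne_zero_of_ne_bot
    (restrictedT.ker_ne_bot_of_finrank_lt finrank_lt)
  refine ⟨coeHom H, fun h => hH0 ?_, fun i => natDegree_lt (H i), fun k => ?_⟩
  · ext1 i
    exact Subtype.ext (congrFun h i)
  · exact congrArg Subtype.val (congrFun (LinearMap.mem_ker.1 hH) k)

variable {K : Type*} [Field K] {f : K[X]} {a : K} {d J q Q M B : ℕ}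

/-- Stepanov's auxiliary polynomial `∑ f ^ (q i) * H i j * (X - a) ^ (Q j)`. Over the field with
`Q` elements `(X - a) ^ Q` agrees with `X - a` and `f ^ q` is constant on the fibres of
`x ↦ f x ^ q`. -/
noncomputable def stepanovPoly (f : K[X]) (a : K) (q Q : ℕ) (H : Fin d × Fin J → K[X]) : K[X] :=
  ∑ ij, f ^ (q * ij.1) * H ij * (X - C a) ^ (Q * ij.2)

lemma rootMultiplicity_stepanov_term (hf : f ≠ 0) {g : K[X]} (hg : g ≠ 0) (i j : ℕ) :
    (f ^ i * g * (X - C a) ^ j).rootMultiplicity a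
      = i * f.rootMultiplicity a + g.rootMultiplicity a + j := by
  have hfg : f ^ i * g ≠ 0 := mul_ne_zero (pow_ne_zero i hf) hg
  rw [rootMultiplicity_mul (mul_ne_zero hfg (pow_ne_zero j (X_sub_C_ne_zero a))),
    rootMultiplicity_mul hfg, rootMultiplicity_X_sub_C_pow]
  congr 2
  induction i with
  | zero => simp
  | succ i ih =>
    rw [pow_succ, rootMultiplicity_mul (mul_ne_zero (pow_ne_zero i hf) hf), ih
      (mul_ne_zero (pow_ne_zero i hf) hg), add_mul, one_mul]

lemma eq_and_eq_of_mul_add_mul_eq {d e i i' j j' : ℕ} (he : e.Coprime d) (hi : i < d)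
    (hi' : i' < d) (h : i * e + d * j = i' * e + d * j') : i = i' ∧ j = j' := by
  have modEq : i * e ≡ i' * e [MOD d] := by simpa [Nat.ModEq] using congrArg (· % d) h
  obtain rfl : i = i' := (modEq.cancel_right_of_coprime he.symm).eq_of_lt_of_lt hi hi'
  exact ⟨rfl, Nat.eq_of_mul_eq_mul_left (Nat.zero_lt_of_lt hi) (Nat.add_left_cancel h)⟩

-- As `Q = d q + 1`, the multiplicity of the `(i, j)` term at `a` is `q (e i + d j) + (j + v)` with
-- `e` that of `f` and `j + v < q`; it determines `e i + d j`, hence `i` modulo `d`.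
lemma stepanovPoly_ne_zero (hf : f ≠ 0) (ha : (f.rootMultiplicity a).Coprime d)
    (hQ : d * q + 1 = Q) (hBJ : B + J ≤ q + 1) {H : Fin d × Fin J → K[X]} (hH : H ≠ 0)
    (hdeg : ∀ ij, (H ij).natDegree < B) : stepanovPoly f a q Q H ≠ 0 := by
  classical
  have sum_support : stepanovPoly f a q Q H
      = ∑ ij with H ij ≠ 0, f ^ (q * ij.1) * H ij * (X - C a) ^ (Q * ij.2) := by
    refine (sum_filter_of_ne fun ij _ => ?_).symm
    contrapose!
    rintro h
    simp [h]
  rw [sum_support]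
  refine sum_ne_zero_of_injOn_rootMultiplicity (a := a) ?_ ?_ ?_
  · obtain ⟨ij, hij⟩ := Function.ne_iff.1 hH
    exact ⟨ij, by simpa using hij⟩
  · intro ij hij
    exact mul_ne_zero (mul_ne_zero (pow_ne_zero _ hf) (mem_filter.1 hij).2)
      (pow_ne_zero _ (X_sub_C_ne_zero a))
  · intro ij hij kl hkl heq
    simp only [coe_filter, mem_univ, true_and, Set.mem_ofPred_eq] at hij hkl
    simp only [rootMultiplicity_stepanov_term hf hij, rootMultiplicity_stepanov_term hf hkl,
      ← hQ] at heq
    have quotient_eq (ij : Fin d × Fin J) (hij : H ij ≠ 0) :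
        (q * ij.1 * f.rootMultiplicity a + (H ij).rootMultiplicity a + (d * q + 1) * ij.2) / q
          = ij.1 * f.rootMultiplicity a + d * ij.2 := by
      have multiplicity_le := natDegree_le_of_dvd (pow_rootMultiplicity_dvd (H ij) a) hij
      rw [natDegree_pow, natDegree_X_sub_C, mul_one] at multiplicity_le
      have remainder_lt : ij.2 + (H ij).rootMultiplicity a < q := by
        have := hdeg ij
        lia
      exact Nat.div_eq_of_lt_le (by linarith) (by linarith)
    obtain ⟨h₁, h₂⟩ := eq_and_eq_of_mul_add_mul_eq ha ij.1.2 kl.1.2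
      (by rw [← quotient_eq ij hij, heq, quotient_eq kl hkl])
    exact Prod.ext (Fin.ext h₁) (Fin.ext h₂)

lemma natDegree_pow_mul_stepanovPoly_le (hQ : d * q + 1 = Q)
    {H : Fin d × Fin J → K[X]} (hdeg : ∀ ij, (H ij).natDegree < B) :
    (f ^ M * stepanovPoly f a q Q H).natDegree ≤ (M + Q) * f.natDegree + B + Q * J := by
  rw [stepanovPoly, mul_sum]
  refine natDegree_sum_le_of_forall_le _ _ fun ij _ => ?_
  have f_part : (f ^ (M + q * ij.1)).natDegree ≤ (M + Q) * f.natDegree := by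
    rw [natDegree_pow]
    gcongr
    nlinarith [ij.1.2]
  calc (f ^ M * (f ^ (q * ij.1) * H ij * (X - C a) ^ (Q * ij.2))).natDegree
      = (f ^ (M + q * ij.1) * H ij * (X - C a) ^ (Q * ij.2)).natDegree := by
        rw [pow_add]; ring_nf
    _ ≤ (f ^ (M + q * ij.1)).natDegree + (H ij).natDegree + ((X - C a) ^ (Q * ij.2)).natDegree :=
        natDegree_mul_le.trans (by gcongr; exact natDegree_mul_le)
    _ ≤ (M + Q) * f.natDegree + B + Q * J := by
        rw [natDegree_pow (X - C a), natDegree_X_sub_C, mul_one]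
        gcongr
        · exact (hdeg ij).le
        · exact ij.2.2.le

variable [Fintype K]

lemma X_sub_C_pow_card_dvd (x : K) (j : ℕ) :
    (X - C x) ^ Fintype.card K ∣ (X - C a) ^ (Fintype.card K * j) - C ((x - a) ^ j) := by
  have pow_card (y : K) : (X - C y) ^ Fintype.card K = X ^ Fintype.card K - C y := by
    rw [← FiniteField.expand_card, map_sub, expand_X, expand_C]
  have sub_eq : (X - C a) ^ Fintype.card K - C (x - a) = (X - C x) ^ Fintype.card K := by
    rw [pow_card, pow_card, C_sub]
    ring
  rw [pow_mul, C_pow, ← sub_eq]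
  exact sub_dvd_pow_sub_pow _ _ j

lemma pow_dvd_pow_mul_stepanovPoly_sub (H : Fin d × Fin J → K[X]) (x : K)
    (hM : M ≤ Fintype.card K) :
    (X - C x) ^ M ∣ f ^ M * stepanovPoly f a q (Fintype.card K) H
      - ∑ ij, (x - a) ^ (ij.2 : ℕ) • (f ^ (M + q * ij.1) * H ij) := by
  rw [stepanovPoly, mul_sum, ← sum_sub_distrib]
  refine dvd_sum fun ij _ => ?_
  have dvd_term := (pow_dvd_pow (X - C x) hM).trans (X_sub_C_pow_card_dvd (a := a) x ij.2)
  convert dvd_term.mul_left (f ^ (M + q * ij.1) * H ij) using 1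
  rw [smul_eq_C_mul]
  ring

-- On the fibre `f x ^ q = c` the `k`-th Hasse derivative at `x` is, up to a power of `f x`, the
-- value at `x` of one polynomial `T k H` depending linearly on `H`, so `T k H = 0` serves all `x`
-- at once.
lemma exists_vanishing_conditions (hf : f ≠ 0) (hB : B ≠ 0) (a c : K)
    (hM : M ≤ Fintype.card K) :
    ∃ T : Fin M → (Fin d × Fin J → K[X]) →ₗ[K] K[X],
      (∀ k H, (∀ ij, (H ij).natDegree < B) → (T k H).natDegree < B + M * f.natDegree + J) ∧
      ∀ H, (∀ k, T k H = 0) → ∀ x, f.eval x ^ q = c →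
        (X - C x) ^ M ∣ f ^ M * stepanovPoly f a q (Fintype.card K) H := by
  have hle (k : Fin M) (i : Fin d) : (k : ℕ) ≤ M + q * i := k.2.le.trans (Nat.le_add_right _ _)
  choose L hL hLdeg using fun k i => exists_linearMap_hasseDeriv_pow_mul hf (hle k i)
  let T (k : Fin M) : (Fin d × Fin J → K[X]) →ₗ[K] K[X] :=
    ∑ ij : Fin d × Fin J, c ^ (ij.1 : ℕ) •
      LinearMap.mulRight K ((X - C a) ^ (ij.2 : ℕ)) ∘ₗ L k ij.1 ∘ₗ LinearMap.proj ij
  have T_apply (k H) :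
      T k H = ∑ ij, c ^ (ij.1 : ℕ) • (L k ij.1 (H ij) * (X - C a) ^ (ij.2 : ℕ)) := by
    simp [T]
  refine ⟨T, fun k H hH => ?_, fun H hTH x hx => ?_⟩
  · rw [T_apply]
    refine lt_of_le_of_lt (b := B - 1 + M * f.natDegree + J)
      (natDegree_sum_le_of_forall_le _ _ fun ij _ => ?_) (by lia)
    calc (c ^ (ij.1 : ℕ) • (L k ij.1 (H ij) * (X - C a) ^ (ij.2 : ℕ))).natDegree
        ≤ (L k ij.1 (H ij)).natDegree + ((X - C a) ^ (ij.2 : ℕ)).natDegree :=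
          (natDegree_smul_le _ _).trans natDegree_mul_le
      _ ≤ (H ij).natDegree + k * f.natDegree + ij.2 := by
          rw [natDegree_pow, natDegree_X_sub_C, mul_one]
          gcongr
          exact hLdeg k ij.1 (H ij)
      _ ≤ B - 1 + M * f.natDegree + J := by
          gcongr
          · exact Nat.le_sub_one_of_lt (hH ij)
          · exact k.2.le
          · exact ij.2.2.le
  · refine (dvd_iff_dvd_of_dvd_sub (pow_dvd_pow_mul_stepanovPoly_sub H x hM)).2
      (X_sub_C_pow_dvd_iff_hasseDeriv.2 fun k hk => ?_)
    calc (hasseDeriv k (∑ ij, (x - a) ^ (ij.2 : ℕ) • (f ^ (M + q * ij.1) * H ij))).eval x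
        = f.eval x ^ (M - k) * (T ⟨k, hk⟩ H).eval x := by
          simp only [T_apply, map_sum, map_smul, eval_finsetSum, mul_sum, hL ⟨k, hk⟩]
          refine sum_congr rfl fun ij _ => ?_
          simp only [eval_smul, eval_mul, eval_pow, eval_sub, eval_X, eval_C, smul_eq_mul]
          rw [Nat.sub_add_comm hk.le, pow_add, pow_mul, hx]
          ring
      _ = 0 := by rw [hTH, eval_zero, mul_zero]

lemma mul_card_fiber_le [DecidableEq K] (hf : f ≠ 0) (ha : (f.rootMultiplicity a).Coprime d)
    (hQ : d * q + 1 = Fintype.card K) (hM : M ≤ Fintype.card K) (hBJ : B + J ≤ q + 1)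
    (hcond : M * (B + M * f.natDegree + J) < d * J * B) (c : K) :
    M * #{x : K | f.eval x ^ q = c}
      ≤ (M + Fintype.card K) * f.natDegree + B + Fintype.card K * J := by
  have hB : B ≠ 0 := by rintro rfl; simp at hcond
  obtain ⟨T, hTdeg, hTdvd⟩ := exists_vanishing_conditions (d := d) (J := J) (q := q) hf hB a c hM
  obtain ⟨H, hH, hHdeg, hTH⟩ := exists_ne_zero_forall_map_eq_zero T hTdeg (by simpa using hcond)
  have prod_dvd : ∏ x : K with f.eval x ^ q = c, (X - C x) ^ M
      ∣ f ^ M * stepanovPoly f a q (Fintype.card K) H :=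
    Finset.prod_dvd_of_coprime
      (fun x _ y _ hxy => (isCoprime_X_sub_C_of_isUnit_sub (sub_ne_zero.2 hxy).isUnit).pow)
      fun x hx => hTdvd H hTH x (mem_filter.1 hx).2
  have degree_le := natDegree_le_of_dvd prod_dvd
    (mul_ne_zero (pow_ne_zero M hf) (stepanovPoly_ne_zero hf ha hQ hBJ hH hHdeg))
  rw [natDegree_prod_of_monic _ _ fun x _ => (monic_X_sub_C x).pow M] at degree_le
  simp only [natDegree_pow, natDegree_X_sub_C, mul_one, sum_const, smul_eq_mul] at degree_le
  rw [mul_comm]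
  exact degree_le.trans (natDegree_pow_mul_stepanovPoly_le hQ hHdeg)

lemma exists_stepanov_parameters {m : ℕ} (hd : d ≠ 0) (hQ : d * q + 1 = Q) (hM : M * M ≤ Q)
    (hmM : 4 * d * (m + 3) ≤ M) :
    ∃ B J : ℕ, B + J = q + 1 ∧ d * J ≤ M + d * (m + 3) ∧ M * (B + M * m + J) < d * J * B := by
  have hd := Nat.pos_of_ne_zero hd
  have div_add_mod := Nat.div_add_mod M d
  have mod_lt := Nat.mod_lt M hd
  obtain ⟨J, hJ⟩ : ∃ J, J = M / d + (m + 3) := ⟨_, rfl⟩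
  have dJ_le : d * J ≤ M + d * (m + 3) := by rw [hJ, mul_add]; lia
  have le_dJ : M + d * (m + 2) + 1 ≤ d * J := by rw [hJ]; nlinarith
  have J_le : J ≤ M + (m + 3) := hJ ▸ Nat.add_le_add_right (Nat.div_le_self M d) _
  have hd_le : d * (m + 3) * (m + 2) ≤ M * (m + 2) := Nat.mul_le_mul_right _ (by nlinarith)
  have hM_large : (4 * (m + 3)) * M ≤ M * M := Nat.mul_le_mul_right _ (by nlinarith)
  have hJq : J ≤ q + 1 := by
    refine Nat.le_of_mul_le_mul_left (c := d) ?_ hd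
    nlinarith
  obtain ⟨B, hB⟩ := Nat.exists_eq_add_of_le' hJq
  refine ⟨B, J, hB.symm, dJ_le, ?_⟩
  have Q_le : Q ≤ d * B + (M + d * (m + 3)) := by nlinarith
  have := Nat.mul_le_mul_right B le_dJ
  have := Nat.mul_le_mul_right m hM
  have := Nat.mul_le_mul_left M J_le
  have := Nat.mul_le_mul_left (m + 2) Q_le
  nlinarith

lemma le_of_stepanov_bound {m N : ℕ} (hd : d ≠ 0) (hM : M ≠ 0) (hQM : Q ≤ 4 * (M * M))
    (hB : B ≤ Q) (hJ : d * J ≤ M + d * (m + 3)) (hN : M * N ≤ (M + Q) * m + B + Q * J) :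
    (N : ℝ) ≤ Q / d + 16 * d * (m + 3) * M := by
  have hd0 : (1 : ℝ) ≤ d := by exact_mod_cast Nat.one_le_iff_ne_zero.2 hd
  have hM0 : (1 : ℝ) ≤ M := by exact_mod_cast Nat.one_le_iff_ne_zero.2 hM
  have hJ' : (J : ℝ) ≤ M / d + (m + 3) := by
    rw [← mul_le_mul_iff_right₀ (zero_lt_one.trans_le hd0), mul_add,
      mul_div_cancel₀ _ (by positivity)]
    exact_mod_cast hJ
  have hQM' : (Q : ℝ) * (2 * m + 4) ≤ 4 * (M * M) * (2 * m + 4) := by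
    gcongr
    exact_mod_cast hQM
  have hm : (m : ℝ) * M ≤ m * (M * M) := by
    gcongr
    exact le_mul_of_one_le_left (by positivity) hM0
  refine le_of_mul_le_mul_left ?_ (zero_lt_one.trans_le hM0)
  calc (M : ℝ) * N ≤ (M + Q) * m + B + Q * J := by exact_mod_cast hN
    _ ≤ (M + Q) * m + Q + Q * (M / d + (m + 3)) := by gcongr
    _ = M * (Q / d) + (m * M + Q * (2 * m + 4)) := by ring
    _ ≤ M * (Q / d + 16 * 1 * (m + 3) * M) := by nlinarith
    _ ≤ M * (Q / d + 16 * d * (m + 3) * M) := by gcongr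

lemma card_fiber_le [DecidableEq K] (hf : f ≠ 0) (ha : (f.rootMultiplicity a).Coprime d)
    (hQ : d * q + 1 = Fintype.card K) (hd : d ≠ 0) (c : K) :
    (#{x : K | f.eval x ^ q = c} : ℝ)
      ≤ Fintype.card K / d + 16 * d * (f.natDegree + 3) * √(Fintype.card K) := by
  set Q := Fintype.card K
  set M := Nat.sqrt Q
  have hM_le : (M : ℝ) ≤ √Q := Real.nat_sqrt_le_real_sqrt
  have hM : M * M ≤ Q := Nat.sqrt_le Q
  have hM0 : 1 ≤ M := Nat.le_sqrt.2 Fintype.card_pos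
  have hQM : Q < (M + 1) * (M + 1) := Nat.lt_succ_sqrt Q
  rcases le_or_gt (4 * d * (f.natDegree + 3)) M with hmM | hmM
  · obtain ⟨B, J, hBJ, hJ, hcond⟩ := exists_stepanov_parameters hd hQ hM hmM
    have hBQ : B ≤ Q := by nlinarith [Nat.pos_of_ne_zero hd]
    refine (le_of_stepanov_bound hd (by lia) (by nlinarith) hBQ hJ
      (mul_card_fiber_le hf ha hQ (Nat.sqrt_le_self Q) hBJ.le hcond c)).trans ?_
    gcongr
  · have sqrt_le : √Q ≤ 16 * d * (f.natDegree + 3) := by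
      rw [Real.sqrt_le_left (by positivity)]
      have : Q ≤ (16 * d * (f.natDegree + 3)) ^ 2 := by nlinarith
      exact_mod_cast this
    calc (#{x : K | f.eval x ^ q = c} : ℝ) ≤ Q := by exact_mod_cast card_le_univ _
      _ = √Q * √Q := (Real.mul_self_sqrt (by positivity)).symm
      _ ≤ 16 * d * (f.natDegree + 3) * √Q := by gcongr
      _ ≤ Q / d + 16 * d * (f.natDegree + 3) * √Q := le_add_of_nonneg_left (by positivity)

end Stepanov

section CharacterSum

open Polynomial

lemma sum_nthRootsFinset_one {R : Type*} [CommRing R] [IsDomain R] {ζ : R} {d : ℕ}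
    (hζ : IsPrimitiveRoot ζ d) (hd : 1 < d) : ∑ z ∈ nthRootsFinset d (1 : R), z = 0 := by
  have : NeZero d := ⟨by lia⟩
  rw [← hζ.geom_sum_eq_zero hd]
  refine (sum_nbij (ζ ^ ·) (fun i _ => ?_) (fun i hi j hj => ?_) (fun z hz => ?_)
    fun _ _ => rfl).symm
  · rw [mem_nthRootsFinset (by lia), pow_right_comm, hζ.pow_eq_one, one_pow]
  · exact hζ.pow_inj (mem_range.1 hi) (mem_range.1 hj)
  · obtain ⟨i, hi, rfl⟩ := hζ.eq_pow_of_pow_eq_one ((mem_nthRootsFinset (by lia) 1).1 hz)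
    exact ⟨i, by simpa using hi, rfl⟩

lemma norm_sum_le_of_card_fiber_le {X : Type*} [Fintype X] {g : X → ℂ} {d : ℕ} {D : ℝ}
    (hd : 1 < d) (hg : ∀ x, g x = 0 ∨ g x ^ d = 1)
    (hD : ∀ z, z ^ d = 1 → (#{x | g x = z} : ℝ) ≤ Fintype.card X / d + D) :
    ‖∑ x, g x‖ ≤ d * D + #{x | g x = 0} := by
  have hd0 : 0 < d := by lia
  have hζ := Complex.isPrimitiveRoot_exp d hd0.ne'
  set Z := nthRootsFinset d (1 : ℂ)
  set mean : ℝ := Fintype.card X / d + D with hmean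
  have zero_notMem : (0 : ℂ) ∉ Z := fun h => ne_zero_of_mem_nthRootsFinset one_ne_zero h rfl
  have mapsTo : ∀ x ∈ (univ : Finset X), g x ∈ insert 0 Z := fun x _ =>
    mem_insert.2 ((hg x).imp_right (mem_nthRootsFinset hd0 1).2)
  have card_eq : Fintype.card X = #{x | g x = 0} + ∑ z ∈ Z, #{x | g x = z} := by
    rw [← card_univ, card_eq_sum_card_fiberwise mapsTo, sum_insert zero_notMem]
  have sum_eq : ∑ x, g x = ∑ z ∈ Z, ((#{x | g x = z} - mean : ℝ) : ℂ) * z := by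
    have fiber_sum (z : ℂ) : ∑ x with g x = z, g x = #{x | g x = z} * z := by
      rw [sum_congr rfl fun x hx => (mem_filter.1 hx).2, sum_const, nsmul_eq_mul]
    simp only [← sum_fiberwise_of_maps_to mapsTo, sum_insert zero_notMem, fiber_sum, mul_zero,
      zero_add, Complex.ofReal_sub, Complex.ofReal_natCast, sub_mul, sum_sub_distrib]
    rw [← mul_sum, sum_nthRootsFinset_one hζ hd, mul_zero, sub_zero]
  calc ‖∑ x, g x‖ ≤ ∑ z ∈ Z, (mean - #{x | g x = z}) := by
        rw [sum_eq]
        refine norm_sum_le_of_le _ fun z hz => ?_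
        rw [mem_nthRootsFinset hd0] at hz
        rw [norm_mul, Complex.norm_eq_one_of_pow_eq_one hz hd0.ne', mul_one, Complex.norm_real,
          norm_sub_rev, Real.norm_of_nonneg (sub_nonneg.2 (hD z hz))]
    _ = d * mean - ∑ z ∈ Z, (#{x | g x = z} : ℝ) := by
        rw [sum_sub_distrib, sum_const, hζ.card_nthRootsFinset, nsmul_eq_mul]
    _ = d * D + #{x | g x = 0} := by
        rw [hmean, card_eq]
        push_cast
        field_simp
        ring

variable {K : Type*} [Field K]

lemma mulChar_apply_eq_zero_or_pow_orderOf_eq_one {R : Type*} [CommRing R] [Finite K]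
    (ψ : MulChar K R) (x : K) : ψ x = 0 ∨ ψ x ^ orderOf ψ = 1 := by
  by_cases hx : IsUnit x
  · rw [← MulChar.pow_apply' ψ (MulChar.orderOf_pos ψ).ne', pow_orderOf_eq_one,
      MulChar.one_apply hx]
    exact .inr rfl
  · exact .inl (ψ.map_nonunit hx)

lemma one_lt_orderOf_mulChar {R : Type*} [CommRing R] [Finite K] {ψ : MulChar K R} (hψ : ψ ≠ 1) :
    1 < orderOf ψ :=
  lt_of_le_of_ne ψ.orderOf_pos (Ne.symm (mt orderOf_eq_one_iff.1 hψ))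

variable [Fintype K]

lemma pow_eq_pow_of_mulChar_apply_eq {R : Type*} [CommRing R] [IsDomain R] {ψ : MulChar K R}
    {q : ℕ} {t u : K} (hq : orderOf ψ * q + 1 = Fintype.card K) (htu : ψ t = ψ u) (hu : ψ u ≠ 0) :
    t ^ q = u ^ q := by
  classical
  obtain ⟨t, rfl⟩ := MulChar.apply_ne_zero_iff.1 (htu ▸ hu)
  obtain ⟨u, rfl⟩ := MulChar.apply_ne_zero_iff.1 hu
  obtain ⟨g, hg⟩ := IsCyclic.exists_generator (α := Kˣ)
  obtain ⟨k, hk⟩ := (mem_powers_iff_mem_zpowers (G := Kˣ)).2 (hg (t / u))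
  obtain rfl : g ^ k * u = t := by rw [show g ^ k = t / u from hk, div_mul_cancel]
  have pow_eq_one : ψ g ^ k = 1 := by
    rw [Units.val_mul, map_mul, Units.val_pow_eq_pow_val, map_pow] at htu
    exact (mul_eq_right₀ hu).1 htu
  have order_dvd : orderOf ψ ∣ orderOf (ψ g) := orderOf_dvd_of_pow_eq_one <| by
    rw [MulChar.eq_iff hg, MulChar.pow_apply_coe, pow_orderOf_eq_one, MulChar.one_apply_coe]
  obtain ⟨l, rfl⟩ := order_dvd.trans (orderOf_dvd_of_pow_eq_one pow_eq_one)
  have pow_card : g ^ (orderOf ψ * q) = 1 := by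
    rw [← pow_card_eq_one (x := g), Fintype.card_units, ← hq, Nat.add_sub_cancel]
  rw [Units.val_mul, mul_pow, ← Units.val_pow_eq_pow_val, ← pow_mul, mul_right_comm, pow_mul,
    pow_card, one_pow, Units.val_one, one_mul]

lemma norm_sum_mulChar_eval_le {ψ : MulChar K ℂ} (hψ : ψ ≠ 1) {f : K[X]} (hf : f ≠ 0) {a : K}
    (ha : (f.rootMultiplicity a).Coprime (orderOf ψ)) :
    ‖∑ x, ψ (f.eval x)‖
      ≤ (16 * orderOf ψ ^ 2 * (f.natDegree + 3) + f.natDegree) * √(Fintype.card K) := by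
  classical
  set d := orderOf ψ
  have hd0 : 0 < d := ψ.orderOf_pos
  obtain ⟨q, hq⟩ := ψ.orderOf_dvd_card_sub_one
  have hQ : d * q + 1 = Fintype.card K := by rw [← hq, Nat.sub_add_cancel Fintype.card_pos]
  have card_zero_le : #{x | ψ (f.eval x) = 0} ≤ f.natDegree := by
    have : ({x | ψ (f.eval x) = 0} : Finset K) ⊆ f.roots.toFinset := fun x hx => by
      simpa [MulChar.apply_eq_zero_iff, hf] using hx
    exact (card_le_card this).trans (f.roots.toFinset_card_le.trans f.card_roots')
  have card_le (z : ℂ) (hz : z ^ d = 1) : (#{x | ψ (f.eval x) = z} : ℝ)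
      ≤ Fintype.card K / d + 16 * d * (f.natDegree + 3) * √(Fintype.card K) := by
    rcases ({x | ψ (f.eval x) = z} : Finset K).eq_empty_or_nonempty with h | ⟨y, hy⟩
    · rw [h, card_empty, Nat.cast_zero]
      positivity
    obtain rfl := (mem_filter.1 hy).2
    refine le_trans ?_ (card_fiber_le hf ha hQ hd0.ne' (f.eval y ^ q))
    gcongr with x
    exact fun hx => pow_eq_pow_of_mulChar_apply_eq hQ hx (ne_zero_pow hd0.ne' (hz ▸ one_ne_zero))
  have one_le_sqrt : 1 ≤ √(Fintype.card K : ℝ) :=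
    Real.one_le_sqrt.2 (by exact_mod_cast Fintype.card_pos)
  calc ‖∑ x, ψ (f.eval x)‖
      ≤ d * (16 * d * (f.natDegree + 3) * √(Fintype.card K)) + #{x | ψ (f.eval x) = 0} :=
        norm_sum_le_of_card_fiber_le (one_lt_orderOf_mulChar hψ)
          (fun x => mulChar_apply_eq_zero_or_pow_orderOf_eq_one ψ (f.eval x)) card_le
    _ ≤ d * (16 * d * (f.natDegree + 3) * √(Fintype.card K))
          + f.natDegree * √(Fintype.card K) := by
        gcongr
        exact (Nat.cast_le.2 card_zero_le).trans
          (le_mul_of_one_le_right (by positivity) one_le_sqrt)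
    _ = _ := by ring

end CharacterSum

section PolynomialLFunction

open Polynomial

variable {F : Type*} [Field F] {i j k n : ℕ}

section NormalizedFactors

open UniqueFactorizationMonoid

variable [DecidableEq F] {P g : F[X]}

lemma monic_of_mem_normalizedFactors (hP : P ∈ normalizedFactors g) : P.Monic := by
  rw [← normalize_normalized_factor P hP]
  exact monic_normalize (irreducible_of_normalized_factor P hP).ne_zero

lemma pow_dvd_iff_le_count_normalizedFactors (hP : P.Monic) (hP' : Irreducible P) (hg : g ≠ 0) :
    P ^ j ∣ g ↔ j ≤ (normalizedFactors g).count P := by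
  rw [pow_dvd_iff_le_emultiplicity, le_emultiplicity_iff_replicate_le_normalizedFactors hP' hg,
    hP.normalize_eq_self, Multiset.le_count_iff_replicate_le]

lemma monic_and_irreducible_and_pow_dvd_iff (hg : g ≠ 0) (hj : 0 < j) :
    P.Monic ∧ Irreducible P ∧ P ^ j ∣ g ↔
      P ∈ normalizedFactors g ∧ j ≤ (normalizedFactors g).count P := by
  constructor
  · rintro ⟨hP, hP', hdvd⟩
    have hle := (pow_dvd_iff_le_count_normalizedFactors hP hP' hg).1 hdvd
    exact ⟨Multiset.count_pos.1 (hj.trans_le hle), hle⟩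
  · rintro ⟨hmem, hle⟩
    have hP := monic_of_mem_normalizedFactors hmem
    have hP' := irreducible_of_normalized_factor P hmem
    exact ⟨hP, hP', (pow_dvd_iff_le_count_normalizedFactors hP hP' hg).2 hle⟩

lemma natDegree_eq_sum_normalizedFactors (hg : g.Monic) :
    g.natDegree = ∑ P ∈ (normalizedFactors g).toFinset,
      (normalizedFactors g).count P * P.natDegree := by
  conv_lhs => rw [← hg.normalize_eq_self, ← prod_normalizedFactors_eq hg.ne_zero]
  rw [natDegree_multiset_prod_of_monic _ fun P hP => monic_of_mem_normalizedFactors hP,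
    sum_multiset_map_count]
  rfl

end NormalizedFactors

lemma finite_setOf_natDegree_le [Finite F] (n : ℕ) : {g : F[X] | g.natDegree ≤ n}.Finite := by
  have := Finite.of_equiv _ (degreeLTEquiv F (n + 1)).toEquiv.symm
  refine (Set.toFinite (degreeLT F (n + 1) : Set F[X])).subset fun g hg => mem_degreeLT.2 ?_
  exact degree_le_natDegree.trans_lt (by exact_mod_cast Nat.lt_succ_of_le hg)

variable [Fintype F]

variable (F) in
/-- The monic polynomials of degree `n` over a finite field. -/
noncomputable def monicsOfDegree (n : ℕ) : Finset F[X] :=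
  ((finite_setOf_natDegree_le n).subset
    (t := {g : F[X] | g.Monic ∧ g.natDegree = n}) fun _ hg => hg.2.le).toFinset

lemma mem_monicsOfDegree {g : F[X]} : g ∈ monicsOfDegree F n ↔ g.Monic ∧ g.natDegree = n := by
  simp [monicsOfDegree]

variable (F) in
/-- The pairs `(P, j)` with `P` monic irreducible and `P ^ j` a polynomial of degree `n`. They index
the prime powers of degree `n`. -/
noncomputable def primePowersOfDegree (n : ℕ) : Finset (F[X] × ℕ) := by
  classical exact {x ∈ (range (n + 1)).biUnion (monicsOfDegree F) ×ˢ Icc 1 n |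
    Irreducible x.1 ∧ x.2 * x.1.natDegree = n}

lemma mem_primePowersOfDegree {x : F[X] × ℕ} : x ∈ primePowersOfDegree F n ↔
    x.1.Monic ∧ Irreducible x.1 ∧ 0 < x.2 ∧ x.2 * x.1.natDegree = n := by
  simp only [primePowersOfDegree, mem_filter, mem_product, mem_biUnion, mem_range,
    mem_monicsOfDegree, mem_Icc]
  refine ⟨fun ⟨⟨⟨_, _, hx, _⟩, hj, _⟩, hP, hn⟩ => ⟨hx, hP, hj, hn⟩, ?_⟩
  rintro ⟨hx, hP, hj, rfl⟩
  exact ⟨⟨⟨_, Nat.lt_succ_of_le (Nat.le_mul_of_pos_left _ hj), hx, rfl⟩, hj,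
    Nat.le_mul_of_pos_right _ hP.natDegree_pos⟩, hP, rfl⟩

/-- The `n`-th coefficient `∑ Y g`, over monic `g` of degree `n`, of the `L`-function of `Y`. -/
noncomputable def lCoeff (Y : F[X] →* ℂ) (n : ℕ) : ℂ :=
  ∑ g ∈ monicsOfDegree F n, Y g

/-- The `n`-th coefficient of the logarithmic derivative `T L'(T) / L(T)` of the `L`-function of
`Y`: the sum of `Y` over prime powers of degree `n` with von Mangoldt weights. -/
noncomputable def logDerivCoeff (Y : F[X] →* ℂ) (n : ℕ) : ℂ :=
  ∑ x ∈ primePowersOfDegree F n, x.1.natDegree * Y x.1 ^ x.2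

lemma lCoeff_zero (Y : F[X] →* ℂ) : lCoeff Y 0 = 1 := by
  have : monicsOfDegree F 0 = {1} := by
    ext g
    rw [mem_monicsOfDegree, mem_singleton]
    exact ⟨fun h => h.1.natDegree_eq_zero.1 h.2, fun h => h ▸ ⟨monic_one, natDegree_one⟩⟩
  rw [lCoeff, this, sum_singleton, map_one]

lemma lCoeff_one (Y : F[X] →* ℂ) : lCoeff Y 1 = ∑ x : F, Y (X + C x) := by
  refine (sum_nbij (fun x => X + C x) (fun x _ => ?_) (fun x _ y _ h => ?_) (fun g hg => ?_)
    fun _ _ => rfl).symm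
  · exact mem_monicsOfDegree.2 ⟨monic_X_add_C x, natDegree_X_add_C x⟩
  · exact C_injective (add_left_cancel h)
  · obtain ⟨hg, hg'⟩ := mem_monicsOfDegree.1 hg
    exact ⟨g.coeff 0, mem_coe.2 (mem_univ _), (hg.eq_X_add_C hg').symm⟩

lemma logDerivCoeff_zero (Y : F[X] →* ℂ) : logDerivCoeff Y 0 = 0 := by
  refine sum_eq_zero fun x hx => ?_
  obtain ⟨-, hP, hj, h⟩ := mem_primePowersOfDegree.1 hx
  exact absurd h (Nat.mul_pos hj hP.natDegree_pos).ne'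

lemma sum_monicsOfDegree_filter_dvd (Y : F[X] →* ℂ) {D : F[X]} [DecidablePred (D ∣ ·)]
    (hD : D ∈ monicsOfDegree F i) :
    ∑ g ∈ monicsOfDegree F (i + j) with D ∣ g, Y g = Y D * lCoeff Y j := by
  obtain ⟨hDm, rfl⟩ := mem_monicsOfDegree.1 hD
  rw [lCoeff, mul_sum]
  refine (sum_nbij (D * ·) (fun g hg => ?_) (fun g _ h _ hgh => ?_) (fun g hg => ?_)
    fun g _ => (map_mul Y D g).symm).symm
  · obtain ⟨hgm, rfl⟩ := mem_monicsOfDegree.1 hg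
    exact mem_filter.2
      ⟨mem_monicsOfDegree.2 ⟨hDm.mul hgm, hDm.natDegree_mul hgm⟩, dvd_mul_right D g⟩
  · exact mul_left_cancel₀ hDm.ne_zero hgh
  · obtain ⟨hg, g, rfl⟩ := mem_filter.1 hg
    obtain ⟨hDg, hdeg⟩ := mem_monicsOfDegree.1 hg
    have hg : g.Monic := hDm.of_mul_monic_left hDg
    rw [hDm.natDegree_mul hg] at hdeg
    exact ⟨g, mem_monicsOfDegree.2 ⟨hg, Nat.add_left_cancel hdeg⟩, rfl⟩

open UniqueFactorizationMonoid in
lemma sum_natDegree_primePowers_dvd [DecidableRel (α := F[X]) (· ∣ ·)] {g : F[X]}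
    (hg : g ∈ monicsOfDegree F n) :
    ∑ ij ∈ antidiagonal n, ∑ x ∈ primePowersOfDegree F ij.1 with x.1 ^ x.2 ∣ g, x.1.natDegree
      = n := by
  classical
  obtain ⟨hgm, rfl⟩ := mem_monicsOfDegree.1 hg
  have count_mul (P : F[X]) : (normalizedFactors g).count P * P.natDegree
      = ∑ _j ∈ Icc 1 ((normalizedFactors g).count P), P.natDegree := by simp
  conv_rhs => rw [natDegree_eq_sum_normalizedFactors hgm]
  simp_rw [count_mul]
  rw [sum_sigma', sum_sigma']
  refine sum_bij' (fun x _ => ⟨x.2.1, x.2.2⟩)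
    (fun y _ => ⟨(y.2 * y.1.natDegree, g.natDegree - y.2 * y.1.natDegree), (y.1, y.2)⟩)
    ?_ ?_ ?_ (fun _ _ => rfl) (fun _ _ => rfl)
  · rintro ⟨⟨a, b⟩, P, j⟩ h
    simp only [mem_sigma, mem_filter, mem_primePowersOfDegree] at h
    obtain ⟨-, ⟨hP, hP', hj, -⟩, hdvd⟩ := h
    have := (monic_and_irreducible_and_pow_dvd_iff hgm.ne_zero hj).1 ⟨hP, hP', hdvd⟩
    simpa only [mem_sigma, Multiset.mem_toFinset, mem_Icc] using ⟨this.1, hj, this.2⟩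
  · rintro ⟨P, j⟩ h
    simp only [mem_sigma, Multiset.mem_toFinset, mem_Icc] at h
    obtain ⟨hmem, hj, hle⟩ := h
    obtain ⟨hP, hP', hdvd⟩ :=
      (monic_and_irreducible_and_pow_dvd_iff hgm.ne_zero hj).2 ⟨hmem, hle⟩
    have hdeg := natDegree_le_of_dvd hdvd hgm.ne_zero
    rw [hP.natDegree_pow] at hdeg
    simp only [mem_sigma, HasAntidiagonal.mem_antidiagonal, mem_filter, mem_primePowersOfDegree]
    exact ⟨Nat.add_sub_of_le hdeg, ⟨hP, hP', hj, trivial⟩, hdvd⟩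
  · rintro ⟨⟨a, b⟩, P, j⟩ h
    simp only [mem_sigma, mem_filter, HasAntidiagonal.mem_antidiagonal,
      mem_primePowersOfDegree] at h
    obtain ⟨hab, ⟨-, -, -, rfl⟩, -⟩ := h
    simp [← hab]

lemma mul_lCoeff (Y : F[X] →* ℂ) (n : ℕ) :
    n * lCoeff Y n = ∑ ij ∈ antidiagonal n, logDerivCoeff Y ij.1 * lCoeff Y ij.2 := by
  classical
  calc n * lCoeff Y n
      = ∑ g ∈ monicsOfDegree F n, ∑ ij ∈ antidiagonal n, ∑ x ∈ primePowersOfDegree F ij.1,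
          if x.1 ^ x.2 ∣ g then (x.1.natDegree : ℂ) * Y g else 0 := by
        rw [lCoeff, mul_sum]
        refine sum_congr rfl fun g hg => ?_
        conv_lhs => rw [← sum_natDegree_primePowers_dvd hg]
        push_cast
        simp only [sum_mul, sum_filter, ite_mul, zero_mul]
    _ = ∑ ij ∈ antidiagonal n, ∑ x ∈ primePowersOfDegree F ij.1,
          x.1.natDegree * ∑ g ∈ monicsOfDegree F n with x.1 ^ x.2 ∣ g, Y g := by
        rw [sum_comm]
        refine sum_congr rfl fun ij _ => ?_
        rw [sum_comm]
        simp only [mul_sum, sum_filter, mul_ite, mul_zero]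
    _ = ∑ ij ∈ antidiagonal n, logDerivCoeff Y ij.1 * lCoeff Y ij.2 := by
        refine sum_congr rfl fun ij hij => ?_
        obtain rfl := HasAntidiagonal.mem_antidiagonal.1 hij
        rw [logDerivCoeff, sum_mul]
        refine sum_congr rfl fun x hx => ?_
        obtain ⟨hP, -, -, hdeg⟩ := mem_primePowersOfDegree.1 hx
        have hmem : x.1 ^ x.2 ∈ monicsOfDegree F ij.1 :=
          mem_monicsOfDegree.2 ⟨hP.pow _, (hP.natDegree_pow _).trans hdeg⟩
        rw [sum_monicsOfDegree_filter_dvd Y hmem, map_pow, mul_assoc]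

end PolynomialLFunction

section FiniteExtension

open Polynomial Module

lemma norm_algebraMap_sub_gen {R S : Type*} [CommRing R] [Ring S] [Algebra R S]
    (pb : PowerBasis R S) (t : R) :
    Algebra.norm R (algebraMap R S t - pb.gen) = (minpoly R pb.gen).eval t := by
  rw [← charpoly_leftMulMatrix, Matrix.eval_charpoly, Algebra.norm_eq_matrix_det pb.basis, map_sub,
    AlgHom.commutes, Matrix.scalar_apply, Matrix.algebraMap_eq_diagonal]
  rfl

variable {F E : Type*} [Field F] [Field E] [Algebra F E]

open IntermediateField in
lemma finrank_div_natDegree_minpoly [FiniteDimensional F E] (x : E) :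
    finrank F E / (minpoly F x).natDegree = finrank F⟮x⟯ E := by
  have hx : IsIntegral F x := Algebra.IsIntegral.isIntegral x
  rw [← finrank_mul_finrank F F⟮x⟯ E, adjoin.finrank hx,
    Nat.mul_div_cancel_left _ (minpoly.natDegree_pos hx)]

open IntermediateField in
lemma norm_algebraMap_sub [FiniteDimensional F E] (x : E) (t : F) :
    Algebra.norm F (algebraMap F E t - x)
      = (minpoly F x).eval t ^ (finrank F E / (minpoly F x).natDegree) := by
  have hx : IsIntegral F x := Algebra.IsIntegral.isIntegral x
  have h := norm_algebraMap_sub_gen (adjoin.powerBasis hx) t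
  rw [adjoin.powerBasis_gen, minpoly_gen] at h
  calc Algebra.norm F (algebraMap F E t - x)
      = Algebra.norm F (algebraMap F⟮x⟯ E (algebraMap F F⟮x⟯ t - AdjoinSimple.gen F x)) := by
        rw [map_sub (algebraMap F⟮x⟯ E), AdjoinSimple.algebraMap_gen,
          ← IsScalarTower.algebraMap_apply]
    _ = _ := by
        rw [← Algebra.norm_norm (S := F⟮x⟯), Algebra.norm_algebraMap, map_pow, h,
          finrank_div_natDegree_minpoly]

variable (E) in
/-- The lift `χ ∘ N_{E/F}` of a multiplicative character `χ` of `F` to an extension `E`. -/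
noncomputable def normChar (χ : MulChar F ℂ) : MulChar E ℂ :=
  MulChar.ofUnitHom (χ.toUnitHom.comp (Units.map (Algebra.norm F)))

lemma normChar_apply [FiniteDimensional F E] (χ : MulChar F ℂ) (x : E) :
    normChar E χ x = χ (Algebra.norm F x) := by
  by_cases hx : IsUnit x
  · obtain ⟨u, rfl⟩ := hx
    rw [normChar, MulChar.ofUnitHom_coe]
    rfl
  · obtain rfl : x = 0 := by simpa using hx
    rw [Algebra.norm_zero, χ.map_zero, MulChar.map_zero]

lemma orderOf_normChar [Finite E] (χ : MulChar F ℂ) : orderOf (normChar E χ) = orderOf χ := by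
  refine orderOf_eq_orderOf_iff.2 fun n => ?_
  simp only [MulChar.eq_one_iff, MulChar.pow_apply_coe, normChar_apply]
  exact ((FiniteField.unitsMap_norm_surjective F E).forall (p := fun u => χ u ^ n = 1)).symm

variable [Fintype E]

lemma card_filter_minpoly_eq [Finite F] [DecidableEq F[X]] {P : F[X]} (hP : P.Monic)
    (hP' : Irreducible P) (hdvd : P.natDegree ∣ finrank F E) :
    #{x : E | minpoly F x = P} = P.natDegree := by
  classical
  have hPdvd : P.map (algebraMap F E) ∣ X ^ Fintype.card E - X := by
    have := (hP'.natDegree_dvd_iff_dvd_X_pow_card_pow_sub_X).1 hdvd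
    rw [← Module.natCard_eq_pow_finrank (K := F) (V := E), Nat.card_eq_fintype_card] at this
    simpa using Polynomial.map_dvd (algebraMap F E) this
  have hne : (X ^ Fintype.card E - X : E[X]) ≠ 0 :=
    FiniteField.X_pow_card_sub_X_ne_zero E Fintype.one_lt_card
  have hsplits : (X ^ Fintype.card E - X : E[X]).Splits := by
    rw [splits_iff_card_roots, FiniteField.roots_X_pow_card_sub_X,
      FiniteField.X_pow_card_sub_X_natDegree_eq _ Fintype.one_lt_card]
    rfl
  have hnodup : (P.map (algebraMap F E)).roots.Nodup := by
    refine Multiset.nodup_of_le (roots.le_of_dvd hne hPdvd) ?_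
    rw [FiniteField.roots_X_pow_card_sub_X]
    exact univ.nodup
  have hroots : ({x : E | minpoly F x = P} : Finset E)
      = (P.map (algebraMap F E)).roots.toFinset := by
    ext x
    rw [mem_filter_univ, Multiset.mem_toFinset, mem_roots (hP.map _).ne_zero, IsRoot.def,
      eval_map_algebraMap]
    exact ⟨fun h => h ▸ minpoly.aeval F x,
      fun h => (minpoly.eq_of_irreducible_of_monic hP' h hP).symm⟩
  rw [hroots, Multiset.toFinset_card_of_nodup hnodup,
    ← (hsplits.of_dvd hne hPdvd).natDegree_eq_card_roots, natDegree_map]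

lemma logDerivCoeff_finrank [Fintype F] (Y : F[X] →* ℂ) :
    logDerivCoeff Y (finrank F E)
      = ∑ x : E, Y (minpoly F x) ^ (finrank F E / (minpoly F x).natDegree) := by
  classical
  have hint (x : E) : IsIntegral F x := Algebra.IsIntegral.isIntegral x
  have hmaps : ∀ x ∈ (univ : Finset E),
      (minpoly F x, finrank F E / (minpoly F x).natDegree)
        ∈ primePowersOfDegree F (finrank F E) := fun x _ => by
    refine mem_primePowersOfDegree.2 ⟨minpoly.monic (hint x), minpoly.irreducible (hint x), ?_,
      Nat.div_mul_cancel (minpoly.degree_dvd (hint x))⟩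
    rw [finrank_div_natDegree_minpoly]
    exact finrank_pos
  rw [logDerivCoeff, ← sum_fiberwise_of_maps_to hmaps]
  refine sum_congr rfl fun ⟨P, j⟩ hx => ?_
  obtain ⟨hP, hP', -, hdeg⟩ := mem_primePowersOfDegree.1 hx
  have hfiber (x : E) : (minpoly F x, finrank F E / (minpoly F x).natDegree) = (P, j)
      ↔ minpoly F x = P := by
    refine ⟨fun h => congrArg Prod.fst h, fun h => Prod.ext h ?_⟩
    rw [h, ← hdeg, Nat.mul_div_cancel _ hP'.natDegree_pos]
  simp only [hfiber]
  rw [← card_filter_minpoly_eq (E := E) hP hP' (Dvd.intro_left _ hdeg), ← nsmul_eq_mul, ← sum_const]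
  refine sum_congr rfl fun x hx => ?_
  rw [(mem_filter_univ x).1 hx, ← hdeg, Nat.mul_div_cancel _ hP'.natDegree_pos]

end FiniteExtension

section Weil

open Polynomial Module

lemma sum_mulChar_pow_eq_zero {F : Type*} [Field F] [Fintype F] {χ : MulChar F ℂ} (hχ : χ ≠ 1)
    {n : ℕ} (hn : n.Coprime (orderOf χ)) : ∑ x, χ x ^ n = 0 := by
  have hpow : χ ^ n ≠ 1 := fun h =>
    hχ (orderOf_eq_one_iff.1 (Nat.eq_one_of_dvd_coprimes hn (orderOf_dvd_of_pow_eq_one h) dvd_rfl))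
  have hn0 : n ≠ 0 := by
    rintro rfl
    exact hpow (pow_zero χ)
  simpa only [MulChar.pow_apply' χ hn0] using MulChar.sum_eq_zero_of_ne_one hpow

variable {F : Type*} [Field F] {S : Finset F} {e : F → ℕ} {a : F}

/-- The completely multiplicative function `g ↦ ∏ s ∈ S, χ (g s) ^ e s` on polynomials. Its values
at the monic linear polynomials are the summands of the character sum to be bounded. -/
noncomputable def evalChar (χ : MulChar F ℂ) (S : Finset F) (e : F → ℕ) : F[X] →* ℂ where
  toFun g := ∏ s ∈ S, χ (g.eval s) ^ e s
  map_one' := by simp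
  map_mul' g h := by simp only [eval_mul, map_mul, mul_pow, prod_mul_distrib]

lemma evalChar_apply (χ : MulChar F ℂ) (g : F[X]) :
    evalChar χ S e g = ∏ s ∈ S, χ (g.eval s) ^ e s := rfl

lemma add_C_mul_mem_monicsOfDegree [Fintype F] {n : ℕ} {g l : F[X]} (hg : g ∈ monicsOfDegree F n)
    (hl : l.degree < n) (c : F) : g + C c * l ∈ monicsOfDegree F n := by
  obtain ⟨hgm, rfl⟩ := mem_monicsOfDegree.1 hg
  have hlt : (C c * l).degree < g.degree := by
    rw [degree_eq_natDegree hgm.ne_zero, ← smul_eq_C_mul]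
    exact (degree_smul_le c l).trans_lt hl
  exact mem_monicsOfDegree.2 ⟨hgm.add_of_left hlt, natDegree_add_eq_left_of_degree_lt hlt⟩

-- Translating `g` by multiples of the Lagrange basis polynomial at `a` varies `g a` freely while
-- fixing the values of `g` at the other points of `S`.
lemma lCoeff_evalChar_eq_zero [Fintype F] {χ : MulChar F ℂ} (hχ : χ ≠ 1) (ha : a ∈ S)
    (hea : (e a).Coprime (orderOf χ)) {n : ℕ} (hn : #S ≤ n) : lCoeff (evalChar χ S e) n = 0 := by
  classical
  set l : F[X] := Lagrange.basis S id a
  have hl : l.degree < n := by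
    rw [Lagrange.degree_basis Function.injective_id.injOn ha]
    exact_mod_cast (Nat.sub_lt (card_pos.2 ⟨a, ha⟩) one_pos).trans_le hn
  have translate (c : F) : ∑ g ∈ monicsOfDegree F n, evalChar χ S e (g + C c * l)
      = lCoeff (evalChar χ S e) n := by
    refine sum_nbij' (· + C c * l) (· + C (-c) * l)
      (fun g hg => add_C_mul_mem_monicsOfDegree hg hl c)
      (fun g hg => add_C_mul_mem_monicsOfDegree hg hl (-c)) (fun g _ => ?_) (fun g _ => ?_)
      fun _ _ => rfl <;> simp
  have split (g : F[X]) (c : F) : evalChar χ S e (g + C c * l)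
      = χ (c + g.eval a) ^ e a * ∏ s ∈ S.erase a, χ (g.eval s) ^ e s := by
    have hla : l.eval a = 1 := Lagrange.eval_basis_self Function.injective_id.injOn ha
    rw [evalChar_apply, ← mul_prod_erase S _ ha, eval_add, eval_mul, eval_C, hla, mul_one, add_comm]
    congr 1
    refine prod_congr rfl fun s hs => ?_
    have hls : l.eval s = 0 :=
      Lagrange.eval_basis_of_ne (v := id) (ne_of_mem_erase hs).symm (mem_of_mem_erase hs)
    rw [eval_add, eval_mul, hls, mul_zero, add_zero]
  have key : Fintype.card F * lCoeff (evalChar χ S e) n = 0 := by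
    rw [← nsmul_eq_mul, ← card_univ, ← sum_const, ← sum_congr rfl fun c _ => translate c, sum_comm]
    refine sum_eq_zero fun g _ => ?_
    simp_rw [split, ← sum_mul]
    have shift := Equiv.sum_comp (Equiv.addRight (g.eval a)) (fun x => χ x ^ e a)
    simp only [Equiv.coe_addRight] at shift
    rw [shift, sum_mulChar_pow_eq_zero hχ hea, zero_mul]
  exact (mul_eq_zero.1 key).resolve_left (by exact_mod_cast Fintype.card_ne_zero)

section Extension

variable {E : Type*} [Field E] [Algebra F E]

variable (E) in
/-- The polynomial `∏ s ∈ S, (s - X) ^ e s` over an extension `E` of `F`; its factors are written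
`s - X` because the value of the minimal polynomial of `x` at `s` is a norm of `s - x`. -/
noncomputable def evalCharPoly (S : Finset F) (e : F → ℕ) : E[X] :=
  ∏ s ∈ S, (C (algebraMap F E s) - X) ^ e s

lemma C_sub_X_ne_zero {R : Type*} [Ring R] [Nontrivial R] (b : R) : C b - X ≠ 0 := by
  rw [← neg_sub, neg_ne_zero]
  exact X_sub_C_ne_zero b

lemma evalCharPoly_ne_zero : evalCharPoly E S e ≠ 0 :=
  prod_ne_zero_iff.2 fun _ _ => pow_ne_zero _ (C_sub_X_ne_zero _)

lemma natDegree_evalCharPoly_le : (evalCharPoly E S e).natDegree ≤ ∑ s ∈ S, e s := by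
  refine (natDegree_prod_le _ _).trans (sum_le_sum fun s _ => ?_)
  refine (natDegree_pow_le_of_le (m := 1) (e s) ?_).trans (mul_one _).le
  rw [← neg_sub, natDegree_neg, natDegree_X_sub_C]

lemma rootMultiplicity_evalCharPoly (ha : a ∈ S) :
    (evalCharPoly E S e).rootMultiplicity (algebraMap F E a) = e a := by
  classical
  have hroot : ¬ IsRoot ((∏ s ∈ S.erase a, (C (algebraMap F E s) - X) ^ e s) * (-1) ^ e a)
      (algebraMap F E a) := by
    have hneg : ((-1 : E[X]) ^ e a).eval (algebraMap F E a) ≠ 0 := by simp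
    rw [IsRoot.def, eval_mul, eval_prod]
    refine mul_ne_zero (prod_ne_zero_iff.2 fun s hs => ?_) hneg
    rw [eval_pow, eval_sub, eval_C, eval_X]
    exact pow_ne_zero _ (sub_ne_zero.2 ((algebraMap F E).injective.ne (ne_of_mem_erase hs)))
  rw [evalCharPoly, ← prod_erase_mul S _ ha, ← neg_sub X, neg_pow, ← mul_assoc,
    rootMultiplicity_mul_X_sub_C_pow, rootMultiplicity_eq_zero hroot, zero_add]
  exact fun h => hroot (h ▸ eval_zero)

lemma sum_normChar_eval_evalCharPoly [Fintype F] [Fintype E] (χ : MulChar F ℂ) :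
    ∑ x : E, normChar E χ ((evalCharPoly E S e).eval x)
      = logDerivCoeff (evalChar χ S e) (finrank F E) := by
  rw [logDerivCoeff_finrank]
  refine sum_congr rfl fun x _ => ?_
  rw [evalChar_apply, evalCharPoly, eval_prod, map_prod, ← prod_pow]
  refine prod_congr rfl fun s _ => ?_
  rw [eval_pow, eval_sub, eval_C, eval_X, map_pow, normChar_apply, norm_algebraMap_sub, map_pow,
    pow_right_comm]

lemma norm_logDerivCoeff_finrank_le [Fintype F] [Fintype E] {χ : MulChar F ℂ} (hχ : χ ≠ 1)
    (ha : a ∈ S) (hea : (e a).Coprime (orderOf χ)) :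
    ‖logDerivCoeff (evalChar χ S e) (finrank F E)‖
      ≤ (16 * orderOf χ ^ 2 * (∑ s ∈ S, e s + 3) + ∑ s ∈ S, e s) * √(Fintype.card E) := by
  have hψ : normChar E χ ≠ 1 := by
    rwa [Ne, ← orderOf_eq_one_iff, orderOf_normChar, orderOf_eq_one_iff]
  have hmult : ((evalCharPoly E S e).rootMultiplicity (algebraMap F E a)).Coprime
      (orderOf (normChar E χ)) := by
    rwa [rootMultiplicity_evalCharPoly ha, orderOf_normChar]
  have hdeg : ((evalCharPoly E S e).natDegree : ℝ) ≤ ∑ s ∈ S, e s := by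
    exact_mod_cast natDegree_evalCharPoly_le
  rw [← sum_normChar_eval_evalCharPoly]
  refine (norm_sum_mulChar_eval_le hψ evalCharPoly_ne_zero hmult).trans ?_
  rw [orderOf_normChar]
  gcongr

end Extension

lemma norm_logDerivCoeff_le [Fintype F] {χ : MulChar F ℂ} (hχ : χ ≠ 1) (ha : a ∈ S)
    (hea : (e a).Coprime (orderOf χ)) (n : ℕ) :
    ‖logDerivCoeff (evalChar χ S e) n‖
      ≤ (16 * orderOf χ ^ 2 * (∑ s ∈ S, e s + 3) + ∑ s ∈ S, e s) * √(Fintype.card F) ^ n := by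
  rcases n.eq_zero_or_pos with rfl | hn
  · rw [logDerivCoeff_zero, norm_zero]
    positivity
  obtain ⟨p, _⟩ := CharP.exists F
  have : Fact p.Prime := ⟨CharP.char_is_prime F p⟩
  have : NeZero n := ⟨hn.ne'⟩
  let E := FiniteField.Extension F p n
  let : Fintype E := Fintype.ofFinite E
  have hfinrank : finrank F E = n := FiniteField.finrank_extension F p n
  have hcard : √(Fintype.card E : ℝ) = √(Fintype.card F) ^ n := by
    rw [Module.card_eq_pow_finrank (K := F), hfinrank, Real.sqrt_eq_iff_mul_self_eq (by positivity)
      (by positivity), ← mul_pow, Real.mul_self_sqrt (by positivity), Nat.cast_pow]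
  have h := norm_logDerivCoeff_finrank_le (E := E) hχ ha hea
  rwa [hfinrank, hcard] at h

lemma norm_sum_prod_mulChar_add_pow_le [Fintype F] {χ : MulChar F ℂ} (hχ : χ ≠ 1) (ha : a ∈ S)
    (hea : (e a).Coprime (orderOf χ)) :
    ‖∑ x, ∏ s ∈ S, χ (x + s) ^ e s‖ ≤ (#S - 1) * √(Fintype.card F) := by
  have hS : 0 < #S := card_pos.2 ⟨a, ha⟩
  set L : ℂ[X] := ∑ n ∈ range #S, monomial n (lCoeff (evalChar χ S e) n)
  have coeff_L (n : ℕ) : L.coeff n = lCoeff (evalChar χ S e) n := by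
    simp only [L, finsetSum_coeff, coeff_monomial, sum_ite_eq', mem_range, ite_eq_left_iff, not_lt]
    exact fun hn => (lCoeff_evalChar_eq_zero hχ ha hea hn).symm
  have natDegree_L : L.natDegree ≤ #S - 1 :=
    natDegree_sum_le_of_forall_le _ _ fun n hn =>
      (natDegree_monomial_le _).trans (Nat.le_sub_one_of_lt (mem_range.1 hn))
  have hL : ‖L.coeff 1‖ ≤ L.natDegree * √(Fintype.card F) :=
    norm_coeff_one_le (Real.sqrt_nonneg _) ((coeff_L 0).trans (lCoeff_zero _))
      (fun n => by simpa only [coeff_L] using mul_lCoeff _ n) (norm_logDerivCoeff_le hχ ha hea)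
  calc ‖∑ x, ∏ s ∈ S, χ (x + s) ^ e s‖ = ‖L.coeff 1‖ := by
        rw [coeff_L, lCoeff_one]
        simp only [evalChar_apply, eval_add, eval_X, eval_C, add_comm]
    _ ≤ (#S - 1 : ℕ) * √(Fintype.card F) := hL.trans (by gcongr)
    _ = (#S - 1) * √(Fintype.card F) := by rw [Nat.cast_sub hS, Nat.cast_one]

end Weil

section MixedMoment

variable {F ι : Type*} [Field F] {χ : MulChar F ℂ}

lemma norm_mulChar_apply_le_one [Finite F] (χ : MulChar F ℂ) (x : F) : ‖χ x‖ ≤ 1 := by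
  rcases mulChar_apply_eq_zero_or_pow_orderOf_eq_one χ x with h | h
  · rw [h, norm_zero]
    exact zero_le_one
  · exact (Complex.norm_eq_one_of_pow_eq_one h (MulChar.orderOf_pos χ).ne').le

lemma conj_mulChar_apply [Finite F] (hχ : χ ≠ 1) (x : F) :
    starRingEnd ℂ (χ x) = χ x ^ (orderOf χ - 1) := by
  have hd : 1 < orderOf χ := one_lt_orderOf_mulChar hχ
  have hinv : χ⁻¹ = χ ^ (orderOf χ - 1) := by
    rw [inv_eq_iff_mul_eq_one, mul_pow_sub_one (one_pos.trans hd).ne', pow_orderOf_eq_one]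
  rw [← MulChar.pow_apply' χ (Nat.sub_pos_of_lt hd).ne', ← hinv]
  exact MulChar.star_apply' χ x

variable [Fintype F] [Fintype ι]

lemma norm_sum_prod_mulChar_add_le_card (t : ι → F) (κ : ι → ℕ) :
    ‖∑ x, ∏ i, χ (x + t i) ^ κ i‖ ≤ Fintype.card F := by
  refine (norm_sum_le_of_le _ fun x _ => ?_).trans_eq (b := ∑ _x : F, (1 : ℝ)) (by simp)
  rw [norm_prod]
  refine prod_le_one (fun _ _ => norm_nonneg _) fun i _ => ?_
  rw [norm_pow]
  exact pow_le_one₀ (norm_nonneg _) (norm_mulChar_apply_le_one χ _)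

lemma norm_sum_prod_mulChar_add_le_of_not_isRepeating {t : ι → F} {κ : ι → ℕ} (hχ : χ ≠ 1)
    (hκ : ∀ i, (κ i).Coprime (orderOf χ)) (ht : ¬ IsRepeating t) :
    ‖∑ x, ∏ i, χ (x + t i) ^ κ i‖ ≤ Fintype.card ι * √(Fintype.card F) := by
  classical
  obtain ⟨i, hi⟩ : ∃ i, ∀ j, t j = t i → j = i := by
    simpa only [IsRepeating, not_forall, not_exists, not_and, not_imp_not] using ht
  have fiber : ({j | t j = t i} : Finset ι) = {i} := by
    ext j
    rw [mem_filter_univ, mem_singleton]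
    exact ⟨hi j, fun h => h ▸ rfl⟩
  have hcop : (∑ j with t j = t i, κ j).Coprime (orderOf χ) := by
    rw [fiber, sum_singleton]
    exact hκ i
  have regroup (x : F) : ∏ j, χ (x + t j) ^ κ j
      = ∏ s ∈ univ.image t, χ (x + s) ^ ∑ j with t j = s, κ j := by
    rw [← prod_fiberwise_of_maps_to fun j _ => mem_image_of_mem t (mem_univ j)]
    refine prod_congr rfl fun s _ => ?_
    rw [← prod_pow_eq_pow_sum]
    exact prod_congr rfl fun j hj => by rw [(mem_filter_univ j).1 hj]
  have hcard : (#(univ.image t) : ℝ) - 1 ≤ Fintype.card ι :=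
    (sub_le_self _ zero_le_one).trans (by exact_mod_cast card_image_le)
  simp_rw [regroup]
  refine (norm_sum_prod_mulChar_add_pow_le hχ (mem_image_of_mem t (mem_univ i)) hcop).trans ?_
  gcongr

lemma norm_sum_prod_sum_mulChar_le {𝒜 : Finset F} {c : ι → F → ℂ} {κ : ι → ℕ} (hχ : χ ≠ 1)
    (hκ : ∀ i, (κ i).Coprime (orderOf χ)) (hc : ∀ i, ∀ a ∈ 𝒜, ‖c i a‖ ≤ 1) :
    ‖∑ x, ∏ i, ∑ a ∈ 𝒜, c i a * χ (x + a) ^ κ i‖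
      ≤ #(repeatingTuples ι 𝒜) * Fintype.card F
        + #𝒜 ^ Fintype.card ι * (Fintype.card ι * √(Fintype.card F)) := by
  classical
  have expand : ∑ x, ∏ i, ∑ a ∈ 𝒜, c i a * χ (x + a) ^ κ i
      = ∑ t : ι → 𝒜, (∏ i, c i (t i)) * ∑ x, ∏ i, χ (x + t i) ^ κ i := by
    simp_rw [mul_sum, ← prod_mul_distrib]
    rw [sum_comm]
    refine sum_congr rfl fun x _ => ?_
    rw [prod_congr rfl fun i _ => (sum_coe_sort 𝒜 fun a => c i a * χ (x + a) ^ κ i).symm,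
      Fintype.prod_sum]
  have coeff_le (t : ι → 𝒜) : ‖∏ i, c i (t i)‖ ≤ 1 := by
    rw [norm_prod]
    exact prod_le_one (fun _ _ => norm_nonneg _) fun i _ => hc i _ (t i).2
  have term_le (t : ι → 𝒜) : ‖(∏ i, c i (t i)) * ∑ x, ∏ i, χ (x + t i) ^ κ i‖
      ≤ (if t ∈ repeatingTuples ι 𝒜 then (Fintype.card F : ℝ) else 0)
        + Fintype.card ι * √(Fintype.card F) := by
    rw [norm_mul]
    refine (mul_le_of_le_one_left (norm_nonneg _) (coeff_le t)).trans ?_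
    split_ifs with ht
    · exact (norm_sum_prod_mulChar_add_le_card _ κ).trans (le_add_of_nonneg_right (by positivity))
    · rw [zero_add]
      refine norm_sum_prod_mulChar_add_le_of_not_isRepeating hχ hκ ?_
      simpa only [mem_repeatingTuples, IsRepeating, Subtype.coe_inj] using ht
  rw [expand]
  refine (norm_sum_le_of_le _ fun t _ => term_le t).trans_eq ?_
  rw [sum_add_distrib, sum_ite_mem, univ_inter, sum_const, nsmul_eq_mul, sum_const, nsmul_eq_mul,
    card_univ, Fintype.card_fun, Fintype.card_coe, Nat.cast_pow]

end MixedMoment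

section Moment

open ComplexConjugate

variable {F : Type*} [Field F] {χ : MulChar F ℂ}

lemma norm_sum_mul_mulChar_pow_eq [Finite F] (hχ : χ ≠ 1) (𝒜 : Finset F) (γ : F → ℂ) (r : ℕ)
    (x : F) :
    ((‖∑ a ∈ 𝒜, γ a * χ (x + a)‖ ^ (2 * r) : ℝ) : ℂ)
      = ∏ i : Fin r ⊕ Fin r, ∑ a ∈ 𝒜, Sum.elim (fun _ => γ) (fun _ => conj ∘ γ) i a
          * χ (x + a) ^ Sum.elim (fun _ => 1) (fun _ => orderOf χ - 1) i := by
  simp only [Fintype.prod_sum_type, Sum.elim_inl, Sum.elim_inr, prod_const, card_univ,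
    Fintype.card_fin, Function.comp_apply, pow_one, ← conj_mulChar_apply hχ, ← map_mul, ← map_sum,
    ← mul_pow, Complex.mul_conj', ← pow_mul, Complex.ofReal_pow]

lemma sum_norm_sum_mul_mulChar_pow_le [Fintype F] (hχ : χ ≠ 1) {𝒜 : Finset F} {γ : F → ℂ}
    (hγ : ∀ a ∈ 𝒜, ‖γ a‖ ≤ 1) (r : ℕ) :
    ∑ x, ‖∑ a ∈ 𝒜, γ a * χ (x + a)‖ ^ (2 * r)
      ≤ #(repeatingTuples (Fin r ⊕ Fin r) 𝒜) * Fintype.card F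
        + #𝒜 ^ (2 * r) * (2 * r * √(Fintype.card F)) := by
  have hcop (i : Fin r ⊕ Fin r) :
      (Sum.elim (fun _ => 1) (fun _ => orderOf χ - 1) i : ℕ).Coprime (orderOf χ) := by
    rcases i with _ | _
    · exact Nat.coprime_one_left _
    · exact (Nat.coprime_self_sub_left (one_lt_orderOf_mulChar hχ).le).2 (Nat.coprime_one_left _)
  have hc (i : Fin r ⊕ Fin r) : ∀ a ∈ 𝒜, ‖Sum.elim (fun _ => γ) (fun _ => conj ∘ γ) i a‖ ≤ 1 := by
    rcases i with _ | _ <;> simpa using hγ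
  have h := norm_sum_prod_sum_mulChar_le hχ hcop hc
  simp_rw [← norm_sum_mul_mulChar_pow_eq hχ 𝒜 γ r, ← Complex.ofReal_sum] at h
  rwa [Complex.norm_of_nonneg (by positivity), Fintype.card_sum, Fintype.card_fin, ← two_mul,
    Nat.cast_mul, Nat.cast_two] at h

end Moment

end WeilBound

open WeilBound in
theorem davenport_erdos_moment_general {F : Type*} [Field F] [Fintype F] {χ : MulChar F ℂ}
    (hχ : χ ≠ 1) (𝒜 : Finset F) (r : ℕ) {γ : F → ℂ} (hγ : ∀ a ∈ 𝒜, ‖γ a‖ ≤ 1) :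
    ∑ x, ‖∑ a ∈ 𝒜, γ a * χ (x + a)‖ ^ (2 * r)
      ≤ (2 * r : ℝ) ^ r * (#𝒜 ^ r * Fintype.card F + #𝒜 ^ (2 * r) * √(Fintype.card F)) := by
  have hrep : (#(repeatingTuples (Fin r ⊕ Fin r) 𝒜) : ℝ) ≤ (2 * r) ^ r * #𝒜 ^ r := by
    simpa only [Fintype.card_coe] using card_repeatingTuples_le_of_card_eq_two_mul (α := 𝒜)
      (by rw [Fintype.card_sum, Fintype.card_fin, two_mul])
  have hr : (2 * r : ℝ) ≤ (2 * r) ^ r := by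
    rcases r.eq_zero_or_pos with rfl | hr
    · simp
    · exact le_self_pow₀ (by exact_mod_cast Nat.mul_pos two_pos hr) hr.ne'
  calc ∑ x, ‖∑ a ∈ 𝒜, γ a * χ (x + a)‖ ^ (2 * r)
      ≤ #(repeatingTuples (Fin r ⊕ Fin r) 𝒜) * Fintype.card F
        + #𝒜 ^ (2 * r) * (2 * r * √(Fintype.card F)) := sum_norm_sum_mul_mulChar_pow_le hχ hγ r
    _ ≤ (2 * r : ℝ) ^ r * #𝒜 ^ r * Fintype.card F
        + #𝒜 ^ (2 * r) * ((2 * r : ℝ) ^ r * √(Fintype.card F)) := by gcongr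
    _ = (2 * r : ℝ) ^ r * (#𝒜 ^ r * Fintype.card F + #𝒜 ^ (2 * r) * √(Fintype.card F)) := by
      ring

/-- Lemma 3.1 (Davenport–Erdős type moment bound). -/
theorem davenport_erdos_moment (p : ℕ) [hp : Fact p.Prime]
    (χ : MulChar (ZMod p) ℂ) (hχ : χ ≠ 1)
    (𝒜 : Finset (ZMod p)) (r : ℕ) (hr : 0 < r)
    (γ : ZMod p → ℂ) (hγ : ∀ a ∈ 𝒜, ‖γ a‖ ≤ 1) :
    ∑ x : ZMod p, ‖∑ a ∈ 𝒜, γ a * χ (x + a)‖ ^ (2 * r) ≤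
      (2 * (r : ℝ)) ^ r *
        ((𝒜.card : ℝ) ^ r * (p : ℝ) + (𝒜.card : ℝ) ^ (2 * r) * Real.sqrt p) := by
  simpa only [ZMod.card] using davenport_erdos_moment_general hχ 𝒜 r hγ
end

section
/- Let p be a prime, let χ₁ and χ₂ be non-trivial multiplicative characters modulo p, let 𝒜 ⊆ 𝔽_p be a set of cardinality A, let r be a positive integer, and let (γ_a)_{a ∈ 𝒜} be complex numbers with |γ_a| ≤ 1 for all a ∈ 𝒜. Then ∑_{x ∈ 𝔽_p} ∑_{y ∈ 𝔽_p} |∑_{a ∈ 𝒜} γ_a · χ₁(x + a) · χ₂(y + a)|^{2r} ≤ (2r)^r · (A^r·p² + 2r·A^{2r}·p). -/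
open Finset

/-!
Expanding the `2r`-th power and summing over `x` and `y` first turns the moment into a sum over
`2r`-tuples of elements of `𝒜` of products of two complete character sums. Tuples in which every
value is repeated are so few that the trivial bound suffices for them. In any other tuple some
value occurs exactly once, so both complete sums have a simple zero and Weil's bound applies.

Weil's bound comes from an estimate `O(√|K|)` with a poor constant, but uniform over all finite
extensions `K` of the base field, obtained by Stepanov's method. The sums over the extensions are
the coefficients of the logarithmic derivative of an `L`-polynomial, so the uniform estimate keeps
all zeros of that polynomial outside the disc of radius `1 / √q`. Its linear coefficient, which is
the sum over the base field, is then at most `√q` times its degree.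
-/

section RepeatedValues

variable {ι κ α : Type*}

/-- The property that `f` takes none of its values exactly once. A tuple without this property has
an entry that occurs once, and the corresponding complete character sum exhibits cancellation. -/
def EveryValueRepeats (f : ι → α) : Prop := ∀ i, ∃ j ≠ i, f j = f i

open Classical in
/-- The families indexed by `ι` with entries in `s` all of whose values are repeated. -/
noncomputable def repeatingFamilies (ι : Type*) [Fintype ι] (s : Finset α) : Finset (ι → α) :=
  {f ∈ Fintype.piFinset fun _ ↦ s | EveryValueRepeats f}

lemma mem_repeatingFamilies [Fintype ι] {s : Finset α} {f : ι → α} :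
    f ∈ repeatingFamilies ι s ↔ (∀ i, f i ∈ s) ∧ EveryValueRepeats f := by
  simp [repeatingFamilies]

lemma EveryValueRepeats.comp_equiv {f : ι → α} (hf : EveryValueRepeats f) (e : κ ≃ ι) :
    EveryValueRepeats (f ∘ e) := fun k ↦
  let ⟨j, hj, hfj⟩ := hf (e k)
  ⟨e.symm j, by rwa [ne_eq, e.symm_apply_eq], by simpa using hfj⟩

lemma card_repeatingFamilies_congr [Fintype ι] [Fintype κ] (e : ι ≃ κ) (s : Finset α) :
    #(repeatingFamilies ι s) = #(repeatingFamilies κ s) := by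
  refine card_bij' (fun f _ ↦ f ∘ e.symm) (fun f _ ↦ f ∘ e) ?_ ?_ ?_ ?_
  · simp only [mem_repeatingFamilies]
    exact fun f hf ↦ ⟨fun _ ↦ hf.1 _, hf.2.comp_equiv _⟩
  · simp only [mem_repeatingFamilies]
    exact fun f hf ↦ ⟨fun _ ↦ hf.1 _, hf.2.comp_equiv _⟩
  · simp [Function.comp_assoc]
  · simp [Function.comp_assoc]

lemma card_repeatingFamilies_le [Fintype ι] (s : Finset α) :
    #(repeatingFamilies ι s) ≤ #s ^ Fintype.card ι := by
  classical
  calc #(repeatingFamilies ι s) ≤ #(Fintype.piFinset fun _ : ι ↦ s) :=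
        card_le_card fun f hf ↦ Fintype.mem_piFinset.2 (mem_repeatingFamilies.1 hf).1
    _ = #s ^ Fintype.card ι := by simp

lemma EveryValueRepeats.two_mul_card_image_le [Fintype ι] [DecidableEq α] {f : ι → α}
    (hf : EveryValueRepeats f) : 2 * #(univ.image f) ≤ Fintype.card ι := by
  classical
  refine mul_card_image_le_card univ 2 fun b hb ↦ ?_
  obtain ⟨i, -, rfl⟩ := mem_image.1 hb
  obtain ⟨j, hji, hfj⟩ := hf i
  rw [← card_pair hji]
  exact card_le_card fun k hk ↦ by
    rcases mem_insert.1 hk with rfl | hk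
    · simp [hfj]
    · simp [mem_singleton.1 hk]

lemma EveryValueRepeats.tail_or_removeNth {n : ℕ} {f : Fin (n + 2) → α}
    (hf : EveryValueRepeats f) :
    (EveryValueRepeats (Fin.tail f) ∧ ∃ i, Fin.tail f i = f 0) ∨
      ∃ i, Fin.tail f i = f 0 ∧ EveryValueRepeats (i.removeNth (Fin.tail f)) := by
  by_cases htail : EveryValueRepeats (Fin.tail f)
  · obtain ⟨j, hj, hfj⟩ := hf 0
    exact .inl ⟨htail, j.pred hj, by simp [Fin.tail, hfj]⟩
  obtain ⟨i, hi⟩ : ∃ i, ∀ k ≠ i, Fin.tail f k ≠ Fin.tail f i := by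
    simpa only [EveryValueRepeats, not_forall, not_exists, not_and] using htail
  have hi0 : Fin.tail f i = f 0 := by
    obtain ⟨j, hj, hfj⟩ := hf i.succ
    rcases Fin.eq_zero_or_eq_succ j with rfl | ⟨k, rfl⟩
    · exact hfj.symm
    · exact absurd hfj (hi k fun h ↦ hj (h ▸ rfl))
  refine .inr ⟨i, hi0, fun k ↦ ?_⟩
  have hk := hi _ (Fin.succAbove_ne i k)
  obtain ⟨j, hj, hfj⟩ := hf (i.succAbove k).succ
  rcases Fin.eq_zero_or_eq_succ j with rfl | ⟨l, rfl⟩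
  · exact absurd (hi0.trans hfj).symm hk
  · obtain ⟨m, rfl⟩ := Fin.exists_succAbove_eq (show l ≠ i by rintro rfl; exact hk hfj.symm)
    exact ⟨m, fun h ↦ hj (h ▸ rfl), hfj⟩

lemma two_mul_card_repeatingFamilies_fin_le (s : Finset α) (n : ℕ) :
    2 * #(repeatingFamilies (Fin (n + 2)) s) ≤
      2 * ((n + 1) * #s * #(repeatingFamilies (Fin n) s)) +
        (n + 1) * #(repeatingFamilies (Fin (n + 1)) s) := by
  classical
  set U : Finset (Fin (n + 2) → α) := (univ ×ˢ s ×ˢ repeatingFamilies (Fin n) s).image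
    fun t : Fin (n + 1) × α × (Fin n → α) ↦ Fin.cons t.2.1 (t.1.insertNth t.2.1 t.2.2)
  set V : Finset (Fin (n + 2) → α) := (repeatingFamilies (Fin (n + 1)) s).biUnion
    fun g ↦ (univ.image g).image fun a ↦ Fin.cons a g
  have hsub : repeatingFamilies (Fin (n + 2)) s ⊆ U ∪ V := fun f hf ↦ by
    obtain ⟨hfs, hf⟩ := mem_repeatingFamilies.1 hf
    refine mem_union.2 (hf.tail_or_removeNth.symm.imp ?_ ?_)
    · rintro ⟨i, hi, hrem⟩
      refine mem_image.2 ⟨(i, f 0, i.removeNth (Fin.tail f)), ?_, ?_⟩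
      · simp only [mem_product, mem_univ, true_and]
        exact ⟨hfs 0, mem_repeatingFamilies.2 ⟨fun _ ↦ hfs _, hrem⟩⟩
      · simp only
        rw [← hi, Fin.insertNth_self_removeNth, hi, Fin.cons_self_tail]
    · rintro ⟨htail, i, hi⟩
      refine mem_biUnion.2 ⟨Fin.tail f, mem_repeatingFamilies.2 ⟨fun _ ↦ hfs _, htail⟩, ?_⟩
      exact mem_image.2 ⟨f 0, mem_image.2 ⟨i, mem_univ _, hi⟩, Fin.cons_self_tail f⟩
  have hUcard : #U ≤ (n + 1) * #s * #(repeatingFamilies (Fin n) s) :=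
    card_image_le.trans (by simp [card_product, mul_assoc])
  have hVcard : 2 * #V ≤ (n + 1) * #(repeatingFamilies (Fin (n + 1)) s) := calc
    2 * #V ≤ 2 * ∑ g ∈ repeatingFamilies (Fin (n + 1)) s, #(univ.image g) := by
      gcongr
      exact card_biUnion_le.trans (sum_le_sum fun g _ ↦ card_image_le)
    _ ≤ ∑ _g ∈ repeatingFamilies (Fin (n + 1)) s, (n + 1) := by
      rw [mul_sum]
      exact sum_le_sum fun g hg ↦ by
        simpa using (mem_repeatingFamilies.1 hg).2.two_mul_card_image_le
    _ = (n + 1) * #(repeatingFamilies (Fin (n + 1)) s) := by simp [mul_comm]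
  linarith [card_le_card hsub, card_union_le U V]

lemma two_mul_succ_pow_le (n : ℕ) : 2 * (n + 1) ^ (n + 1) ≤ (n + 2) ^ (n + 1) := by
  have bernoulli := pow_add_mul_le_add_pow (a := n + 1) (b := 1) (by simp) (by simp) (n + 1)
  simp only [Nat.add_sub_cancel, Nat.cast_id, mul_one, ← pow_succ'] at bernoulli
  exact (two_mul _).trans_le bernoulli

lemma three_mul_succ_sq_mul_self_pow_le (n : ℕ) : 3 * (n + 1) ^ 2 * n ^ n ≤ (n + 2) ^ (n + 2) := by
  rcases n with - | n
  · simp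
  have bernoulli := pow_add_mul_le_add_pow (a := n + 1) (b := 2) (by simp) (by simp) (n + 1)
  simp only [Nat.add_sub_cancel, Nat.cast_id, ← pow_succ'] at bernoulli
  calc 3 * (n + 1 + 1) ^ 2 * (n + 1) ^ (n + 1)
      = (n + 1 + 1) ^ 2 * (3 * (n + 1) ^ (n + 1)) := by ring
    _ ≤ (n + 1 + 2) ^ 2 * (n + 1 + 2) ^ (n + 1) := by
      gcongr
      · simp
      · linarith
    _ = (n + 1 + 2) ^ (n + 1 + 2) := by ring

lemma sq_le_of_two_mul_le_two_mul_add {u v z X : ℕ} (hu : 3 * u ^ 2 ≤ X) (hv : 2 * v ^ 2 ≤ X)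
    (hz : 2 * z ≤ 2 * u + v) : z ^ 2 ≤ X := by
  have hsq : (2 * z) ^ 2 ≤ (2 * u + v) ^ 2 := by gcongr
  zify at *
  nlinarith [sq_nonneg (2 * (u : ℤ) - v)]

lemma card_repeatingFamilies_fin_sq_le (s : Finset α) (n : ℕ) :
    #(repeatingFamilies (Fin n) s) ^ 2 ≤ (n * #s) ^ n := by
  induction n using Nat.twoStepInduction with
  | zero => simpa using card_repeatingFamilies_le (ι := Fin 0) s
  | one =>
    have hempty : repeatingFamilies (Fin 1) s = ∅ := eq_empty_of_forall_notMem fun f hf ↦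
      let ⟨_, hj, _⟩ := (mem_repeatingFamilies.1 hf).2 0
      hj (Subsingleton.elim _ _)
    simp [hempty]
  | more n ih ih' =>
    rcases lt_or_ge #s (n + 2) with hs | hs
    · calc #(repeatingFamilies (Fin (n + 2)) s) ^ 2 ≤ (#s ^ (n + 2)) ^ 2 := by
            gcongr
            simpa using card_repeatingFamilies_le (ι := Fin (n + 2)) s
        _ = (#s * #s) ^ (n + 2) := by ring
        _ ≤ ((n + 2) * #s) ^ (n + 2) := by gcongr
    refine sq_le_of_two_mul_le_two_mul_add ?_ ?_ (two_mul_card_repeatingFamilies_fin_le s n)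
    · calc 3 * ((n + 1) * #s * #(repeatingFamilies (Fin n) s)) ^ 2
          = 3 * ((n + 1) * #s) ^ 2 * #(repeatingFamilies (Fin n) s) ^ 2 := by ring
        _ ≤ 3 * ((n + 1) * #s) ^ 2 * (n * #s) ^ n := by gcongr
        _ = 3 * (n + 1) ^ 2 * n ^ n * #s ^ (n + 2) := by ring
        _ ≤ (n + 2) ^ (n + 2) * #s ^ (n + 2) := by
          gcongr
          exact three_mul_succ_sq_mul_self_pow_le n
        _ = ((n + 2) * #s) ^ (n + 2) := (mul_pow _ _ _).symm
    · calc 2 * ((n + 1) * #(repeatingFamilies (Fin (n + 1)) s)) ^ 2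
          = 2 * (n + 1) ^ 2 * #(repeatingFamilies (Fin (n + 1)) s) ^ 2 := by ring
        _ ≤ 2 * (n + 1) ^ 2 * ((n + 1) * #s) ^ (n + 1) := by
          gcongr
        _ = (n + 1) * (n + 1) * (2 * (n + 1) ^ (n + 1)) * #s ^ (n + 1) := by rw [mul_pow]; ring
        _ ≤ #s * (n + 2) * (n + 2) ^ (n + 1) * #s ^ (n + 1) := by
          gcongr ?_ * ?_ * _
          · exact Nat.mul_le_mul (by lia) (by lia)
          · exact two_mul_succ_pow_le n
        _ = ((n + 2) * #s) ^ (n + 2) := by rw [mul_pow]; ring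

lemma card_repeatingFamilies_sq_le [Fintype ι] (s : Finset α) :
    #(repeatingFamilies ι s) ^ 2 ≤ (Fintype.card ι * #s) ^ Fintype.card ι := by
  rw [card_repeatingFamilies_congr (Fintype.equivFin ι)]
  exact card_repeatingFamilies_fin_sq_le s _

end RepeatedValues

section Stepanov

open Polynomial

lemma pow_sub_dvd_hasseDeriv_pow {R : Type*} [CommRing R] (f : R[X]) (n l : ℕ) :
    f ^ (n - l) ∣ hasseDeriv l (f ^ n) := by
  induction n generalizing l with
  | zero => simp
  | succ n ih =>
    rw [pow_succ', hasseDeriv_mul]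
    refine dvd_sum fun ⟨i, j⟩ hij ↦ ?_
    obtain rfl : i + j = l := HasAntidiagonal.mem_antidiagonal.1 hij
    rcases i with - | i
    · rw [zero_add, hasseDeriv_zero']
      exact (pow_dvd_pow f (by lia)).trans (pow_succ' f (n - j) ▸ mul_dvd_mul_left f (ih j))
    · exact ((pow_dvd_pow f (by lia)).trans (ih j)).mul_left _

lemma exists_hasseDeriv_mul_pow_eq {R : Type*} [CommRing R] [IsDomain R] {f : R[X]} (hf : f ≠ 0)
    {n l : ℕ} (hl : l ≤ n) :
    ∃ T : R[X] →ₗ[R] R[X], (∀ g, hasseDeriv l (g * f ^ n) = f ^ (n - l) * T g) ∧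
      ∀ g, (T g).natDegree ≤ g.natDegree + l * f.natDegree := by
  choose H hH using fun j ↦ pow_sub_dvd_hasseDeriv_pow f n j
  have hHdeg : ∀ j ≤ l, (H j).natDegree ≤ j * f.natDegree := fun j hj ↦ by
    rcases eq_or_ne (H j) 0 with h0 | h0
    · simp [h0]
    have hdeg := natDegree_hasseDeriv_le (f ^ n) j
    rw [hH j, natDegree_mul (pow_ne_zero _ hf) h0, natDegree_pow, natDegree_pow] at hdeg
    obtain ⟨k, rfl⟩ := Nat.exists_eq_add_of_le (hj.trans hl)
    rw [Nat.add_sub_cancel_left, add_mul] at hdeg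
    lia
  refine ⟨∑ ij ∈ antidiagonal l, (LinearMap.mulRight R (f ^ ij.1 * H ij.2)).comp
    (hasseDeriv ij.1), fun g ↦ ?_, fun g ↦ ?_⟩
  · rw [hasseDeriv_mul, LinearMap.sum_apply, mul_sum]
    refine sum_congr rfl fun ⟨i, j⟩ hij ↦ ?_
    obtain rfl : i + j = l := HasAntidiagonal.mem_antidiagonal.1 hij
    rw [hH, show n - j = n - (i + j) + i by lia, pow_add]
    simp only [LinearMap.comp_apply, LinearMap.mulRight_apply]
    ring
  · rw [LinearMap.sum_apply]
    refine natDegree_sum_le_of_forall_le _ _ fun ⟨i, j⟩ hij ↦ ?_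
    obtain rfl : i + j = l := HasAntidiagonal.mem_antidiagonal.1 hij
    refine natDegree_mul_le.trans ?_
    rw [add_mul]
    exact add_le_add (natDegree_hasseDeriv_le g i |>.trans (Nat.sub_le _ _)) <|
      natDegree_mul_le.trans (add_le_add natDegree_pow_le (hHdeg j (by lia)))

lemma natTrailingDegree_pow_of_noZeroDivisors {R : Type*} [Semiring R] [NoZeroDivisors R]
    (f : R[X]) (n : ℕ) : (f ^ n).natTrailingDegree = n * f.natTrailingDegree := by
  rcases eq_or_ne f 0 with rfl | hf
  · cases n <;> simp
  induction n with
  | zero => simp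
  | succ n ih => rw [pow_succ, natTrailingDegree_mul (pow_ne_zero _ hf) hf, ih, add_one_mul]

lemma sum_ne_zero_of_injOn_natTrailingDegree {R ι : Type*} [Semiring R] {s : Finset ι}
    {t : ι → R[X]} (hinj : Set.InjOn (fun i ↦ (t i).natTrailingDegree) {i | t i ≠ 0})
    (hne : ∃ i ∈ s, t i ≠ 0) : ∑ i ∈ s, t i ≠ 0 := by
  classical
  obtain ⟨i, hi, hmin⟩ := exists_min_image {i ∈ s | t i ≠ 0} (fun i ↦ (t i).natTrailingDegree)
    (let ⟨i, his, hi⟩ := hne; ⟨i, mem_filter.2 ⟨his, hi⟩⟩)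
  obtain ⟨his, hi⟩ := mem_filter.1 hi
  intro hsum
  have hcoeff : (∑ j ∈ s, t j).coeff (t i).natTrailingDegree = 0 := by rw [hsum, coeff_zero]
  rw [finsetSum_coeff, sum_eq_single_of_mem i his] at hcoeff
  · exact hi (trailingCoeff_eq_zero.1 hcoeff)
  intro j hjs hji
  rcases eq_or_ne (t j) 0 with hj | hj
  · rw [hj, coeff_zero]
  · exact coeff_eq_zero_of_lt_natTrailingDegree <|
      (hmin j (mem_filter.2 ⟨hjs, hj⟩)).lt_of_ne fun h ↦ hji (hinj hj hi h.symm)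

lemma eq_of_mixed_radix_eq {c d q a i k a' i' k' : ℕ} (hcd : c * d ≤ q) (ha : a < c)
    (ha' : a' < c) (hi : i < d) (hi' : i' < d)
    (h : a + c * i + k * q = a' + c * i' + k' * q) : i = i' ∧ k = k' := by
  have hlt : ∀ {a i}, a < c → i < d → a + c * i < q := fun {a i} ha hi ↦
    calc a + c * i < c * (i + 1) := by rw [mul_add_one, add_comm]; gcongr
      _ ≤ c * d := Nat.mul_le_mul_left c hi
      _ ≤ q := hcd
  have hk : k = k' := by
    have hdiv := congrArg (· / q) h
    have hq : 0 < q := (Nat.zero_le _).trans_lt (hlt ha hi)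
    simpa [Nat.add_mul_div_right _ _ hq, Nat.div_eq_of_lt, hlt, ha, hi, ha', hi'] using hdiv
  subst hk
  have hdiv := congrArg (· / c) (Nat.add_right_cancel h)
  exact ⟨by simpa [Nat.add_mul_div_left _ _ ((Nat.zero_le _).trans_lt ha), Nat.div_eq_of_lt,
    ha, ha'] using hdiv, rfl⟩

/-- The auxiliary polynomial of Stepanov's method. On a finite field with `q` elements the function
`x ↦ x ^ q` is the identity, so at the points where `f ^ c` equals `u` it takes the same values as
`∑ i, u ^ i.1 * X ^ i.2 * r i`, a polynomial of much lower degree. -/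
noncomputable def stepanovPoly {K : Type*} [Field K] {d B : ℕ} (f : K[X]) (c q : ℕ)
    (r : Fin d × Fin B → K[X]) : K[X] :=
  ∑ i, r i * f ^ (c * i.1) * X ^ (i.2 * q)

variable {K : Type*} [Field K] {f : K[X]} {c d q B : ℕ}

lemma stepanovPoly_ne_zero (hf : f.natTrailingDegree = 1) (hcd : c * d ≤ q)
    {r : Fin d × Fin B → K[X]} (hr : ∀ i, r i ∈ degreeLT K c) (hr0 : r ≠ 0) :
    stepanovPoly f c q r ≠ 0 := by
  have hf0 : f ≠ 0 := fun h ↦ by simp [h] at hf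
  have hne : ∀ i, r i * f ^ (c * i.1) * X ^ (i.2 * q) ≠ 0 ↔ r i ≠ 0 := fun i ↦ by
    simp [hf0]
  have htrail : ∀ i, r i ≠ 0 → (r i * f ^ (c * i.1) * X ^ (i.2 * q)).natTrailingDegree =
      (r i).natTrailingDegree + c * i.1 + i.2 * q := fun i hi ↦ by
    rw [natTrailingDegree_mul_X_pow (mul_ne_zero hi (pow_ne_zero _ hf0)),
      natTrailingDegree_mul hi (pow_ne_zero _ hf0), natTrailingDegree_pow_of_noZeroDivisors, hf,
      mul_one]
  have hlt : ∀ i, r i ≠ 0 → (r i).natTrailingDegree < c := fun i hi ↦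
    (natTrailingDegree_le_natDegree _).trans_lt <|
      (natDegree_lt_iff_degree_lt hi).2 (mem_degreeLT.1 (hr i))
  refine sum_ne_zero_of_injOn_natTrailingDegree (fun i hi j hj hij ↦ ?_) ?_
  · rw [Set.mem_ofPred_eq, hne] at hi hj
    simp only [htrail i hi, htrail j hj] at hij
    obtain ⟨h₁, h₂⟩ := eq_of_mixed_radix_eq hcd (hlt i hi) (hlt j hj) i.1.2 j.1.2 hij
    exact Prod.ext (Fin.ext h₁) (Fin.ext h₂)
  · obtain ⟨i, hi⟩ := Function.ne_iff.1 hr0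
    exact ⟨i, mem_univ i, (hne i).2 hi⟩

lemma natDegree_stepanovPoly_le (hf : 1 ≤ f.natDegree) {r : Fin d × Fin B → K[X]}
    (hr : ∀ i, r i ∈ degreeLT K c) :
    (stepanovPoly f c q r).natDegree ≤ c * d * f.natDegree + B * q := by
  refine natDegree_sum_le_of_forall_le _ _ fun i _ ↦ natDegree_mul_le.trans ?_
  gcongr
  · calc (r i * f ^ (c * i.1)).natDegree ≤ c * f.natDegree + c * i.1 * f.natDegree := by
          refine natDegree_mul_le.trans (add_le_add ?_ natDegree_pow_le)
          exact (natDegree_le_of_degree_le (mem_degreeLT.1 (hr i)).le).trans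
            (Nat.le_mul_of_pos_right _ hf)
      _ = c * (i.1 + 1) * f.natDegree := by ring
      _ ≤ c * d * f.natDegree := by
        gcongr
        exact i.1.2
  · rw [natDegree_X_pow]
    gcongr
    exact i.2.2.le

lemma exists_ne_zero_forall_sum_eq_zero {ι : Type*} [Fintype ι] {M E : ℕ}
    (T : Fin M → ι → K[X] →ₗ[K] K[X])
    (hT : ∀ l i, ∀ g ∈ degreeLT K c, T l i g ∈ degreeLT K E) (hdim : M * E < Fintype.card ι * c) :
    ∃ r : ι → K[X], r ≠ 0 ∧ (∀ i, r i ∈ degreeLT K c) ∧ ∀ l, ∑ i, T l i (r i) = 0 := by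
  let Ψ (l : Fin M) : (ι → degreeLT K c) →ₗ[K] degreeLT K E :=
    ∑ i, ((T l i).restrict (hT l i)).comp (LinearMap.proj i)
  have hfinrank : ∀ n, Module.finrank K (degreeLT K n) = n := fun n ↦ by
    simp [(degreeLTEquiv K n).finrank_eq]
  have : ∀ n, Module.Finite K (degreeLT K n) := fun n ↦ .equiv (degreeLTEquiv K n).symm
  have hker : LinearMap.ker (LinearMap.pi Ψ) ≠ ⊥ := by
    apply LinearMap.ker_ne_bot_of_finrank_lt
    simpa [Module.finrank_pi_fintype, hfinrank] using hdim
  obtain ⟨r, hr, hr0⟩ := (Submodule.ne_bot_iff _).1 hker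
  refine ⟨fun i ↦ r i, fun h ↦ hr0 (funext fun i ↦ Subtype.ext (congrFun h i)),
    fun i ↦ (r i).2, fun l ↦ ?_⟩
  have hΨ : Ψ l r = 0 := congrFun (LinearMap.mem_ker.1 hr) l
  simpa [Ψ] using congrArg Subtype.val hΨ

lemma X_sub_C_pow_dvd_of_eval_hasseDeriv_eq_zero {R : Type*} [CommRing R] {g : R[X]} {x : R}
    {M : ℕ} (hg : ∀ l < M, (hasseDeriv l g).eval x = 0) : (X - C x) ^ M ∣ g := by
  rw [X_sub_C_pow_dvd_iff, X_pow_dvd_iff]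
  exact fun l hl ↦ (taylor_coeff x g l).trans (hg l hl)

/-- After division by a power of `f`, the Hasse derivatives at a point `x` with `f(x) ^ c = u` are
values of polynomials of low degree that do not depend on `x`. Making those polynomials vanish
takes fewer linear conditions than there are free coefficients. -/
lemma exists_X_sub_C_pow_dvd_sum (hf : f ≠ 0) {M : ℕ} (u : K)
    (hdim : M * (c + M * f.natDegree + B) < d * B * c) :
    ∃ r : Fin d × Fin B → K[X], r ≠ 0 ∧ (∀ i, r i ∈ degreeLT K c) ∧
      ∀ x, f.eval x ^ c = u →
        (X - C x) ^ M ∣ ∑ i, r i * f ^ (M + c * i.1) * C (x ^ (i.2 : ℕ)) := by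
  choose T hT hTdeg using fun (j : Fin d) (l : Fin M) ↦
    exists_hasseDeriv_mul_pow_eq hf (l.2.le.trans (Nat.le_add_right M (c * j)))
  let S (l : Fin M) (i : Fin d × Fin B) : K[X] →ₗ[K] K[X] :=
    (LinearMap.mulLeft K (C (u ^ (i.1 : ℕ)) * X ^ (i.2 : ℕ))).comp (T i.1 l)
  have hS : ∀ l i, ∀ g ∈ degreeLT K c, S l i g ∈ degreeLT K (c + M * f.natDegree + B) :=
      fun l i g hg ↦ by
    rcases eq_or_ne g 0 with rfl | hg0
    · simp
    have hgc := (natDegree_lt_iff_degree_lt hg0).2 (mem_degreeLT.1 hg)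
    refine mem_degreeLT.2 (degree_le_natDegree.trans_lt (Nat.cast_lt.2 ?_))
    calc (C (u ^ (i.1 : ℕ)) * X ^ (i.2 : ℕ) * T i.1 l g).natDegree
        ≤ i.2 + (g.natDegree + l * f.natDegree) := natDegree_mul_le.trans
          (add_le_add (natDegree_C_mul_X_pow_le _ _) (hTdeg i.1 l g))
      _ < B + (c + M * f.natDegree) := add_lt_add_of_lt_of_le i.2.2
          (add_le_add hgc.le (Nat.mul_le_mul_right _ l.2.le))
      _ = c + M * f.natDegree + B := add_comm _ _
  have hdim' : M * (c + M * f.natDegree + B) < Fintype.card (Fin d × Fin B) * c := by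
    simpa using hdim
  obtain ⟨r, hr0, hr, hsum⟩ := exists_ne_zero_forall_sum_eq_zero S hS hdim'
  refine ⟨r, hr0, hr, fun x hx ↦ X_sub_C_pow_dvd_of_eval_hasseDeriv_eq_zero fun l hl ↦ ?_⟩
  have hterm : ∀ i, (hasseDeriv l (r i * f ^ (M + c * i.1) * C (x ^ (i.2 : ℕ)))).eval x =
      (f ^ (M - l)).eval x *
        (C (u ^ (i.1 : ℕ)) * X ^ (i.2 : ℕ) * T i.1 ⟨l, hl⟩ (r i)).eval x := fun i ↦ by
    rw [mul_comm _ (C _), ← smul_eq_C_mul, map_smul, hT i.1 ⟨l, hl⟩,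
      Nat.sub_add_comm hl.le]
    simp only [pow_add, eval_smul, eval_mul, eval_pow, eval_C, eval_X, ← hx, pow_mul,
      smul_eq_mul]
    ring
  have hsum_l : ∑ i, C (u ^ (i.1 : ℕ)) * X ^ (i.2 : ℕ) * T i.1 ⟨l, hl⟩ (r i) = 0 := hsum ⟨l, hl⟩
  rw [map_sum, eval_finsetSum, sum_congr rfl fun i _ ↦ hterm i, ← mul_sum, ← eval_finsetSum,
    hsum_l, eval_zero, mul_zero]

lemma mul_card_le_natDegree_of_X_sub_C_pow_dvd {g : K[X]} (hg : g ≠ 0)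
    {s : Finset K} {M : ℕ} (h : ∀ x ∈ s, (X - C x) ^ M ∣ g) : M * #s ≤ g.natDegree := by
  have hprod : ∏ x ∈ s, (X - C x) ^ M ∣ g := by
    refine prod_dvd_of_coprime (fun x _ y _ hxy ↦ ?_) h
    exact (isCoprime_X_sub_C_of_isUnit_sub (sub_ne_zero.2 hxy).isUnit).pow
  calc M * #s = (∏ x ∈ s, (X - C x) ^ M).natDegree := by
        rw [natDegree_prod _ _ fun x _ ↦ pow_ne_zero _ (X_sub_C_ne_zero x)]
        simp [mul_comm]
    _ ≤ g.natDegree := natDegree_le_of_dvd hprod hg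

variable [Fintype K]

lemma X_sub_C_pow_card_eq (x : K) : (X - C x) ^ Fintype.card K = X ^ Fintype.card K - C x := by
  obtain ⟨p, hp⟩ := CharP.exists K
  obtain ⟨n, hpp, hn⟩ := FiniteField.card K p
  have : Fact p.Prime := ⟨hpp⟩
  rw [hn, sub_pow_char_pow, ← C_pow, ← hn, FiniteField.pow_card]

lemma X_sub_C_pow_dvd_pow_mul_stepanovPoly {M : ℕ} (hM : M ≤ Fintype.card K)
    {r : Fin d × Fin B → K[X]} {x : K}
    (hx : (X - C x) ^ M ∣ ∑ i, r i * f ^ (M + c * i.1) * C (x ^ (i.2 : ℕ))) :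
    (X - C x) ^ M ∣ f ^ M * stepanovPoly f c (Fintype.card K) r := by
  rw [← dvd_sub_left hx, stepanovPoly, mul_sum, ← sum_sub_distrib]
  refine dvd_sum fun i _ ↦ ?_
  have hfactor : f ^ M * (r i * f ^ (c * i.1) * X ^ (i.2 * Fintype.card K)) -
      r i * f ^ (M + c * i.1) * C (x ^ (i.2 : ℕ)) = r i * f ^ (M + c * i.1) *
        ((X ^ Fintype.card K) ^ (i.2 : ℕ) - C x ^ (i.2 : ℕ)) := by
    rw [pow_add, mul_comm (i.2 : ℕ), pow_mul, C_pow]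
    ring
  rw [hfactor]
  refine (Dvd.dvd.trans ?_ (sub_dvd_pow_sub_pow _ _ _)).mul_left _
  rw [← X_sub_C_pow_card_eq]
  exact pow_dvd_pow _ hM

lemma stepanov_mul_card_fiber_le [DecidableEq K] (hf : f.natTrailingDegree = 1) {M : ℕ}
    (hcd : c * d ≤ Fintype.card K) (hM : M ≤ Fintype.card K) (u : K)
    (hdim : M * (c + M * f.natDegree + B) < d * B * c) :
    M * #{x | f.eval x ^ c = u} ≤ Fintype.card K * (2 * f.natDegree + B) := by
  have hf0 : f ≠ 0 := fun h ↦ by simp [h] at hf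
  have hdeg : 1 ≤ f.natDegree := hf ▸ natTrailingDegree_le_natDegree f
  obtain ⟨r, hr0, hr, hdvd⟩ := exists_X_sub_C_pow_dvd_sum hf0 u hdim
  calc M * #{x | f.eval x ^ c = u}
      ≤ (f ^ M * stepanovPoly f c (Fintype.card K) r).natDegree :=
        mul_card_le_natDegree_of_X_sub_C_pow_dvd
          (mul_ne_zero (pow_ne_zero _ hf0) (stepanovPoly_ne_zero hf hcd hr hr0)) fun x hx ↦
          X_sub_C_pow_dvd_pow_mul_stepanovPoly hM (hdvd x (mem_filter.1 hx).2)
    _ ≤ M * f.natDegree + (c * d * f.natDegree + B * Fintype.card K) :=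
        natDegree_mul_le.trans (add_le_add natDegree_pow_le (natDegree_stepanovPoly_le hdeg hr))
    _ ≤ Fintype.card K * f.natDegree + (Fintype.card K * f.natDegree + B * Fintype.card K) := by
        gcongr
    _ = Fintype.card K * (2 * f.natDegree + B) := by ring

lemma stepanov_parameters_lt (hc : 2 ≤ c) (hd : 0 < d) (m : ℕ) :
    d * c.sqrt * (c + d * c.sqrt * m + (c.sqrt + (2 * d * m + 4))) <
      d * (c.sqrt + (2 * d * m + 4)) * c := by
  set L := c.sqrt
  have hLc : L * L ≤ c := c.sqrt_le
  have h2L : 2 * L ≤ c := by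
    obtain hL | hL : L ≤ 1 ∨ 2 ≤ L := by lia
    · lia
    · exact (Nat.mul_le_mul_right L hL).trans hLc
  have hdim : L * (c + d * L * m + (L + (2 * d * m + 4))) < (L + (2 * d * m + 4)) * c := by
    nlinarith [Nat.mul_le_mul_right (d * m + 1) hLc, Nat.mul_le_mul_right (d * m + 2) h2L]
  simpa only [mul_assoc] using Nat.mul_lt_mul_of_pos_left hdim hd

lemma mul_add_one_le_sq_three_mul_mul_sqrt (hc : 0 < c) (hd : 0 < d) :
    c * d + 1 ≤ (3 * (d * c.sqrt)) ^ 2 := by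
  set L := c.sqrt
  have hcL : c ≤ 4 * (L * L) := by
    nlinarith [c.lt_succ_sqrt, Nat.sqrt_pos.2 hc]
  calc c * d + 1 ≤ 2 * (c * d) := by nlinarith [Nat.mul_pos hc hd]
    _ ≤ 2 * (4 * (L * L) * d) := by gcongr
    _ ≤ 9 * (L * L) * (d * d) := by nlinarith [Nat.mul_le_mul_left (L * L) (Nat.le_mul_self d)]
    _ = (3 * (d * L)) ^ 2 := by ring

lemma mul_add_one_le_mul_sqrt_mul_add_one (hc : 0 < c) (hd : 0 < d) :
    (c * d + 1 : ℝ) ≤ 3 * (d * c.sqrt) * √(c * d + 1) := by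
  have hsqrt : √(c * d + 1 : ℝ) ≤ 3 * (d * c.sqrt) := Real.sqrt_le_iff.2
    ⟨by positivity, by exact_mod_cast mul_add_one_le_sq_three_mul_mul_sqrt hc hd⟩
  calc (c * d + 1 : ℝ) = √(c * d + 1) * √(c * d + 1) := (Real.mul_self_sqrt (by positivity)).symm
    _ ≤ 3 * (d * c.sqrt) * √(c * d + 1) := by gcongr

lemma card_fiber_pow_le [DecidableEq K] (hf : f.natTrailingDegree = 1)
    (hcd : c * d + 1 = Fintype.card K) (u : K) :
    (#{x | f.eval x ^ c = u} : ℝ) ≤ Fintype.card K / d +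
      6 * (d * f.natDegree + f.natDegree + 2) * √(Fintype.card K) := by
  set m := f.natDegree
  set q := Fintype.card K
  set L := c.sqrt
  have hcd1 : 1 ≤ c * d := by linarith [Fintype.one_lt_card (α := K)]
  have hc : 0 < c := Nat.pos_of_mul_pos_right hcd1
  have hd : 0 < d := Nat.pos_of_mul_pos_left hcd1
  have hL : 0 < L := Nat.sqrt_pos.2 hc
  have hm : 1 ≤ m := hf ▸ natTrailingDegree_le_natDegree f
  have hq1 : 1 ≤ √(q : ℝ) := by
    rw [Real.one_le_sqrt]
    exact_mod_cast Fintype.card_pos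
  obtain rfl | hc2 : c = 1 ∨ 2 ≤ c := by lia
  · have hcard : (#{x | f.eval x ^ 1 = u} : ℝ) ≤ d + 1 := by
      exact_mod_cast card_le_univ _ |>.trans (by lia)
    have hdm : (d : ℝ) ≤ d * m := by exact_mod_cast Nat.le_mul_of_pos_right d hm
    have hdiv : 0 ≤ (q : ℝ) / d := by positivity
    have hconst : 6 * (d * m + m + 2 : ℝ) ≤ 6 * (d * m + m + 2) * √(q : ℝ) :=
      le_mul_of_one_le_right (by positivity) hq1
    linarith [Nat.cast_nonneg (α := ℝ) m, Nat.cast_nonneg (α := ℝ) d]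
  have hMq : d * L ≤ q := by linarith [Nat.mul_le_mul_left d c.sqrt_le_self]
  have hstep := stepanov_mul_card_fiber_le hf (Nat.le_of_succ_le hcd.le) hMq u
    (stepanov_parameters_lt hc2 hd m)
  have hdL : (0 : ℝ) < d * L := by positivity
  have hqsqrt : (q : ℝ) ≤ 3 * (d * L) * √(q : ℝ) := by
    rw [← hcd]
    exact_mod_cast mul_add_one_le_mul_sqrt_mul_add_one hc hd
  refine le_of_mul_le_mul_left ?_ hdL
  calc (d * L : ℝ) * #{x | f.eval x ^ c = u} ≤ q * (2 * m + (L + (2 * d * m + 4))) := by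
        exact_mod_cast hstep
    _ = L * q + (2 * d * m + 2 * m + 4) * q := by ring
    _ ≤ L * q + (2 * d * m + 2 * m + 4) * (3 * (d * L) * √(q : ℝ)) := by gcongr
    _ = d * L * (q / d + 6 * (d * m + m + 2) * √(q : ℝ)) := by
      field_simp
      ring

end Stepanov

section NormSum

lemma mulChar_norm_apply_le_one {R : Type*} [CommMonoid R] [Finite Rˣ] (χ : MulChar R ℂ) (a : R) :
    ‖χ a‖ ≤ 1 := by
  by_cases ha : IsUnit a
  · obtain ⟨u, rfl⟩ := ha
    have hpow : χ u ^ Nat.card Rˣ = 1 := by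
      rw [← map_pow, ← Units.val_pow_eq_pow_val, pow_card_eq_one', Units.val_one, map_one]
    exact (Complex.norm_eq_one_of_pow_eq_one hpow Nat.card_pos.ne').le
  · simp [χ.map_nonunit ha]

lemma norm_sum_mulChar_mul_le {R : Type*} [CommRing R] [Nontrivial R] [Fintype R] [DecidableEq R]
    {χ : MulChar R ℂ} (hχ : χ ≠ 1) {N : R → ℝ} {Y : ℝ} (hN : ∀ u, N u ≤ Y) :
    ‖∑ u, χ u * N u‖ ≤ ∑ u ∈ univ.erase 0, (Y - N u) := by
  have hshift : ∑ u, χ u * N u = -∑ u, χ u * (Y - N u : ℝ) := by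
    simp only [Complex.ofReal_sub, mul_sub, sum_sub_distrib, ← sum_mul,
      MulChar.sum_eq_zero_of_ne_one hχ, zero_mul, zero_sub, neg_neg]
  rw [hshift, norm_neg, ← add_sum_erase univ _ (mem_univ 0), χ.map_zero, zero_mul, zero_add]
  refine norm_sum_le_of_le _ fun u _ ↦ ?_
  rw [norm_mul, Complex.norm_real, Real.norm_of_nonneg (sub_nonneg.2 (hN u))]
  exact mul_le_of_le_one_left (sub_nonneg.2 (hN u)) (mulChar_norm_apply_le_one χ u)

open Polynomial

variable {F K : Type*} [Field F] [Fintype F] [Field K] [Fintype K] [Algebra F K]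

lemma card_fiber_norm_eval_le [DecidableEq F] {f : K[X]} (hf : f.natTrailingDegree = 1) (u : F) :
    (#{x | Algebra.norm F (f.eval x) = u} : ℝ) ≤ Fintype.card K / (Fintype.card F - 1 : ℕ) +
      6 * ((Fintype.card F - 1 : ℕ) * f.natDegree + f.natDegree + 2) * √(Fintype.card K) := by
  classical
  have hdvd : Fintype.card F - 1 ∣ Fintype.card K - 1 := by
    rw [Module.card_eq_pow_finrank (K := F) (V := K)]
    simpa only [one_pow] using Nat.sub_dvd_pow_sub_pow (Fintype.card F) 1 (Module.finrank F K)
  have hcd : (Fintype.card K - 1) / (Fintype.card F - 1) * (Fintype.card F - 1) + 1 =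
      Fintype.card K := by
    rw [Nat.div_mul_cancel hdvd, Nat.sub_add_cancel Fintype.card_pos]
  convert card_fiber_pow_le hf hcd (algebraMap F K u) using 4 with x
  rw [← Nat.card_eq_fintype_card, ← Nat.card_eq_fintype_card,
    ← FiniteField.algebraMap_norm_eq_pow, (algebraMap F K).injective.eq_iff]

lemma norm_sum_mulChar_norm_eval_le {χ : MulChar F ℂ} (hχ : χ ≠ 1) {f : K[X]}
    (hf : f.natTrailingDegree = 1) :
    ‖∑ x, χ (Algebra.norm F (f.eval x))‖ ≤ ((Fintype.card F - 1 : ℕ) *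
      (6 * ((Fintype.card F - 1 : ℕ) * f.natDegree + f.natDegree + 2)) + f.natDegree) *
        √(Fintype.card K) := by
  classical
  set d := Fintype.card F - 1 with hd
  set C : ℝ := 6 * (d * f.natDegree + f.natDegree + 2)
  have hf0 : f ≠ 0 := fun h ↦ by simp [h] at hf
  have hd0 : (d : ℝ) ≠ 0 := by
    exact_mod_cast (Nat.sub_pos_of_lt (Fintype.one_lt_card (α := F))).ne'
  set N : F → ℝ := fun u ↦ #{x | Algebra.norm F (f.eval x) = u} with hN
  have hNle : ∀ u, N u ≤ Fintype.card K / d + C * √(Fintype.card K) :=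
    card_fiber_norm_eval_le hf
  have hN0 : N 0 ≤ f.natDegree := by
    refine Nat.cast_le.2 ((card_le_card fun x hx ↦ ?_).trans
      ((Multiset.toFinset_card_le f.roots).trans f.card_roots'))
    simpa [hf0] using hx
  have hNsum : ∑ u, N u = Fintype.card K := by
    rw [← Nat.cast_sum, ← card_univ]
    exact congrArg _ (card_eq_sum_card_fiberwise fun _ _ ↦ mem_coe.2 (mem_univ _)).symm
  have hfiber : ∑ x, χ (Algebra.norm F (f.eval x)) = ∑ u, χ u * N u := by
    rw [← sum_fiberwise_of_maps_to (g := fun x ↦ Algebra.norm F (f.eval x)) fun x _ ↦ mem_univ _]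
    refine sum_congr rfl fun u _ ↦ ?_
    rw [sum_congr rfl fun x hx ↦ by rw [(mem_filter.1 hx).2]]
    simp [hN, mul_comm]
  have hsqrt : 1 ≤ √(Fintype.card K : ℝ) := by
    rw [Real.one_le_sqrt]
    exact_mod_cast Fintype.card_pos
  calc ‖∑ x, χ (Algebra.norm F (f.eval x))‖
      ≤ ∑ u ∈ univ.erase 0, (Fintype.card K / d + C * √(Fintype.card K) - N u) :=
        hfiber ▸ norm_sum_mulChar_mul_le hχ hNle
    _ = d * C * √(Fintype.card K) + N 0 := by
        have hsum := add_sum_erase univ N (mem_univ 0)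
        rw [sum_sub_distrib, sum_const, card_erase_of_mem (mem_univ _), card_univ, ← hd,
          nsmul_eq_mul, mul_add, mul_div_cancel₀ _ hd0]
        linarith
    _ ≤ (d * C + f.natDegree) * √(Fintype.card K) := by
        rw [add_mul]
        gcongr
        exact hN0.trans (le_mul_of_one_le_right (Nat.cast_nonneg _) hsqrt)

end NormSum

section FrobeniusCount

open Polynomial IntermediateField

/-- The characteristic polynomial over `F` of multiplication by `x` on `K`, written as the power of
the minimal polynomial of the right degree. -/
noncomputable def elementCharpoly (F : Type*) {K : Type*} [Field F] [Field K] [Algebra F K]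
    (x : K) : F[X] :=
  minpoly F x ^ Module.finrank F⟮x⟯ K

section FiniteDimensional

variable (F : Type*) {K : Type*} [Field F] [Field K] [Algebra F K] [FiniteDimensional F K] (x : K)

lemma natDegree_minpoly_mul_finrank :
    (minpoly F x).natDegree * Module.finrank F⟮x⟯ K = Module.finrank F K := by
  rw [← adjoin.finrank (.of_finite F x), Module.finrank_mul_finrank]

lemma monic_elementCharpoly : (elementCharpoly F x).Monic :=
  (minpoly.monic (.of_finite F x)).pow _

lemma natDegree_elementCharpoly : (elementCharpoly F x).natDegree = Module.finrank F K := by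
  rw [elementCharpoly, natDegree_pow, mul_comm, natDegree_minpoly_mul_finrank]

lemma minpoly_dvd_elementCharpoly : minpoly F x ∣ elementCharpoly F x :=
  dvd_pow_self _ Module.finrank_pos.ne'

lemma elementCharpoly_eq_minpoly_pow_div :
    elementCharpoly F x =
      minpoly F x ^ (Module.finrank F K / (minpoly F x).natDegree) := by
  rw [elementCharpoly, ← natDegree_minpoly_mul_finrank F x,
    Nat.mul_div_cancel_left _ (minpoly.natDegree_pos (.of_finite F x))]

variable {F} in
lemma eval_minpoly_powerBasis_gen {L : Type*} [Field L] [Algebra F L] (pb : PowerBasis F L)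
    (a : F) : (minpoly F pb.gen).eval a = Algebra.norm F (algebraMap F L a - pb.gen) := by
  rw [← charpoly_leftMulMatrix, Matrix.eval_charpoly, Algebra.norm_eq_matrix_det pb.basis,
    map_sub, AlgHom.commutes, Matrix.algebraMap_eq_diagonal]
  rfl

lemma eval_elementCharpoly (a : F) :
    (elementCharpoly F x).eval a = Algebra.norm F (algebraMap F K a - x) := by
  have hx : IsIntegral F x := .of_finite F x
  have hgen : algebraMap F K a - x =
      algebraMap F⟮x⟯ K (algebraMap F F⟮x⟯ a - (adjoin.powerBasis hx).gen) := by
    rw [map_sub, adjoin.powerBasis_gen, AdjoinSimple.algebraMap_gen,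
      ← IsScalarTower.algebraMap_apply]
  rw [hgen, ← Algebra.norm_norm (S := F⟮x⟯), Algebra.norm_algebraMap, map_pow,
    ← eval_minpoly_powerBasis_gen, adjoin.powerBasis_gen, minpoly_gen, elementCharpoly, eval_pow]

end FiniteDimensional

open Classical UniqueFactorizationMonoid in
lemma card_pow_div_natDegree_dvd {F : Type*} [Field F] {P g : F[X]} (hP : Irreducible P)
    (hm : P.Monic) (hg : g ≠ 0) :
    #{n ∈ range g.natDegree | P.natDegree ∣ n + 1 ∧ P ^ ((n + 1) / P.natDegree) ∣ g} =
      (normalizedFactors g).count P := by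
  set m := (normalizedFactors g).count P
  have hpow : ∀ k, P ^ k ∣ g ↔ k ≤ m := fun k ↦ by
    rw [pow_dvd_iff_le_emultiplicity, emultiplicity_eq_count_normalizedFactors hP hg,
      hm.normalize_eq_self, Nat.cast_le]
  have hdeg : m * P.natDegree ≤ g.natDegree := by
    simpa only [natDegree_pow] using natDegree_le_of_dvd ((hpow m).2 le_rfl) hg
  rw [← Nat.mul_div_cancel m hP.natDegree_pos, ← Nat.card_multiples]
  congr 1
  ext n
  simp only [mem_filter, mem_range, hpow]
  constructor
  · rintro ⟨-, ⟨k, hk⟩, hle⟩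
    rw [hk, Nat.mul_div_cancel_left _ hP.natDegree_pos] at hle
    exact ⟨by nlinarith, k, hk⟩
  · rintro ⟨hn, k, hk⟩
    rw [hk, Nat.mul_div_cancel_left _ hP.natDegree_pos]
    exact ⟨hn.trans_le hdeg, ⟨k, rfl⟩, by nlinarith [hP.natDegree_pos]⟩

variable {F : Type*} [Field F]

open Classical in
lemma card_minpoly_eq {K : Type*} [Field K] [Fintype K] [Algebra F K] {P : F[X]}
    (hP : Irreducible P) (hm : P.Monic) :
    #{x : K | minpoly F x = P} =
      if P.natDegree ∣ Module.finrank F K then P.natDegree else 0 := by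
  have : Fintype F := Fintype.ofInjective _ (algebraMap F K).injective
  split_ifs with hdvd
  · have hsplit : IsSplittingField F K (X ^ Fintype.card K - X) :=
      FiniteField.isSplittingField_sub K F
    have hPX : P ∣ X ^ Fintype.card K - X := by
      rw [Module.card_eq_pow_finrank (K := F), ← Nat.card_eq_fintype_card]
      exact hP.natDegree_dvd_iff_dvd_X_pow_card_pow_sub_X.1 hdvd
    have hne : (X ^ Fintype.card K - X : F[X]) ≠ 0 :=
      FiniteField.X_pow_card_sub_X_ne_zero F Fintype.one_lt_card
    rw [← card_rootSet_eq_natDegree (K := K) (PerfectField.separable_of_irreducible hP)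
      (hsplit.splits.of_dvd (map_ne_zero hne) (map_dvd (mapRingHom _) hPX)),
      ← Set.toFinset_card]
    congr 1
    ext x
    rw [mem_filter_univ, Set.mem_toFinset, mem_rootSet_of_ne hm.ne_zero]
    exact ⟨fun h ↦ h ▸ minpoly.aeval F x,
      fun h ↦ (minpoly.eq_of_irreducible_of_monic hP h hm).symm⟩
  · refine card_eq_zero.2 (filter_eq_empty_iff.2 fun x _ hx ↦ hdvd ?_)
    exact hx ▸ Dvd.intro _ (natDegree_minpoly_mul_finrank F x)

open Classical UniqueFactorizationMonoid in
lemma card_elementCharpoly_dvd {K : Type*} [Field K] [Fintype K] [Algebra F K] {g : F[X]}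
    (hg : g ≠ 0) :
    #{x : K | elementCharpoly F x ∣ g} = ∑ P ∈ (normalizedFactors g).toFinset,
      if P.natDegree ∣ Module.finrank F K ∧ P ^ (Module.finrank F K / P.natDegree) ∣ g
        then P.natDegree else 0 := by
  rw [card_eq_sum_card_fiberwise (f := fun x : K ↦ minpoly F x)
    (t := (normalizedFactors g).toFinset)]
  · refine sum_congr rfl fun P hP ↦ ?_
    obtain ⟨hirr, hnorm, -⟩ := (mem_normalizedFactors_iff' hg).1 (Multiset.mem_toFinset.1 hP)
    rw [filter_filter]
    by_cases hdvd : P ^ (Module.finrank F K / P.natDegree) ∣ g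
    · simp only [hdvd, and_true]
      rw [← card_minpoly_eq (K := K) hirr (hnorm ▸ monic_normalize hirr.ne_zero)]
      congr! 3 with x
      exact and_iff_right_of_imp fun hx ↦ by rwa [elementCharpoly_eq_minpoly_pow_div, hx]
    · rw [if_neg fun h ↦ hdvd h.2]
      refine card_eq_zero.2 (filter_eq_empty_iff.2 ?_)
      rintro x - ⟨hx, rfl⟩
      exact hdvd (by rwa [← elementCharpoly_eq_minpoly_pow_div])
  · intro x hx
    have hint : IsIntegral F x := .of_finite F x
    rw [mem_coe, Multiset.mem_toFinset, mem_normalizedFactors_iff' hg]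
    exact ⟨minpoly.irreducible hint, (minpoly.monic hint).normalize_eq_self,
      (minpoly_dvd_elementCharpoly F x).trans (by simpa using hx)⟩

open Classical UniqueFactorizationMonoid in
lemma sum_card_elementCharpoly_dvd {K : ℕ → Type*} [∀ n, Field (K n)] [∀ n, Fintype (K n)]
    [∀ n, Algebra F (K n)]
    (hK : ∀ n, Module.finrank F (K n) = n + 1) {g : F[X]} (hg : g.Monic) :
    ∑ n ∈ range g.natDegree, #{x : K n | elementCharpoly F x ∣ g} = g.natDegree := by
  have hfactor : ∀ P ∈ (normalizedFactors g).toFinset, Irreducible P ∧ P.Monic := fun P hP ↦ by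
    obtain ⟨hirr, hnorm, -⟩ :=
      (mem_normalizedFactors_iff' hg.ne_zero).1 (Multiset.mem_toFinset.1 hP)
    exact ⟨hirr, hnorm ▸ monic_normalize hirr.ne_zero⟩
  calc ∑ n ∈ range g.natDegree, #{x : K n | elementCharpoly F x ∣ g}
      = ∑ P ∈ (normalizedFactors g).toFinset, ∑ n ∈ range g.natDegree,
          if P.natDegree ∣ n + 1 ∧ P ^ ((n + 1) / P.natDegree) ∣ g then P.natDegree else 0 := by
        rw [sum_comm]
        refine sum_congr rfl fun n _ ↦ ?_
        rw [card_elementCharpoly_dvd hg.ne_zero, hK n]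
    _ = ∑ P ∈ (normalizedFactors g).toFinset, (normalizedFactors g).count P * P.natDegree :=
        sum_congr rfl fun P hP ↦ by
          rw [← sum_filter, sum_const, smul_eq_mul,
            card_pow_div_natDegree_dvd (hfactor P hP).1 (hfactor P hP).2 hg.ne_zero]
    _ = ((normalizedFactors g).map natDegree).sum := by
        simp only [sum_multiset_map_count, smul_eq_mul]
    _ = g.natDegree := by
        rw [← natDegree_multiset_prod_of_monic _ fun P hP ↦
            (hfactor P (Multiset.mem_toFinset.2 hP)).2,
          prod_normalizedFactors_eq hg.ne_zero, hg.normalize_eq_self]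

end FrobeniusCount

section LPolynomial

open Polynomial

lemma finite_setOf_monic_natDegree_eq (F : Type*) [Field F] [Finite F] (N : ℕ) :
    {g : F[X] | g.Monic ∧ g.natDegree = N}.Finite :=
  have := Finite.of_equiv _ (degreeLTEquiv F N).toEquiv.symm
  Finite.of_equiv _ (monicEquivDegreeLT (R := F) N).symm

/-- The monic polynomials of degree `N`. They play the role of the integers of norm `|F| ^ N` in
the definition of the `L`-function. -/
noncomputable def monicsOfDegree (F : Type*) [Field F] [Finite F] (N : ℕ) : Finset F[X] :=
  (finite_setOf_monic_natDegree_eq F N).toFinset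

section Monics

variable {F : Type*} [Field F] [Finite F]

lemma mem_monicsOfDegree {N : ℕ} {g : F[X]} :
    g ∈ monicsOfDegree F N ↔ g.Monic ∧ g.natDegree = N := by
  simp [monicsOfDegree]

lemma monicsOfDegree_zero : monicsOfDegree F 0 = {1} := by
  ext g
  rw [mem_monicsOfDegree, mem_singleton]
  exact ⟨fun ⟨hm, hg⟩ ↦ hm.natDegree_eq_zero.1 hg, by rintro rfl; simp⟩

lemma add_mem_monicsOfDegree {N : ℕ} {g h : F[X]} (hg : g ∈ monicsOfDegree F N)
    (hh : h.degree < N) : g + h ∈ monicsOfDegree F N := by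
  rw [mem_monicsOfDegree] at hg ⊢
  have hlt : h.degree < g.degree := by rwa [degree_eq_natDegree hg.1.ne_zero, hg.2]
  exact ⟨hg.1.add_of_left hlt, by rw [natDegree_add_eq_left_of_degree_lt hlt, hg.2]⟩

variable {M : Type*} [AddCommMonoid M] (f : F[X] → M)

lemma sum_monicsOfDegree_one [Fintype F] :
    ∑ g ∈ monicsOfDegree F 1, f g = ∑ t, f (X - C t) := by
  refine (sum_bij (fun t _ ↦ X - C t) (fun t _ ↦ ?_) (fun t _ t' _ h ↦ by simpa using h)
    (fun g hg ↦ ?_) fun t _ ↦ rfl).symm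
  · exact mem_monicsOfDegree.2 ⟨monic_X_sub_C t, natDegree_X_sub_C t⟩
  · obtain ⟨hm, hdeg⟩ := mem_monicsOfDegree.1 hg
    exact ⟨-g.coeff 0, mem_univ _, by rw [hm.eq_X_add_C hdeg]; simp⟩

lemma sum_monicsOfDegree_add {N : ℕ} {h : F[X]} (hh : h.degree < N) :
    ∑ g ∈ monicsOfDegree F N, f (g + h) = ∑ g ∈ monicsOfDegree F N, f g :=
  sum_bij' (fun g _ ↦ g + h) (fun g _ ↦ g + -h) (fun _ hg ↦ add_mem_monicsOfDegree hg hh)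
    (fun _ hg ↦ add_mem_monicsOfDegree hg (by rwa [degree_neg])) (by simp) (by simp) (by simp)

open Classical in
lemma sum_monicsOfDegree_filter_dvd {P : F[X]} (hP : P.Monic) (N : ℕ) :
    ∑ g ∈ monicsOfDegree F (P.natDegree + N) with P ∣ g, f g =
      ∑ h ∈ monicsOfDegree F N, f (P * h) := by
  refine (sum_bij (fun h _ ↦ P * h) (fun h hh ↦ ?_)
    (fun _ _ _ _ ↦ mul_left_cancel₀ hP.ne_zero) (fun g hg ↦ ?_) fun _ _ ↦ rfl).symm
  · rw [mem_monicsOfDegree] at hh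
    rw [mem_filter, mem_monicsOfDegree, hP.natDegree_mul hh.1, hh.2]
    exact ⟨⟨hP.mul hh.1, rfl⟩, dvd_mul_right P h⟩
  · rw [mem_filter, mem_monicsOfDegree] at hg
    obtain ⟨⟨hm, hdeg⟩, h, rfl⟩ := hg
    have hh : h.Monic := hP.of_mul_monic_left hm
    rw [hP.natDegree_mul hh, Nat.add_left_cancel_iff] at hdeg
    exact ⟨h, mem_monicsOfDegree.2 ⟨hh, hdeg⟩, rfl⟩

end Monics

variable {F ι : Type*} [Field F] [Fintype ι] (ψ : ι → MulChar F ℂ) (a : ι → F)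

/-- The completely multiplicative function of polynomials attached to the characters `ψ i` and the
points `a i`. -/
noncomputable def evalCharProd (g : F[X]) : ℂ :=
  ∏ i, ψ i (g.eval (a i))

/-- The complete character sum over the extension `K` of `F`. The case `K = F` is the one of
interest; the others enter through the logarithmic derivative of the `L`-function. -/
noncomputable def normCharSum (K : Type*) [Field K] [Fintype K] [Algebra F K] : ℂ :=
  ∑ x : K, ∏ i, ψ i (Algebra.norm F (algebraMap F K (a i) - x))

lemma evalCharProd_mul (g h : F[X]) :
    evalCharProd ψ a (g * h) = evalCharProd ψ a g * evalCharProd ψ a h := by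
  simp only [evalCharProd, eval_mul, map_mul, prod_mul_distrib]

lemma normCharSum_eq_sum_evalCharProd (K : Type*) [Field K] [Fintype K] [Algebra F K] :
    normCharSum ψ a K = ∑ x : K, evalCharProd ψ a (elementCharpoly F x) := by
  simp only [normCharSum, evalCharProd, eval_elementCharpoly]

variable [Fintype F]

/-- The coefficient of degree `N` of the `L`-function of `evalCharProd ψ a`. -/
noncomputable def lCoeff (N : ℕ) : ℂ :=
  ∑ g ∈ monicsOfDegree F N, evalCharProd ψ a g

lemma lCoeff_zero : lCoeff ψ a 0 = 1 := by
  simp [lCoeff, monicsOfDegree_zero, evalCharProd]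

lemma lCoeff_one : lCoeff ψ a 1 = ∑ t, ∏ i, ψ i (a i - t) := by
  simp [lCoeff, sum_monicsOfDegree_one, evalCharProd]

open Classical in
lemma sum_monicsOfDegree_elementCharpoly_dvd {K : Type*} [Field K] [Fintype K] [Algebra F K]
    (N : ℕ) : ∑ x : K, ∑ g ∈ monicsOfDegree F (Module.finrank F K + N) with elementCharpoly F x ∣ g,
      evalCharProd ψ a g = normCharSum ψ a K * lCoeff ψ a N := by
  rw [normCharSum_eq_sum_evalCharProd, sum_mul]
  refine sum_congr rfl fun x _ ↦ ?_
  rw [← natDegree_elementCharpoly F x, sum_monicsOfDegree_filter_dvd _ (monic_elementCharpoly F x),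
    lCoeff, mul_sum]
  simp only [evalCharProd_mul]

/-- Every monic polynomial of degree `N + 1` is weighted by its degree, which is the number of
elements of the extensions of degree at most `N + 1` whose characteristic polynomial divides it. -/
lemma succ_mul_lCoeff_succ {K : ℕ → Type*} [∀ n, Field (K n)] [∀ n, Fintype (K n)]
    [∀ n, Algebra F (K n)] (hK : ∀ n, Module.finrank F (K n) = n + 1) (N : ℕ) :
    (N + 1) * lCoeff ψ a (N + 1) =
      ∑ kl ∈ antidiagonal N, normCharSum ψ a (K kl.1) * lCoeff ψ a kl.2 := by
  classical
  calc (N + 1) * lCoeff ψ a (N + 1)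
      = ∑ g ∈ monicsOfDegree F (N + 1), ∑ n ∈ range (N + 1),
          #{x : K n | elementCharpoly F x ∣ g} * evalCharProd ψ a g := by
        rw [lCoeff, mul_sum]
        refine sum_congr rfl fun g hg ↦ ?_
        obtain ⟨hm, hdeg⟩ := mem_monicsOfDegree.1 hg
        have hcount := sum_card_elementCharpoly_dvd hK hm
        rw [hdeg] at hcount
        rw [← sum_mul]
        exact_mod_cast congrArg (fun n : ℕ ↦ (n : ℂ) * evalCharProd ψ a g) hcount.symm
    _ = ∑ n ∈ range (N + 1), ∑ x : K n,
          ∑ g ∈ monicsOfDegree F (N + 1) with elementCharpoly F x ∣ g, evalCharProd ψ a g := by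
        rw [sum_comm]
        refine sum_congr rfl fun n _ ↦ ?_
        simp only [sum_filter]
        rw [sum_comm]
        refine sum_congr rfl fun g _ ↦ ?_
        rw [← sum_filter, sum_const, nsmul_eq_mul]
    _ = ∑ kl ∈ antidiagonal N, normCharSum ψ a (K kl.1) * lCoeff ψ a kl.2 := by
        rw [Nat.sum_antidiagonal_eq_sum_range_succ
          fun k l ↦ normCharSum ψ a (K k) * lCoeff ψ a l]
        refine sum_congr rfl fun n hn ↦ ?_
        rw [← sum_monicsOfDegree_elementCharpoly_dvd, hK]
        rw [mem_range] at hn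
        rw [show n + 1 + (N - n) = N + 1 by omega]

variable {ψ a} {i₀ : ι}

lemma sum_evalCharProd_add_C_mul_nodal [DecidableEq ι] (hψ : ψ i₀ ≠ 1)
    (ha : ∀ j ≠ i₀, a j ≠ a i₀) (g : F[X]) :
    ∑ t, evalCharProd ψ a (g + C t * Lagrange.nodal (univ.erase i₀) a) = 0 := by
  set h := Lagrange.nodal (univ.erase i₀) a
  have hne : h.eval (a i₀) ≠ 0 :=
    Lagrange.eval_nodal_not_at_node fun j hj ↦ (ha j (ne_of_mem_erase hj)).symm
  have hfactor : ∀ t, evalCharProd ψ a (g + C t * h) =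
      ψ i₀ (g.eval (a i₀) + t * h.eval (a i₀)) * ∏ j ∈ univ.erase i₀, ψ j (g.eval (a j)) :=
    fun t ↦ by
      rw [evalCharProd, ← mul_prod_erase univ _ (mem_univ i₀), eval_add, eval_C_mul]
      congr 1
      refine prod_congr rfl fun j hj ↦ ?_
      rw [eval_add, eval_C_mul, Lagrange.eval_nodal_at_node hj, mul_zero, add_zero]
  have hsum : ∑ t, ψ i₀ (g.eval (a i₀) + t * h.eval (a i₀)) = ∑ t, ψ i₀ t :=
    ((Equiv.mulRight₀ _ hne).trans (Equiv.addLeft (g.eval (a i₀)))).sum_comp (ψ i₀)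
  simp only [hfactor, ← sum_mul]
  rw [hsum, MulChar.sum_eq_zero_of_ne_one hψ, zero_mul]

lemma lCoeff_eq_zero (hψ : ψ i₀ ≠ 1) (ha : ∀ j ≠ i₀, a j ≠ a i₀) {N : ℕ}
    (hN : Fintype.card ι ≤ N) : lCoeff ψ a N = 0 := by
  classical
  set h := Lagrange.nodal (univ.erase i₀) a
  have hdeg : h.degree < N := by
    rw [Lagrange.degree_nodal, Nat.cast_lt]
    exact (card_erase_lt_of_mem (mem_univ i₀)).trans_le hN
  have hcard : (Fintype.card F : ℂ) * lCoeff ψ a N = 0 := by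
    calc (Fintype.card F : ℂ) * lCoeff ψ a N
        = ∑ t : F, ∑ g ∈ monicsOfDegree F N, evalCharProd ψ a (g + C t * h) := by
          rw [← card_univ, ← nsmul_eq_mul, ← sum_const]
          refine sum_congr rfl fun t _ ↦ (sum_monicsOfDegree_add _ ?_).symm
          rw [← smul_eq_C_mul]
          exact (degree_smul_le t h).trans_lt hdeg
      _ = 0 := by
          rw [sum_comm]
          exact sum_eq_zero fun g _ ↦ sum_evalCharProd_add_C_mul_nodal hψ ha g
  exact (mul_eq_zero.1 hcard).resolve_left (Nat.cast_ne_zero.2 Fintype.card_ne_zero)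

variable (ψ a) in
/-- The `L`-function of `evalCharProd ψ a`, truncated at the degree from which on its coefficients
vanish by `lCoeff_eq_zero`. -/
noncomputable def lPolynomial : ℂ[X] :=
  ∑ N ∈ range (Fintype.card ι), monomial N (lCoeff ψ a N)

lemma natDegree_lPolynomial_le : (lPolynomial ψ a).natDegree ≤ Fintype.card ι - 1 :=
  natDegree_sum_le_of_forall_le _ _ fun _ hN ↦
    (natDegree_monomial_le _).trans (Nat.le_sub_one_of_lt (mem_range.1 hN))

lemma coeff_lPolynomial (hψ : ψ i₀ ≠ 1) (ha : ∀ j ≠ i₀, a j ≠ a i₀) (N : ℕ) :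
    (lPolynomial ψ a).coeff N = lCoeff ψ a N := by
  simp only [lPolynomial, finsetSum_coeff, coeff_monomial, sum_ite_eq', mem_range]
  split_ifs with hN
  · rfl
  · exact (lCoeff_eq_zero hψ ha (not_lt.1 hN)).symm

lemma derivative_lPolynomial {K : ℕ → Type*} [∀ n, Field (K n)] [∀ n, Fintype (K n)]
    [∀ n, Algebra F (K n)] (hK : ∀ n, Module.finrank F (K n) = n + 1) (hψ : ψ i₀ ≠ 1)
    (ha : ∀ j ≠ i₀, a j ≠ a i₀) :
    (derivative (lPolynomial ψ a) : PowerSeries ℂ) =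
      PowerSeries.mk (fun n ↦ normCharSum ψ a (K n)) * lPolynomial ψ a := by
  ext N
  simp only [PowerSeries.coeff_mul, PowerSeries.coeff_mk, coeff_coe, coeff_derivative,
    coeff_lPolynomial hψ ha]
  rw [mul_comm, succ_mul_lCoeff_succ ψ a hK]

end LPolynomial

section LogDerivative

open Polynomial

lemma hasSum_coeff_mul_pow {R : Type*} [Semiring R] [TopologicalSpace R] (P : R[X]) (z : R) :
    HasSum (fun n ↦ P.coeff n * z ^ n) (P.eval z) := by
  rw [eval_eq_sum, Polynomial.sum]
  exact hasSum_sum_of_ne_finset_zero fun n hn ↦ by rw [notMem_support_iff.1 hn, zero_mul]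

lemma norm_eval_le_of_coe_eq_mk_mul {P L : ℂ[X]} {S : ℕ → ℂ} {C ρ : ℝ}
    (hP : (P : PowerSeries ℂ) = PowerSeries.mk S * L) (hS : ∀ n, ‖S n‖ ≤ C * ρ ^ n) {z : ℂ}
    (hρ : 0 ≤ ρ) (hz : ‖z‖ * ρ < 1) :
    ‖P.eval z‖ ≤ C * (1 - ‖z‖ * ρ)⁻¹ * ‖L.eval z‖ := by
  have hterm : ∀ n, ‖S n * z ^ n‖ ≤ C * (‖z‖ * ρ) ^ n := fun n ↦ by
    rw [norm_mul, norm_pow, mul_pow, mul_comm (‖z‖ ^ n), ← mul_assoc]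
    gcongr
    exact hS n
  have hgeom : HasSum (fun n ↦ C * (‖z‖ * ρ) ^ n) (C * (1 - ‖z‖ * ρ)⁻¹) :=
    (hasSum_geometric_of_lt_one (by positivity) hz).mul_left C
  have hsummable : Summable fun n ↦ ‖S n * z ^ n‖ :=
    .of_nonneg_of_le (fun _ ↦ norm_nonneg _) hterm hgeom.summable
  have heval : P.eval z = (∑' n, S n * z ^ n) * L.eval z := by
    rw [← (hasSum_coeff_mul_pow P z).tsum_eq, ← (hasSum_coeff_mul_pow L z).tsum_eq,
      tsum_mul_tsum_eq_tsum_sum_antidiagonal_of_summable_norm hsummable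
        (hasSum_coeff_mul_pow L z).summable.norm]
    refine tsum_congr fun n ↦ ?_
    rw [← coeff_coe, hP, PowerSeries.coeff_mul, sum_mul]
    refine sum_congr rfl fun kl hkl ↦ ?_
    rw [← mem_antidiagonal.1 hkl, PowerSeries.coeff_mk, coeff_coe, pow_add, mul_mul_mul_comm]
  rw [heval, norm_mul]
  gcongr
  exact tsum_of_norm_bounded hgeom hterm

variable {L : ℂ[X]} {S : ℕ → ℂ} {C ρ : ℝ}

/-- On the segment from a zero `T` to `0` the polynomial satisfies `|L'| ≤ B |L|`, so by Grönwall's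
inequality it would vanish at `0`. -/
lemma one_le_norm_mul_of_isRoot (hL : L.coeff 0 ≠ 0)
    (hLS : (derivative L : PowerSeries ℂ) = PowerSeries.mk S * L)
    (hS : ∀ n, ‖S n‖ ≤ C * ρ ^ n) (hρ : 0 ≤ ρ) {T : ℂ} (hT : L.IsRoot T) : 1 ≤ ‖T‖ * ρ := by
  by_contra! hlt
  have hC : 0 ≤ C := by simpa using (norm_nonneg _).trans (hS 0)
  have hderiv : ∀ t : ℝ, HasDerivAt (fun t : ℝ ↦ L.eval ((1 - t) * T))
      ((derivative L).eval ((1 - t) * T) * -T) t := fun t ↦ by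
    have hline : HasDerivAt (fun t : ℝ ↦ (1 - t) * T) (-T) t := by
      simpa using ((hasDerivAt_id t).ofReal_comp.const_sub 1).mul_const T
    exact (L.hasDerivAt _).comp t hline
  have hbound : ∀ t ∈ Set.Ico (0 : ℝ) 1, ‖(derivative L).eval ((1 - t) * T) * -T‖ ≤
      C * (1 - ‖T‖ * ρ)⁻¹ * ‖T‖ * ‖L.eval ((1 - t) * T)‖ := fun t ht ↦ by
    have hz : ‖(1 - t) * T‖ * ρ ≤ ‖T‖ * ρ := by
      rw [norm_mul, ← Complex.ofReal_one, ← Complex.ofReal_sub, Complex.norm_real]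
      gcongr
      refine mul_le_of_le_one_left (norm_nonneg T) (abs_le.2 ⟨?_, ?_⟩) <;> linarith [ht.1, ht.2]
    have hinv : (1 - ‖(1 - t) * T‖ * ρ)⁻¹ ≤ (1 - ‖T‖ * ρ)⁻¹ :=
      inv_anti₀ (by linarith) (by linarith)
    calc ‖(derivative L).eval ((1 - t) * T) * -T‖
        = ‖(derivative L).eval ((1 - t) * T)‖ * ‖T‖ := by rw [norm_mul, norm_neg]
      _ ≤ C * (1 - ‖T‖ * ρ)⁻¹ * ‖L.eval ((1 - t) * T)‖ * ‖T‖ := by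
          gcongr
          exact (norm_eval_le_of_coe_eq_mk_mul hLS hS hρ (hz.trans_lt hlt)).trans (by gcongr)
      _ = _ := by ring
  have hzero := eq_zero_of_abs_deriv_le_mul_abs_self_of_eq_zero_right
    (fun t _ ↦ (hderiv t).continuousAt.continuousWithinAt)
    (fun t _ ↦ (hderiv t).hasDerivWithinAt) (by simpa using hT) hbound 1 (by simp)
  exact hL (by simpa [coeff_zero_eq_eval_zero] using hzero)

/-- Evaluate `L' / L = ∑ 1 / (z - T)`, the sum over the roots, at `z = 0`. -/
lemma norm_coeff_one_le_natDegree_mul (hL : L.coeff 0 = 1)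
    (hLS : (derivative L : PowerSeries ℂ) = PowerSeries.mk S * L)
    (hS : ∀ n, ‖S n‖ ≤ C * ρ ^ n) (hρ : 0 ≤ ρ) : ‖L.coeff 1‖ ≤ L.natDegree * ρ := by
  have hL0 : L.eval 0 = 1 := by rwa [← coeff_zero_eq_eval_zero]
  have hlog : L.coeff 1 = (L.roots.map fun T ↦ 1 / (0 - T)).sum := by
    rw [← (IsAlgClosed.splits L).eval_derivative_div_eval_of_ne_zero (hL0 ▸ one_ne_zero), hL0,
      ← coeff_zero_eq_eval_zero, coeff_derivative]
    simp
  have hroot : ∀ T ∈ L.roots, ‖1 / (0 - T)‖ ≤ ρ := fun T hT ↦ by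
    have hTρ := one_le_norm_mul_of_isRoot (hL ▸ one_ne_zero) hLS hS hρ (isRoot_of_mem_roots hT)
    have hTpos : 0 < ‖T‖ := (norm_nonneg T).lt_of_ne fun h ↦ by
      rw [← h, zero_mul] at hTρ
      exact zero_lt_one.not_ge hTρ
    rw [norm_div, norm_one, zero_sub, norm_neg, div_le_iff₀ hTpos, mul_comm]
    exact hTρ
  calc ‖L.coeff 1‖ ≤ (L.roots.map fun T ↦ ‖1 / (0 - T)‖).sum := by
        rw [hlog]
        exact (norm_multiset_sum_le _).trans_eq (by rw [Multiset.map_map]; rfl)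
    _ ≤ L.roots.card * ρ := by
        simpa only [Multiset.card_map, nsmul_eq_mul] using
          Multiset.sum_le_card_nsmul (L.roots.map fun T ↦ ‖1 / (0 - T)‖) ρ
            (Multiset.forall_mem_map_iff.2 hroot)
    _ ≤ L.natDegree * ρ := by
        gcongr
        exact card_roots' L

end LogDerivative

section WeilBound

open Polynomial

variable {ι : Type*} [Fintype ι] {i₀ : ι}

lemma natTrailingDegree_prod_X_add_C_pow {R : Type*} [CommRing R] [IsDomain R] {b : ι → R}
    {e : ι → ℕ} (he : e i₀ = 1) (hb₀ : b i₀ = 0) (hb : ∀ j ≠ i₀, b j ≠ 0) :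
    (∏ i, (X + C (b i)) ^ e i).natTrailingDegree = 1 := by
  classical
  have hcoeff : (∏ i ∈ univ.erase i₀, (X + C (b i)) ^ e i).coeff 0 ≠ 0 := by
    simp only [coeff_zero_eq_eval_zero, eval_prod, eval_pow, eval_add, eval_X, eval_C, zero_add]
    exact prod_ne_zero_iff.2 fun j hj ↦ pow_ne_zero _ (hb j (ne_of_mem_erase hj))
  rw [← mul_prod_erase univ _ (mem_univ i₀), he, hb₀, C_0, add_zero, pow_one,
    natTrailingDegree_mul X_ne_zero fun h ↦ hcoeff (by rw [h, coeff_zero]), natTrailingDegree_X,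
    natTrailingDegree_eq_zero.2 (Or.inr hcoeff)]

lemma natDegree_prod_X_add_C_pow {R : Type*} [CommRing R] [Nontrivial R] (b : ι → R)
    (e : ι → ℕ) : (∏ i, (X + C (b i)) ^ e i).natDegree = ∑ i, e i := by
  rw [natDegree_prod_of_monic _ _ fun i _ ↦ (monic_X_add_C (b i)).pow (e i)]
  exact sum_congr rfl fun i _ ↦ by
    rw [(monic_X_add_C (b i)).natDegree_pow, natDegree_X_add_C, mul_one]

variable {F : Type*} [Field F] [Fintype F]

lemma norm_normCharSum_pow_le {χ : MulChar F ℂ} (hχ : χ ≠ 1) {e : ι → ℕ} {a : ι → F}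
    (he : ∀ i, e i ≠ 0) (he₀ : e i₀ = 1) (ha : ∀ j ≠ i₀, a j ≠ a i₀)
    (K : Type*) [Field K] [Fintype K] [Algebra F K] :
    ‖normCharSum (fun i ↦ χ ^ e i) a K‖ ≤ ((Fintype.card F - 1 : ℕ) *
      (6 * ((Fintype.card F - 1 : ℕ) * (∑ i, e i : ℕ) + (∑ i, e i : ℕ) + 2)) + (∑ i, e i : ℕ)) *
        √(Fintype.card K) := by
  set f : K[X] := ∏ i, (X + C (algebraMap F K (a i - a i₀))) ^ e i with hf
  have hsum : normCharSum (fun i ↦ χ ^ e i) a K = ∑ x, χ (Algebra.norm F (f.eval x)) := by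
    refine Fintype.sum_equiv (Equiv.subLeft (algebraMap F K (a i₀))) _ _ fun x ↦ ?_
    rw [hf, eval_prod, map_prod, map_prod]
    refine prod_congr rfl fun i _ ↦ ?_
    have hshift : algebraMap F K (a i) - x =
        algebraMap F K (a i₀) - x + algebraMap F K (a i - a i₀) := by
      rw [map_sub]
      ring
    rw [MulChar.pow_apply' χ (he i), eval_pow, map_pow, map_pow, eval_add, eval_X, eval_C,
      Equiv.subLeft_apply, hshift]
  have hdeg : f.natDegree = ∑ i, e i := natDegree_prod_X_add_C_pow _ e
  rw [hsum, ← hdeg]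
  refine norm_sum_mulChar_norm_eval_le hχ (natTrailingDegree_prod_X_add_C_pow he₀ (by simp) ?_)
  exact fun j hj ↦ (_root_.map_ne_zero _).2 (sub_ne_zero.2 (ha j hj))

lemma norm_sum_prod_mulChar_sub_le_of_forall_norm_normCharSum_le {ψ : ι → MulChar F ℂ} {a : ι → F}
    (hψ : ψ i₀ ≠ 1) (ha : ∀ j ≠ i₀, a j ≠ a i₀) {C : ℝ}
    (hC : ∀ (K : Type) [Field K] [Fintype K] [Algebra F K],
      ‖normCharSum ψ a K‖ ≤ C * √(Fintype.card K)) :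
    ‖∑ t, ∏ i, ψ i (a i - t)‖ ≤ (Fintype.card ι - 1 : ℕ) * √(Fintype.card F) := by
  obtain ⟨p, hp⟩ := CharP.exists F
  have : Fact p.Prime := ⟨CharP.char_is_prime F p⟩
  let K (n : ℕ) := FiniteField.Extension F p (n + 1)
  let (n : ℕ) : Fintype (K n) := Fintype.ofFinite _
  have hcard (n : ℕ) : √(Fintype.card (K n)) = √(Fintype.card F) * √(Fintype.card F) ^ n := by
    rw [← Nat.card_eq_fintype_card, FiniteField.natCard_extension, Nat.card_eq_fintype_card,
      Nat.cast_pow, ← pow_succ', Real.sqrt_eq_iff_eq_sq (by positivity) (by positivity),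
      pow_right_comm, Real.sq_sqrt (by positivity)]
  have hbound (n : ℕ) :
      ‖normCharSum ψ a (K n)‖ ≤ C * √(Fintype.card F) * √(Fintype.card F) ^ n := by
    rw [mul_assoc, ← hcard]
    exact hC (K n)
  have hlog := norm_coeff_one_le_natDegree_mul
    (by rw [coeff_lPolynomial hψ ha, lCoeff_zero])
    (derivative_lPolynomial (fun n ↦ FiniteField.finrank_extension F p (n + 1)) hψ ha) hbound
    (Real.sqrt_nonneg _)
  rw [coeff_lPolynomial hψ ha, lCoeff_one] at hlog
  refine hlog.trans ?_
  gcongr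
  exact natDegree_lPolynomial_le

lemma exists_pow_eq_of_mem_zpowers {G : Type*} [Group G] {x y : G} (hx : IsOfFinOrder x)
    (hy : y ∈ Subgroup.zpowers x) : ∃ n ≠ 0, x ^ n = y := by
  obtain ⟨n, rfl⟩ := hx.mem_powers_iff_mem_zpowers.2 hy
  exact ⟨n + orderOf x, by simp [hx.orderOf_pos.ne'], by simp [pow_add]⟩

lemma norm_sum_prod_mulChar_add_le {ψ : ι → MulChar F ℂ} {a : ι → F} (hψ₀ : ψ i₀ ≠ 1)
    (hψ : ∀ i, ψ i ∈ Subgroup.zpowers (ψ i₀)) (ha : ∀ j ≠ i₀, a j ≠ a i₀) :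
    ‖∑ x, ∏ i, ψ i (x + a i)‖ ≤ (Fintype.card ι - 1 : ℕ) * √(Fintype.card F) := by
  have hexp : ∀ i, ∃ n, n ≠ 0 ∧ (i = i₀ → n = 1) ∧ ψ i₀ ^ n = ψ i := fun i ↦ by
    by_cases hi : i = i₀
    · exact ⟨1, one_ne_zero, fun _ ↦ rfl, by rw [pow_one, hi]⟩
    · obtain ⟨n, hn, hni⟩ := exists_pow_eq_of_mem_zpowers
        (orderOf_pos_iff.1 (MulChar.orderOf_pos (ψ i₀))) (hψ i)
      exact ⟨n, hn, fun h ↦ (hi h).elim, hni⟩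
  choose e he he₀ hpow using hexp
  have hψe : (fun i ↦ ψ i₀ ^ e i) = ψ := funext hpow
  rw [← Equiv.sum_comp (Equiv.neg F)]
  simp only [Equiv.neg_apply, neg_add_eq_sub]
  exact norm_sum_prod_mulChar_sub_le_of_forall_norm_normCharSum_le hψ₀ ha
    fun K _ _ _ ↦ hψe ▸ norm_normCharSum_pow_le hψ₀ he (he₀ i₀ rfl) ha K

end WeilBound

section MomentExpansion

variable {κ : Type*}

/-- The identity on the left half of the indices and complex conjugation on the right half, so that
`‖z‖ ^ (2 * r)` is the product of the conjugates `halfConj i z` over `i : Fin r ⊕ Fin r`. -/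
noncomputable def halfConj (i : κ ⊕ κ) : ℂ →+* ℂ :=
  i.elim (fun _ ↦ RingHom.id ℂ) fun _ ↦ starRingEnd ℂ

lemma norm_halfConj (i : κ ⊕ κ) (z : ℂ) : ‖halfConj i z‖ = ‖z‖ := by
  rcases i with _ | _
  · rfl
  · exact RCLike.norm_conj z

lemma prod_halfConj [Fintype κ] (z : ℂ) :
    ∏ i : κ ⊕ κ, halfConj i z = (‖z‖ ^ (2 * Fintype.card κ) : ℝ) := by
  simp only [halfConj, Fintype.prod_sum_type, Sum.elim_inl, Sum.elim_inr, RingHom.id_apply,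
    prod_const, card_univ]
  rw [← mul_pow, RCLike.mul_conj, ← pow_mul, Complex.ofReal_pow]
  rfl

lemma norm_sum_pow_eq_sum_prod_halfConj [Fintype κ] [DecidableEq κ] {α : Type*} (s : Finset α)
    (w : α → ℂ) :
    (‖∑ a ∈ s, w a‖ ^ (2 * Fintype.card κ) : ℝ) =
      ∑ f ∈ Fintype.piFinset fun _ : κ ⊕ κ ↦ s, ∏ i, halfConj i (w (f i)) := by
  simp only [← prod_halfConj, map_sum, prod_univ_sum]

variable [Fintype κ] {F : Type*} [Field F] [Fintype F]

/-- The complete character sum of the tuple `f` of shifts that occurs when an even moment of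
`∑ a, γ a * χ (x + a)` is expanded. -/
noncomputable def shiftCharSum (χ : MulChar F ℂ) (f : κ ⊕ κ → F) : ℂ :=
  ∑ x, ∏ i, halfConj i (χ (x + f i))

lemma norm_shiftCharSum_le_card (χ : MulChar F ℂ) (f : κ ⊕ κ → F) :
    ‖shiftCharSum χ f‖ ≤ Fintype.card F := by
  refine (norm_sum_le_of_le univ (n := fun _ ↦ 1) fun x _ ↦ ?_).trans_eq (by simp)
  rw [norm_prod]
  refine prod_le_one (fun _ _ ↦ norm_nonneg _) fun i _ ↦ ?_
  rw [norm_halfConj]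
  exact mulChar_norm_apply_le_one χ _

lemma norm_shiftCharSum_le_of_not_everyValueRepeats {χ : MulChar F ℂ} (hχ : χ ≠ 1)
    {f : κ ⊕ κ → F} (hf : ¬EveryValueRepeats f) :
    ‖shiftCharSum χ f‖ ≤ 2 * Fintype.card κ * √(Fintype.card F) := by
  simp only [EveryValueRepeats, not_forall, not_exists, not_and] at hf
  obtain ⟨i₀, hi₀⟩ := hf
  set ψ : κ ⊕ κ → MulChar F ℂ := Sum.elim (fun _ ↦ χ) fun _ ↦ χ⁻¹
  have hψ : ∀ i x, halfConj i (χ x) = ψ i x := by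
    rintro (_ | _) x
    · rfl
    · exact MulChar.star_apply' χ x
  have hψ₀ : ψ i₀ ≠ 1 := by
    rcases i₀ with _ | _
    · exact hχ
    · exact inv_ne_one.2 hχ
  have hmem : ∀ i, ψ i ∈ Subgroup.zpowers (ψ i₀) := by
    rcases i₀ with _ | _ <;> rintro (_ | _) <;> simp [ψ]
  have hcard : Fintype.card (κ ⊕ κ) = 2 * Fintype.card κ := by rw [Fintype.card_sum, two_mul]
  simp only [shiftCharSum, hψ]
  refine (norm_sum_prod_mulChar_add_le hψ₀ hmem hi₀).trans ?_
  rw [hcard]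
  gcongr
  exact_mod_cast Nat.sub_le _ _

lemma sum_norm_sum_pow_le [DecidableEq κ] (χ₁ χ₂ : MulChar F ℂ) (s : Finset F) {γ : F → ℂ}
    (hγ : ∀ a ∈ s, ‖γ a‖ ≤ 1) :
    ∑ x, ∑ y, ‖∑ a ∈ s, γ a * χ₁ (x + a) * χ₂ (y + a)‖ ^ (2 * Fintype.card κ) ≤
      ∑ f ∈ Fintype.piFinset fun _ : κ ⊕ κ ↦ s, ‖shiftCharSum χ₁ f‖ * ‖shiftCharSum χ₂ f‖ := by
  have hexpand :
      ((∑ x, ∑ y, ‖∑ a ∈ s, γ a * χ₁ (x + a) * χ₂ (y + a)‖ ^ (2 * Fintype.card κ) : ℝ) : ℂ) =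
        ∑ f ∈ Fintype.piFinset fun _ : κ ⊕ κ ↦ s,
          (∏ i, halfConj i (γ (f i))) * (shiftCharSum χ₁ f * shiftCharSum χ₂ f) := by
    simp only [Complex.ofReal_sum, norm_sum_pow_eq_sum_prod_halfConj]
    rw [sum_congr rfl fun x _ ↦ sum_comm, sum_comm]
    refine sum_congr rfl fun f _ ↦ ?_
    rw [shiftCharSum, shiftCharSum, sum_mul_sum]
    simp only [mul_sum, map_mul, prod_mul_distrib, mul_assoc]
  refine (le_abs_self _).trans ?_
  rw [← Real.norm_eq_abs, ← Complex.norm_real, hexpand]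
  refine norm_sum_le_of_le _ fun f hf ↦ ?_
  rw [norm_mul, norm_mul, norm_prod]
  refine mul_le_of_le_one_left (by positivity) (prod_le_one (fun _ _ ↦ norm_nonneg _) fun i _ ↦ ?_)
  rw [norm_halfConj]
  exact hγ _ (Fintype.mem_piFinset.1 hf i)

end MomentExpansion

section MomentBound

variable {κ F : Type*} [Fintype κ]

lemma card_repeatingFamilies_sum_self_le {α : Type*} (s : Finset α) :
    #(repeatingFamilies (κ ⊕ κ) s) ≤ (2 * Fintype.card κ * #s) ^ Fintype.card κ := by
  have hsq := card_repeatingFamilies_sq_le (ι := κ ⊕ κ) s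
  rw [Fintype.card_sum, ← two_mul, mul_comm 2 (Fintype.card κ), pow_mul, mul_comm _ 2] at hsq
  exact (Nat.pow_le_pow_iff_left two_ne_zero).1 hsq

variable [Field F] [Fintype F] {χ₁ χ₂ : MulChar F ℂ}

lemma sum_repeatingFamilies_norm_mul_norm_le (χ₁ χ₂ : MulChar F ℂ) (s : Finset F) :
    ∑ f ∈ repeatingFamilies (κ ⊕ κ) s, ‖shiftCharSum χ₁ f‖ * ‖shiftCharSum χ₂ f‖ ≤
      (2 * Fintype.card κ * #s) ^ Fintype.card κ * (Fintype.card F : ℝ) ^ 2 := by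
  calc ∑ f ∈ repeatingFamilies (κ ⊕ κ) s, ‖shiftCharSum χ₁ f‖ * ‖shiftCharSum χ₂ f‖
      ≤ ∑ _f ∈ repeatingFamilies (κ ⊕ κ) s, (Fintype.card F : ℝ) ^ 2 := by
        refine sum_le_sum fun f _ ↦ ?_
        rw [sq]
        gcongr <;> exact norm_shiftCharSum_le_card _ _
    _ = #(repeatingFamilies (κ ⊕ κ) s) * (Fintype.card F : ℝ) ^ 2 := by
        rw [sum_const, nsmul_eq_mul]
    _ ≤ (2 * Fintype.card κ * #s) ^ Fintype.card κ * (Fintype.card F : ℝ) ^ 2 := by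
        gcongr
        exact_mod_cast card_repeatingFamilies_sum_self_le s

lemma norm_shiftCharSum_mul_le_of_not_everyValueRepeats (hχ₁ : χ₁ ≠ 1) (hχ₂ : χ₂ ≠ 1)
    {f : κ ⊕ κ → F} (hf : ¬EveryValueRepeats f) :
    ‖shiftCharSum χ₁ f‖ * ‖shiftCharSum χ₂ f‖ ≤
      (2 * Fintype.card κ : ℝ) ^ 2 * Fintype.card F := by
  calc ‖shiftCharSum χ₁ f‖ * ‖shiftCharSum χ₂ f‖
      ≤ (2 * Fintype.card κ * √(Fintype.card F)) * (2 * Fintype.card κ * √(Fintype.card F)) := by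
        gcongr
        · exact norm_shiftCharSum_le_of_not_everyValueRepeats hχ₁ hf
        · exact norm_shiftCharSum_le_of_not_everyValueRepeats hχ₂ hf
    _ = (2 * Fintype.card κ : ℝ) ^ 2 * Fintype.card F := by
        rw [← sq, mul_pow _ √_, Real.sq_sqrt (Nat.cast_nonneg _)]

lemma sum_piFinset_norm_mul_norm_le [DecidableEq κ] (hχ₁ : χ₁ ≠ 1) (hχ₂ : χ₂ ≠ 1)
    (s : Finset F) :
    ∑ f ∈ Fintype.piFinset fun _ : κ ⊕ κ ↦ s, ‖shiftCharSum χ₁ f‖ * ‖shiftCharSum χ₂ f‖ ≤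
      (2 * Fintype.card κ * #s) ^ Fintype.card κ * (Fintype.card F : ℝ) ^ 2 +
        #s ^ (2 * Fintype.card κ) * ((2 * Fintype.card κ) ^ 2 * Fintype.card F) := by
  classical
  have hfilter : {f ∈ Fintype.piFinset fun _ : κ ⊕ κ ↦ s | EveryValueRepeats f} =
      repeatingFamilies (κ ⊕ κ) s := by
    ext
    simp [mem_repeatingFamilies]
  have hcard : #{f ∈ Fintype.piFinset fun _ : κ ⊕ κ ↦ s | ¬EveryValueRepeats f} ≤
      #s ^ (2 * Fintype.card κ) := by
    refine (card_filter_le _ _).trans_eq ?_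
    rw [Fintype.card_piFinset, prod_const, card_univ, Fintype.card_sum, two_mul]
  rw [← sum_filter_add_sum_filter_not _ EveryValueRepeats, hfilter]
  gcongr
  · exact sum_repeatingFamilies_norm_mul_norm_le χ₁ χ₂ s
  · refine (sum_le_card_nsmul _ _ _ fun f hf ↦
      norm_shiftCharSum_mul_le_of_not_everyValueRepeats hχ₁ hχ₂ (mem_filter.1 hf).2).trans ?_
    rw [nsmul_eq_mul]
    gcongr
    exact_mod_cast hcard

end MomentBound

theorem davenport_erdos_moment_two_general {F : Type*} [Field F] [Fintype F]
    (χ₁ χ₂ : MulChar F ℂ) (hχ₁ : χ₁ ≠ 1) (hχ₂ : χ₂ ≠ 1) (𝒜 : Finset F) (r : ℕ)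
    (γ : F → ℂ) (hγ : ∀ a ∈ 𝒜, ‖γ a‖ ≤ 1) :
    ∑ x, ∑ y, ‖∑ a ∈ 𝒜, γ a * χ₁ (x + a) * χ₂ (y + a)‖ ^ (2 * r) ≤
      (2 * (r : ℝ)) ^ r *
        ((#𝒜 : ℝ) ^ r * (Fintype.card F : ℝ) ^ 2 +
          2 * (r : ℝ) * (#𝒜 : ℝ) ^ (2 * r) * (Fintype.card F : ℝ)) := by
  have hr : 2 * (r : ℝ) ≤ (2 * r) ^ r := by
    rcases r.eq_zero_or_pos with rfl | hr
    · simp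
    · exact le_self_pow₀ (by norm_cast; lia) hr.ne'
  have hmoment := (sum_norm_sum_pow_le (κ := Fin r) χ₁ χ₂ 𝒜 hγ).trans
    (sum_piFinset_norm_mul_norm_le hχ₁ hχ₂ 𝒜)
  rw [Fintype.card_fin] at hmoment
  calc _ ≤ _ := hmoment
    _ = (2 * (r : ℝ)) ^ r * ((#𝒜 : ℝ) ^ r * (Fintype.card F : ℝ) ^ 2) +
          2 * (r : ℝ) * (2 * (r : ℝ) * (#𝒜 : ℝ) ^ (2 * r) * (Fintype.card F : ℝ)) := by ring
    _ ≤ (2 * (r : ℝ)) ^ r * ((#𝒜 : ℝ) ^ r * (Fintype.card F : ℝ) ^ 2) +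
          (2 * (r : ℝ)) ^ r * (2 * (r : ℝ) * (#𝒜 : ℝ) ^ (2 * r) * (Fintype.card F : ℝ)) := by
        gcongr
    _ = _ := (mul_add _ _ _).symm

/-- Lemma 3.2 (two-character Davenport–Erdős type moment bound). -/
theorem davenport_erdos_moment_two (p : ℕ) [hp : Fact p.Prime]
    (χ₁ χ₂ : MulChar (ZMod p) ℂ) (hχ₁ : χ₁ ≠ 1) (hχ₂ : χ₂ ≠ 1)
    (𝒜 : Finset (ZMod p)) (r : ℕ) (hr : 0 < r)
    (γ : ZMod p → ℂ) (hγ : ∀ a ∈ 𝒜, ‖γ a‖ ≤ 1) :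
    ∑ x : ZMod p, ∑ y : ZMod p, ‖∑ a ∈ 𝒜, γ a * χ₁ (x + a) * χ₂ (y + a)‖ ^ (2 * r) ≤
      (2 * (r : ℝ)) ^ r *
        ((𝒜.card : ℝ) ^ r * (p : ℝ) ^ 2 +
          2 * (r : ℝ) * (𝒜.card : ℝ) ^ (2 * r) * (p : ℝ)) := by
  simpa only [ZMod.card] using davenport_erdos_moment_two_general χ₁ χ₂ hχ₁ hχ₂ 𝒜 r γ hγ
end
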